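/- Lower bound / Γ-liminf inequality (discrete form of Proposition 3.10 of the paper, for continuously differentiable limits): assume Assumption H and Assumption A:2T. There exists a set Ω₁ ∈ ℱ with ℙ(Ω₁) = 1 such that for every ω ∈ Ω₁, every open axis-parallel box A ⊂ ℝ^d, every function u : ℝ^d → ℝⁿ that is continuously differentiable on a neighbourhood of the closure of A, and every family (u_ε)_{ε>0} of functions u_ε : εℤ^d → ℝⁿ with lim_{ε↓0} ε^d Σ_{z∈εℤ^d∩A} |u_ε(z) − u(z)| = 0, one has liminf_{ε↓0} E_ε(ω;u_ε,A) ≥ ∫_A W₀(Du(x)) dx, where Du(x) ∈ ℝ^{n×d} denotes the Jacobian matrix of u at x. (Under these assumptions W₀ is finite-valued and continuous, so the integral is well defined.) -/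

import Mathlib

open MeasureTheory Filter Metric Set
open scoped Classical
open scoped ENNReal Topology Pointwise

noncomputable section

namespace StochHom

/-- `ℝ^d` with the Euclidean norm. -/
abbrev Rd (d : ℕ) : Type := EuclideanSpace ℝ (Fin d)

/-- `ℝ^n` with the Euclidean norm. -/
abbrev Rn (n : ℕ) : Type := EuclideanSpace ℝ (Fin n)

/-- The lattice `ℤ^d`. -/
abbrev Zd (d : ℕ) : Type := Fin d → ℤ

variable {d n : ℕ}

/-- The embedding of the lattice `ℤ^d` into `ℝ^d`. -/
def toRd (z : Zd d) : Rd d := (EuclideanSpace.equiv (Fin d) ℝ).symm fun i => (z i : ℝ)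

/-- The standard basis vectors `eᵢ` of `ℤ^d`. -/
def stdb (i : Fin d) : Zd d := fun j => if j = i then 1 else 0

/-- The interaction range `R = max {4√d, max_{b ∈ ℰ₀} |b|}`. -/
def irange (d : ℕ) (E0 : Finset (Zd d)) : ℝ :=
  max (4 * Real.sqrt d) (sSup ((fun b : Zd d => ‖toRd b‖) '' (E0 : Set (Zd d))))

variable {Ω : Type*} [MeasurableSpace Ω]

/-- The energy `E₁(ω; u, ℤ^d ∩ A)`. -/
def energy1 (τ : Zd d → Ω → Ω) (E0 : Finset (Zd d)) (V : Zd d → Ω → Rn n → ℝ)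
    (ω : Ω) (u : Zd d → Rn n) (A : Set (Rd d)) : ℝ :=
  ∑' z : Zd d, if toRd z ∈ A then
      ∑ b ∈ E0, V b (τ z ω) ((‖toRd b‖)⁻¹ • (u (z + b) - u z)) else 0

/-- The scaled energy `E_ε(ω; u, A)`, where a function `u : εℤ^d → ℝ^n` is identified with a
function on `ℤ^d` via `z ↦ u(εz)`, so that `∂_b^ε u (z) = (u (z+b) - u z)/(ε |b|)`. -/
def energyE (τ : Zd d → Ω → Ω) (E0 : Finset (Zd d)) (V : Zd d → Ω → Rn n → ℝ)
    (ε : ℝ) (ω : Ω) (u : Zd d → Rn n) (A : Set (Rd d)) : ℝ :=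
  ε ^ d * ∑' z : Zd d, if ε • toRd z ∈ A then
      ∑ b ∈ E0, V b (τ z ω) ((ε * ‖toRd b‖)⁻¹ • (u (z + b) - u z)) else 0

/-- The localized minimal energy `m_F(ω; A)`. -/
def mF (τ : Zd d → Ω → Ω) (E0 : Finset (Zd d)) (V : Zd d → Ω → Rn n → ℝ)
    (ω : Ω) (F : Rd d →L[ℝ] Rn n) (A : Set (Rd d)) : ℝ :=
  ⨅ φ : {φ : Zd d → Rn n // ∀ z : Zd d, infDist (toRd z) Aᶜ ≤ irange d E0 → φ z = 0},
    energy1 τ E0 V ω (fun z => F (toRd z) + φ.1 z) A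

/-- The half-open cube `[0,k)^d ⊂ ℝ^d`. -/
def cube (d k : ℕ) : Set (Rd d) := {x | ∀ i, 0 ≤ x i ∧ x i < (k : ℝ)}

/-- The homogenized energy density `W₀(F) = inf_{k ≥ 1} k⁻ᵈ E[m_F(·, [0,k)^d)]`. -/
def W0 (P : Measure Ω) (τ : Zd d → Ω → Ω) (E0 : Finset (Zd d))
    (V : Zd d → Ω → Rn n → ℝ) (F : Rd d →L[ℝ] Rn n) : ℝ :=
  ⨅ k : {k : ℕ // 0 < k}, (((k : ℕ) : ℝ) ^ d)⁻¹ * ∫ ω, mF τ E0 V ω F (cube d k) ∂P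

/-- Half-open axis-parallel box `Π_i [aᵢ, bᵢ)`. -/
def halfBox (a b : Fin d → ℝ) : Set (Rd d) := {x | ∀ i, a i ≤ x i ∧ x i < b i}

/-- Open axis-parallel box `Π_i (aᵢ, bᵢ)`. -/
def openBox (a b : Fin d → ℝ) : Set (Rd d) := {x | ∀ i, a i < x i ∧ x i < b i}

/-- Closed axis-parallel box `Π_i [aᵢ, bᵢ]`. -/
def closedBox (a b : Fin d → ℝ) : Set (Rd d) := {x | ∀ i, a i ≤ x i ∧ x i ≤ b i}

/-- Half-open axis-parallel box with integer corners. -/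
def intBox (a b : Zd d) : Set (Rd d) := {x | ∀ i, (a i : ℝ) ≤ x i ∧ x i < (b i : ℝ)}

/-- The periodic cell minimization `W^{(k)}(ω; F)`. -/
def Wper (τ : Zd d → Ω → Ω) (E0 : Finset (Zd d)) (V : Zd d → Ω → Rn n → ℝ)
    (k : ℕ) (ω : Ω) (F : Rd d →L[ℝ] Rn n) : ℝ :=
  ⨅ φ : {φ : Zd d → Rn n // ∀ z z' : Zd d, φ (z + k • z') = φ z},
    ((k : ℝ) ^ d)⁻¹ * energy1 τ E0 V ω (fun z => F (toRd z) + φ.1 z) (cube d k)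

/-- The standing hypotheses that are really used. -/
structure Hyp (P : Measure Ω) (τ : Zd d → Ω → Ω) (E0 : Finset (Zd d)) (p c₁ : ℝ)
    (V : Zd d → Ω → Rn n → ℝ) (lam : Zd d → Ω → ℝ) : Prop where
  prob : IsProbabilityMeasure P
  dpos : 0 < d
  τ0 : τ 0 = id
  τadd : ∀ x y : Zd d, τ (x + y) = τ x ∘ τ y
  mp : ∀ z : Zd d, MeasurePreserving (τ z) P P
  erg : ∀ B : Set Ω, MeasurableSet B → (∀ z : Zd d, τ z ⁻¹' B = B) → P B = 0 ∨ P B = 1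
  E00 : (0 : Zd d) ∉ E0
  hp : 1 < p
  hc : 0 < c₁
  Vmeas : ∀ b ∈ E0, Measurable fun q : Ω × Rn n => V b q.1 q.2
  Vcont : ∀ b ∈ E0, ∀ ω : Ω, Continuous (V b ω)
  Vnn : ∀ b ∈ E0, ∀ (ω : Ω) (r : Rn n), 0 ≤ V b ω r
  lnn : ∀ b ∈ E0, ∀ ω : Ω, 0 ≤ lam b ω
  growth : ∀ b ∈ E0, ∀ (ω : Ω) (r : Rn n),
      lam b ω * (‖r‖ ^ p / c₁ - c₁) ≤ V b ω r ∧ V b ω r ≤ c₁ * (1 + lam b ω * (‖r‖ ^ p + 1))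
  lmeas : ∀ b ∈ E0, Measurable (lam b)
  lint : ∀ b ∈ E0, Integrable (lam b) P

@[simp] lemma toRd_apply (z : Zd d) (i : Fin d) : toRd z i = (z i : ℝ) := rfl

lemma toRd_add (x y : Zd d) : toRd (x + y) = toRd x + toRd y := by
  ext i; simp

lemma toRd_sub (x y : Zd d) : toRd (x - y) = toRd x - toRd y := by
  ext i; simp

lemma toRd_zero : toRd (0 : Zd d) = 0 := by
  ext i; simp

lemma abs_coord_le (x : Rd d) (i : Fin d) : |x i| ≤ ‖x‖ := by
  simpa using PiLp.norm_apply_le x i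

lemma toRd_norm_pos {b : Zd d} (hb : b ≠ 0) : 0 < ‖toRd b‖ := by
  rw [norm_pos_iff]
  intro h
  apply hb
  funext i
  have := congrArg (fun x : Rd d => x i) h
  simpa using this

lemma irange_nonneg (E0 : Finset (Zd d)) : 0 ≤ irange d E0 :=
  le_max_of_le_left (by positivity)

lemma norm_le_irange {E0 : Finset (Zd d)} {b : Zd d} (hb : b ∈ E0) :
    ‖toRd b‖ ≤ irange d E0 := by
  apply le_max_of_le_right
  apply le_csSup
  · exact (E0.finite_toSet.image _).bddAbove
  · exact ⟨b, hb, rfl⟩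

lemma lat_finite {A : Set (Rd d)} (hA : Bornology.IsBounded A) : {z : Zd d | toRd z ∈ A}.Finite := by
  obtain ⟨r, hr⟩ := hA.subset_closedBall 0
  obtain ⟨N, hN⟩ := exists_nat_ge r
  apply (Set.finite_Icc (fun _ : Fin d => (-(N : ℤ))) (fun _ => (N : ℤ))).subset
  intro z hz
  have h1 : ‖toRd z‖ ≤ r := by simpa using hr hz
  have h2 : ∀ i, |z i| ≤ (N : ℤ) := by
    intro i
    have h3 := abs_coord_le (toRd z) i
    rw [toRd_apply] at h3
    have : |(z i : ℝ)| ≤ (N : ℝ) := by linarith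
    exact_mod_cast this
  exact ⟨fun i => (abs_le.1 (h2 i)).1, fun i => (abs_le.1 (h2 i)).2⟩

/-- Lattice points of a bounded set. -/
def lat (A : Set (Rd d)) : Finset (Zd d) :=
  if h : {z : Zd d | toRd z ∈ A}.Finite then h.toFinset else ∅

lemma mem_lat {A : Set (Rd d)} (hA : Bornology.IsBounded A) {z : Zd d} :
    z ∈ lat A ↔ toRd z ∈ A := by
  simp [lat, lat_finite hA]

/-- Site energy. -/
def site (τ : Zd d → Ω → Ω) (E0 : Finset (Zd d)) (V : Zd d → Ω → Rn n → ℝ)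
    (ω : Ω) (u : Zd d → Rn n) (z : Zd d) : ℝ :=
  ∑ b ∈ E0, V b (τ z ω) ((‖toRd b‖)⁻¹ • (u (z + b) - u z))

lemma energy1_eq (τ : Zd d → Ω → Ω) (E0 : Finset (Zd d)) (V : Zd d → Ω → Rn n → ℝ)
    (ω : Ω) (u : Zd d → Rn n) {A : Set (Rd d)} (hA : Bornology.IsBounded A) :
    energy1 τ E0 V ω u A = ∑ z ∈ lat A, site τ E0 V ω u z := by
  rw [energy1, tsum_eq_sum (s := lat A)]
  · apply Finset.sum_congr rfl
    intro z hz
    rw [if_pos ((mem_lat hA).1 hz), site]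
  · intro z hz
    rw [if_neg]
    exact fun h => hz ((mem_lat hA).2 h)

section
variable {P : Measure Ω} {τ : Zd d → Ω → Ω} {E0 : Finset (Zd d)} {p c₁ : ℝ}
    {V : Zd d → Ω → Rn n → ℝ} {lam : Zd d → Ω → ℝ}

lemma site_nonneg (H : Hyp P τ E0 p c₁ V lam) (ω : Ω) (u : Zd d → Rn n) (z : Zd d) :
    0 ≤ site τ E0 V ω u z :=
  Finset.sum_nonneg fun b hb => H.Vnn b hb _ _

lemma energy1_nonneg (H : Hyp P τ E0 p c₁ V lam) (ω : Ω) (u : Zd d → Rn n) {A : Set (Rd d)}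
    (hA : Bornology.IsBounded A) : 0 ≤ energy1 τ E0 V ω u A := by
  rw [energy1_eq _ _ _ _ _ hA]
  exact Finset.sum_nonneg fun z _ => site_nonneg H _ _ _

lemma mF_bdd (H : Hyp P τ E0 p c₁ V lam) (ω : Ω) (F : Rd d →L[ℝ] Rn n) {A : Set (Rd d)}
    (hA : Bornology.IsBounded A) :
    BddBelow (Set.range fun φ : {φ : Zd d → Rn n //
      ∀ z : Zd d, infDist (toRd z) Aᶜ ≤ irange d E0 → φ z = 0} =>
        energy1 τ E0 V ω (fun z => F (toRd z) + φ.1 z) A) := by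
  refine ⟨0, ?_⟩
  rintro _ ⟨φ, rfl⟩
  exact energy1_nonneg H _ _ hA

lemma mF_le (H : Hyp P τ E0 p c₁ V lam) (ω : Ω) (F : Rd d →L[ℝ] Rn n) {A : Set (Rd d)}
    (hA : Bornology.IsBounded A) (φ : Zd d → Rn n)
    (hφ : ∀ z : Zd d, infDist (toRd z) Aᶜ ≤ irange d E0 → φ z = 0) :
    mF τ E0 V ω F A ≤ energy1 τ E0 V ω (fun z => F (toRd z) + φ z) A :=
  ciInf_le (mF_bdd H ω F hA) ⟨φ, hφ⟩

instance mF_nonempty (A : Set (Rd d)) (E0 : Finset (Zd d)) : Nonempty {φ : Zd d → Rn n //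
      ∀ z : Zd d, infDist (toRd z) Aᶜ ≤ irange d E0 → φ z = 0} :=
  ⟨⟨fun _ => 0, fun _ _ => rfl⟩⟩

lemma mF_nonneg (H : Hyp P τ E0 p c₁ V lam) (ω : Ω) (F : Rd d →L[ℝ] Rn n) {A : Set (Rd d)}
    (hA : Bornology.IsBounded A) : 0 ≤ mF τ E0 V ω F A :=
  le_ciInf fun _ => energy1_nonneg H _ _ hA

lemma mF_exists (ω : Ω) (F : Rd d →L[ℝ] Rn n) {A : Set (Rd d)} {δ : ℝ} (hδ : 0 < δ) :
    ∃ φ : Zd d → Rn n, (∀ z : Zd d, infDist (toRd z) Aᶜ ≤ irange d E0 → φ z = 0) ∧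
      energy1 τ E0 V ω (fun z => F (toRd z) + φ z) A < mF τ E0 V ω F A + δ := by
  obtain ⟨φ, h⟩ := exists_lt_of_ciInf_lt (show mF τ E0 V ω F A < mF τ E0 V ω F A + δ by linarith)
  exact ⟨φ.1, φ.2, h⟩

/-- Affine site energy. -/
def aff (E0 : Finset (Zd d)) (V : Zd d → Ω → Rn n → ℝ) (F : Rd d →L[ℝ] Rn n) (ω : Ω) : ℝ :=
  ∑ b ∈ E0, V b ω ((‖toRd b‖)⁻¹ • F (toRd b))

lemma aff_nonneg (H : Hyp P τ E0 p c₁ V lam) (F : Rd d →L[ℝ] Rn n) (ω : Ω) :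
    0 ≤ aff E0 V F ω := Finset.sum_nonneg fun b hb => H.Vnn b hb _ _

lemma mF_subadd (H : Hyp P τ E0 p c₁ V lam) (ω : Ω) (F : Rd d →L[ℝ] Rn n) {Q : Set (Rd d)}
    (hQ : Bornology.IsBounded Q) {ι : Type*} (s : Finset ι) (C : ι → Set (Rd d))
    (hC : ∀ i ∈ s, C i ⊆ Q)
    (hdisj : ∀ i ∈ s, ∀ j ∈ s, i ≠ j → ∀ z : Zd d, toRd z ∈ C i → toRd z ∉ C j) :
    mF τ E0 V ω F Q ≤ ∑ i ∈ s, mF τ E0 V ω F (C i)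
      + ∑ z ∈ (lat Q).filter (fun z => ∀ i ∈ s, toRd z ∉ C i), aff E0 V F (τ z ω) := by
  have hne : (Qᶜ).Nonempty := by
    by_contra h
    rw [Set.not_nonempty_iff_eq_empty, Set.compl_empty_iff] at h
    rw [h] at hQ
    haveI : Nonempty (Fin d) := ⟨⟨0, H.dpos⟩⟩
    exact NormedSpace.unbounded_univ ℝ (Rd d) hQ
  have hR := irange_nonneg E0
  apply le_of_forall_pos_le_add
  intro δ hδ
  have hδ' : 0 < δ / (s.card + 1) := by positivity
  choose φ hφ0 hφ using fun i => mF_exists (τ := τ) (E0 := E0) (V := V) ω F (A := C i) hδ'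
  have hbC : ∀ i ∈ s, Bornology.IsBounded (C i) := fun i hi => hQ.subset (hC i hi)
  have hout : ∀ i z, toRd z ∉ C i → φ i z = 0 := by
    intro i z hz
    apply hφ0
    rw [infDist_zero_of_mem (by exact hz)]; exact hR
  have hout2 : ∀ i z, ∀ b ∈ E0, toRd z ∉ C i → φ i (z + b) = 0 := by
    intro i z b hb hz
    apply hφ0
    refine (infDist_le_dist_of_mem (by exact hz)).trans ?_
    rw [toRd_add, dist_eq_norm]
    simpa using norm_le_irange hb
  set Φ : Zd d → Rn n := fun z => ∑ i ∈ s, φ i z with hΦ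
  have h1 := mF_le H ω F hQ Φ (by
    intro z hz
    apply Finset.sum_eq_zero
    intro i hi
    apply hφ0
    refine (infDist_le_infDist_of_subset (Set.compl_subset_compl.2 (hC i hi)) hne).trans hz)
  refine h1.trans ?_
  rw [energy1_eq _ _ _ _ _ hQ, ← Finset.sum_filter_add_sum_filter_not (lat Q)
    (fun z => ∀ i ∈ s, toRd z ∉ C i), add_comm]
  have e1 : ∑ z ∈ (lat Q).filter (fun z => ∀ i ∈ s, toRd z ∉ C i),
      site τ E0 V ω (fun z => F (toRd z) + Φ z) z
      = ∑ z ∈ (lat Q).filter (fun z => ∀ i ∈ s, toRd z ∉ C i), aff E0 V F (τ z ω) := by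
    apply Finset.sum_congr rfl
    intro z hz
    rw [Finset.mem_filter] at hz
    apply Finset.sum_congr rfl
    intro b hb
    have e2 : Φ z = 0 := Finset.sum_eq_zero fun i hi => hout i z (hz.2 i hi)
    have e3 : Φ (z + b) = 0 := Finset.sum_eq_zero fun i hi => hout2 i z b hb (hz.2 i hi)
    simp only [e2, e3, toRd_add, map_add]
    congr 2
    abel
  have e4 : (lat Q).filter (fun z => ¬ ∀ i ∈ s, toRd z ∉ C i) = s.biUnion fun i => lat (C i) := by
    ext z
    simp only [Finset.mem_filter, Finset.mem_biUnion, mem_lat hQ]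
    constructor
    · rintro ⟨h, h'⟩
      push Not at h'
      obtain ⟨i, hi, hz⟩ := h'
      exact ⟨i, hi, (mem_lat (hbC i hi)).2 hz⟩
    · rintro ⟨i, hi, hz⟩
      rw [mem_lat (hbC i hi)] at hz
      exact ⟨hC i hi hz, fun h => h i hi hz⟩
  have e5 : ∑ z ∈ (lat Q).filter (fun z => ¬ ∀ i ∈ s, toRd z ∉ C i),
      site τ E0 V ω (fun z => F (toRd z) + Φ z) z ≤ ∑ i ∈ s, mF τ E0 V ω F (C i) + δ := by
    rw [e4, Finset.sum_biUnion]
    · have : ∀ i ∈ s, ∑ z ∈ lat (C i), site τ E0 V ω (fun z => F (toRd z) + Φ z) z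
          ≤ mF τ E0 V ω F (C i) + δ / (s.card + 1) := by
        intro i hi
        refine le_trans (le_of_eq ?_) (hφ i).le
        rw [energy1_eq _ _ _ _ _ (hbC i hi)]
        apply Finset.sum_congr rfl
        intro z hz
        rw [mem_lat (hbC i hi)] at hz
        apply Finset.sum_congr rfl
        intro b hb
        have e2 : Φ z = φ i z := by
          apply Finset.sum_eq_single_of_mem i hi
          intro j hj hji
          exact hout j z (hdisj i hi j hj hji.symm z hz)
        have e3 : Φ (z + b) = φ i (z + b) := by
          apply Finset.sum_eq_single_of_mem i hi
          intro j hj hji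
          exact hout2 j z b hb (hdisj i hi j hj hji.symm z hz)
        simp only [e2, e3]
      refine (Finset.sum_le_sum this).trans ?_
      rw [Finset.sum_add_distrib, Finset.sum_const, nsmul_eq_mul]
      have : (s.card : ℝ) * (δ / (s.card + 1)) ≤ δ := by
        rw [← mul_div_assoc, div_le_iff₀ (by positivity)]
        nlinarith
      linarith
    · intro i hi j hj hij
      rw [Function.onFun, Finset.disjoint_left]
      intro z hz hz'
      rw [mem_lat (hbC i hi)] at hz
      rw [mem_lat (hbC j hj)] at hz'
      exact hdisj i hi j hj hij z hz hz'
  rw [e1]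
  linarith

lemma mF_shift (H : Hyp P τ E0 p c₁ V lam) (ω : Ω) (F : Rd d →L[ℝ] Rn n) {A A' : Set (Rd d)}
    (w : Zd d) (hA : ∀ x, x ∈ A' ↔ x - toRd w ∈ A) :
    mF τ E0 V ω F A' = mF τ E0 V (τ w ω) F A := by
  have hA' : A'ᶜ = (fun x => x + toRd w) '' Aᶜ := by
    ext x
    simp only [Set.mem_compl_iff, hA, Set.mem_image]
    constructor
    · intro h; exact ⟨_, h, by abel⟩
    · rintro ⟨y, hy, rfl⟩; simpa using hy
  have hinf : ∀ z : Zd d, infDist (toRd (z + w)) A'ᶜ = infDist (toRd z) Aᶜ := by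
    intro z
    rw [hA', toRd_add]
    exact infDist_image (Φ := fun x : Rd d => x + toRd w) (isometry_add_right _)
  let e : {φ : Zd d → Rn n // ∀ z : Zd d, infDist (toRd z) A'ᶜ ≤ irange d E0 → φ z = 0} ≃
      {φ : Zd d → Rn n // ∀ z : Zd d, infDist (toRd z) Aᶜ ≤ irange d E0 → φ z = 0} :=
    { toFun := fun φ => ⟨fun z => φ.1 (z + w), fun z hz => φ.2 _ (by rw [hinf]; exact hz)⟩
      invFun := fun φ => ⟨fun z => φ.1 (z - w), fun z hz => φ.2 _ (by
        rw [← hinf]; simpa using hz)⟩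
      left_inv := fun φ => by ext z; simp
      right_inv := fun φ => by ext z; simp }
  rw [mF, mF]
  refine e.iInf_congr ?_
  intro φ
  symm
  rw [energy1, energy1, ← (Equiv.addRight w).tsum_eq]
  apply tsum_congr
  intro z
  have h1 : toRd (Equiv.addRight w z) ∈ A' ↔ toRd z ∈ A := by
    rw [hA, Equiv.coe_addRight, toRd_add]; simp
  by_cases hz : toRd z ∈ A
  · rw [if_pos hz, if_pos (h1.2 hz)]
    apply Finset.sum_congr rfl
    intro b hb
    simp only [e, Equiv.coe_addRight, Equiv.coe_fn_mk, H.τadd, Function.comp]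
    congr 1
    rw [show z + w + b = z + b + w by abel, toRd_add z b, toRd_add z w, toRd_add (z+b) w, toRd_add z b]
    simp only [map_add]
    congr 1
    abel
  · rw [if_neg hz, if_neg (fun h => hz (h1.1 h))]

end

section
variable {P : Measure Ω} {τ : Zd d → Ω → Ω} {E0 : Finset (Zd d)} {p c₁ : ℝ}
    {V : Zd d → Ω → Rn n → ℝ} {lam : Zd d → Ω → ℝ}

lemma V_measurable (H : Hyp P τ E0 p c₁ V lam) {b : Zd d} (hb : b ∈ E0) (r : Rn n) :
    Measurable fun ω => V b ω r :=
  (H.Vmeas b hb).comp (measurable_id.prodMk measurable_const)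

lemma aff_measurable (H : Hyp P τ E0 p c₁ V lam) (F : Rd d →L[ℝ] Rn n) :
    Measurable (aff E0 V F) :=
  Finset.measurable_fun_sum _ fun b hb => V_measurable H hb _

lemma site_measurable (H : Hyp P τ E0 p c₁ V lam) (u : Zd d → Rn n) (z : Zd d) :
    Measurable fun ω => site τ E0 V ω u z :=
  Finset.measurable_fun_sum _ fun _ hb => (V_measurable H hb _).comp (H.mp z).measurable

lemma mF_measurable (H : Hyp P τ E0 p c₁ V lam) (F : Rd d →L[ℝ] Rn n) {A : Set (Rd d)}
    (hA : Bornology.IsBounded A) : Measurable fun ω => mF τ E0 V ω F A := by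
  let S := lat A
  let xt : (S → Rn n) → Zd d → Rn n := fun ψ z =>
    if h : z ∈ S ∧ ¬ infDist (toRd z) Aᶜ ≤ irange d E0 then ψ ⟨z, h.1⟩ else 0
  let e : (S → Rn n) → {φ : Zd d → Rn n //
      ∀ z : Zd d, infDist (toRd z) Aᶜ ≤ irange d E0 → φ z = 0} := fun ψ =>
    ⟨xt ψ, fun z hz => dif_neg (fun h => h.2 hz)⟩
  have he : Function.Surjective e := by
    intro φ
    refine ⟨fun z => φ.1 z, ?_⟩
    ext1
    funext z
    change xt (fun z => φ.1 z) z = φ.1 z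
    by_cases h : z ∈ S ∧ ¬ infDist (toRd z) Aᶜ ≤ irange d E0
    · simp [xt, h]
    · simp only [xt, dif_neg h]
      symm
      apply φ.2
      by_contra h'
      apply h
      refine ⟨(mem_lat hA).2 ?_, h'⟩
      by_contra hz
      rw [infDist_zero_of_mem (show toRd z ∈ Aᶜ from hz)] at h'
      exact h' (irange_nonneg E0)
  let G : Ω → (S → Rn n) → ℝ := fun ω ψ => energy1 τ E0 V ω (fun z => F (toRd z) + xt ψ z) A
  have hG : ∀ ω, mF τ E0 V ω F A = ⨅ ψ, G ω ψ := fun ω => (he.iInf_comp _).symm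
  have hext : ∀ z, Continuous fun ψ => xt ψ z := by
    intro z
    by_cases h : z ∈ S ∧ ¬ infDist (toRd z) Aᶜ ≤ irange d E0
    · simp only [xt, dif_pos h]; fun_prop
    · simp only [xt, dif_neg h]; fun_prop
  have hcont : ∀ ω, Continuous (G ω) := by
    intro ω
    simp only [G, energy1_eq _ _ _ _ _ hA]
    apply continuous_finset_sum
    intro z _
    apply continuous_finset_sum
    intro b hb
    refine (H.Vcont b hb _).comp ?_
    have h1 := hext (z + b)
    have h2 := hext z
    fun_prop
  have hbdd : ∀ ω, BddBelow (Set.range (G ω)) := by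
    intro ω
    refine ⟨0, ?_⟩
    rintro _ ⟨ψ, rfl⟩
    exact energy1_nonneg H _ _ hA
  have h2 : ∀ ω, mF τ E0 V ω F A = ⨅ k : ℕ, G ω (TopologicalSpace.denseSeq (S → Rn n) k) := by
    intro ω
    rw [hG]
    have h3 := (TopologicalSpace.denseRange_denseSeq (S → Rn n)).ciInf' (hcont ω) 
    rw [← h3]
    exact (Set.rangeFactorization_surjective.iInf_comp (f := Set.rangeFactorization _) _).symm
  simp only [h2]
  refine Measurable.iInf fun k => ?_
  simp only [G, energy1_eq _ _ _ _ _ hA]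
  exact Finset.measurable_fun_sum _ fun z _ => site_measurable H _ z

lemma norm_aff_le (F : Rd d →L[ℝ] Rn n) (b : Zd d) : ‖(‖toRd b‖)⁻¹ • F (toRd b)‖ ≤ ‖F‖ := by
  rw [norm_smul, norm_inv, norm_norm]
  rcases eq_or_lt_of_le (norm_nonneg (toRd b)) with h | h
  · rw [← h]; simp
  · rw [inv_mul_le_iff₀ h, mul_comm]
    exact F.le_opNorm _

/-- Sum of the weights. -/
def Lam (E0 : Finset (Zd d)) (lam : Zd d → Ω → ℝ) (ω : Ω) : ℝ := ∑ b ∈ E0, lam b ω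

lemma Lam_nonneg (H : Hyp P τ E0 p c₁ V lam) (ω : Ω) : 0 ≤ Lam E0 lam ω :=
  Finset.sum_nonneg fun b hb => H.lnn b hb ω

lemma lam_le_Lam (H : Hyp P τ E0 p c₁ V lam) {b : Zd d} (hb : b ∈ E0) (ω : Ω) :
    lam b ω ≤ Lam E0 lam ω :=
  Finset.single_le_sum (f := fun b => lam b ω) (fun b hb => H.lnn b hb ω) hb

lemma Lam_integrable (H : Hyp P τ E0 p c₁ V lam) : Integrable (Lam E0 lam) P :=
  integrable_finset_sum _ fun b hb => H.lint b hb

lemma Lam_measurable (H : Hyp P τ E0 p c₁ V lam) : Measurable (Lam E0 lam) :=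
  Finset.measurable_fun_sum _ fun b hb => H.lmeas b hb

lemma aff_le (H : Hyp P τ E0 p c₁ V lam) {F : Rd d →L[ℝ] Rn n} {K : ℝ} (hF : ‖F‖ ≤ K) (ω : Ω) :
    aff E0 V F ω ≤ (c₁ * (E0.card + 1) * (K ^ p + 1)) * (1 + Lam E0 lam ω) := by
  have hK : 0 ≤ K := (norm_nonneg _).trans hF
  have hL := Lam_nonneg H ω
  have hc := H.hc
  have hKp : 0 ≤ K ^ p := by positivity
  have : ∀ b ∈ E0, V b ω ((‖toRd b‖)⁻¹ • F (toRd b)) ≤ c₁ * (K ^ p + 1) * (1 + Lam E0 lam ω) := by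
    intro b hb
    refine (H.growth b hb ω _).2.trans ?_
    have h1 : ‖(‖toRd b‖)⁻¹ • F (toRd b)‖ ^ p ≤ K ^ p :=
      Real.rpow_le_rpow (norm_nonneg _) ((norm_aff_le F b).trans hF) (by linarith [H.hp])
    have h2 := lam_le_Lam H hb ω
    have h3 := H.lnn b hb ω
    rw [mul_assoc]
    apply mul_le_mul_of_nonneg_left _ hc.le
    have h4 : lam b ω * (‖(‖toRd b‖)⁻¹ • F (toRd b)‖ ^ p + 1) ≤ Lam E0 lam ω * (K ^ p + 1) := by
      gcongr
    nlinarith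
  refine (Finset.sum_le_sum this).trans ?_
  rw [Finset.sum_const, nsmul_eq_mul]
  have : 0 ≤ c₁ * (K ^ p + 1) * (1 + Lam E0 lam ω) := by positivity
  nlinarith

lemma aff_integrable (H : Hyp P τ E0 p c₁ V lam) (F : Rd d →L[ℝ] Rn n) :
    Integrable (aff E0 V F) P := by
  have := H.prob
  refine Integrable.mono' (((integrable_const 1).add (Lam_integrable H)).const_mul
    (c₁ * (E0.card + 1) * (‖F‖ ^ p + 1))) (aff_measurable H F).aestronglyMeasurable ?_
  refine Filter.Eventually.of_forall fun ω => ?_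
  rw [Real.norm_of_nonneg (aff_nonneg H F ω)]
  exact aff_le H le_rfl ω

lemma mF_le_aff (H : Hyp P τ E0 p c₁ V lam) (ω : Ω) (F : Rd d →L[ℝ] Rn n) {Q : Set (Rd d)}
    (hQ : Bornology.IsBounded Q) :
    mF τ E0 V ω F Q ≤ ∑ z ∈ lat Q, aff E0 V F (τ z ω) := by
  have := mF_subadd H ω F hQ (ι := ℕ) ∅ (fun _ => ∅) (by simp) (by simp)
  simpa using this

lemma comp_integrable (H : Hyp P τ E0 p c₁ V lam) {f : Ω → ℝ} (hf : Integrable f P) (z : Zd d) :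
    Integrable (fun ω => f (τ z ω)) P :=
  (H.mp z).integrable_comp_of_integrable hf

lemma comp_integral (H : Hyp P τ E0 p c₁ V lam) {f : Ω → ℝ} (hf : AEStronglyMeasurable f P) (z : Zd d) :
    ∫ ω, f (τ z ω) ∂P = ∫ ω, f ω ∂P := by
  have h := (H.mp z).map_eq
  conv_rhs => rw [← h]
  rw [integral_map (H.mp z).measurable.aemeasurable (by rw [h]; exact hf)]

lemma mF_integrable (H : Hyp P τ E0 p c₁ V lam) (F : Rd d →L[ℝ] Rn n) {Q : Set (Rd d)}
    (hQ : Bornology.IsBounded Q) : Integrable (fun ω => mF τ E0 V ω F Q) P := by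
  refine Integrable.mono' (integrable_finset_sum (lat Q) fun z _ =>
    comp_integrable H (aff_integrable H F) z) (mF_measurable H F hQ).aestronglyMeasurable ?_
  refine Filter.Eventually.of_forall fun ω => ?_
  rw [Real.norm_of_nonneg (mF_nonneg H ω F hQ)]
  exact mF_le_aff H ω F hQ

lemma cube_bdd (k : ℕ) : Bornology.IsBounded (cube d k) := by
  rw [isBounded_iff_forall_norm_le]
  refine ⟨Real.sqrt (∑ i : Fin d, (k : ℝ) ^ 2), fun x hx => ?_⟩
  rw [EuclideanSpace.norm_eq]
  gcongr with i
  rw [Real.norm_eq_abs, abs_of_nonneg (hx i).1]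
  exact (hx i).2.le

lemma W0_bdd (H : Hyp P τ E0 p c₁ V lam) (F : Rd d →L[ℝ] Rn n) :
    BddBelow (Set.range fun k : {k : ℕ // 0 < k} =>
      (((k : ℕ) : ℝ) ^ d)⁻¹ * ∫ ω, mF τ E0 V ω F (cube d k) ∂P) := by
  refine ⟨0, ?_⟩
  rintro _ ⟨k, rfl⟩
  have : 0 ≤ ∫ ω, mF τ E0 V ω F (cube d k) ∂P :=
    integral_nonneg fun ω => mF_nonneg H ω F (cube_bdd _)
  positivity

lemma W0_nonneg (H : Hyp P τ E0 p c₁ V lam) (F : Rd d →L[ℝ] Rn n) : 0 ≤ W0 P τ E0 V F := by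
  haveI : Nonempty {k : ℕ // 0 < k} := ⟨⟨1, one_pos⟩⟩
  apply le_ciInf
  intro k
  have : 0 ≤ ∫ ω, mF τ E0 V ω F (cube d k) ∂P :=
    integral_nonneg fun ω => mF_nonneg H ω F (cube_bdd _)
  positivity

lemma W0_le (H : Hyp P τ E0 p c₁ V lam) (F : Rd d →L[ℝ] Rn n) {k : ℕ} (hk : 0 < k) :
    W0 P τ E0 V F * (k : ℝ) ^ d ≤ ∫ ω, mF τ E0 V ω F (cube d k) ∂P := by
  have h := ciInf_le (W0_bdd H F) ⟨k, hk⟩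
  have hk' : (0 : ℝ) < (k : ℝ) ^ d := by positivity
  rw [← le_div_iff₀ hk', div_eq_inv_mul]
  exact h

lemma W0_le_of_norm (H : Hyp P τ E0 p c₁ V lam) {F : Rd d →L[ℝ] Rn n} {K : ℝ} (hF : ‖F‖ ≤ K) :
    W0 P τ E0 V F ≤ (lat (cube d 1)).card * ((c₁ * (E0.card + 1) * (K ^ p + 1)) *
      (1 + ∫ ω, Lam E0 lam ω ∂P)) := by
  have := H.prob
  have h := W0_le H F one_pos
  simp only [Nat.cast_one, one_pow, mul_one] at h
  refine h.trans ?_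
  have h1 : ∫ ω, mF τ E0 V ω F (cube d 1) ∂P ≤ ∫ ω, ∑ z ∈ lat (cube d 1), aff E0 V F (τ z ω) ∂P :=
    integral_mono (mF_integrable H F (cube_bdd _)) (integrable_finset_sum _ fun z _ =>
      comp_integrable H (aff_integrable H F) z) fun ω => mF_le_aff H ω F (cube_bdd _)
  refine h1.trans ?_
  rw [integral_finset_sum _ fun z _ => comp_integrable H (aff_integrable H F) z]
  have h2 : ∫ ω, aff E0 V F ω ∂P ≤ (c₁ * (E0.card + 1) * (K ^ p + 1)) *
      (1 + ∫ ω, Lam E0 lam ω ∂P) := by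
    refine (integral_mono (aff_integrable H F) (((integrable_const 1).add
      (Lam_integrable H)).const_mul (c₁ * (E0.card + 1) * (K ^ p + 1))) fun ω => ?_).trans ?_
    · exact aff_le H hF ω
    · simp only [Pi.add_apply]
      rw [integral_const_mul, integral_add (integrable_const _) (Lam_integrable H)]
      simp
  simp only [comp_integral H (aff_integrable H F).aestronglyMeasurable, Finset.sum_const, nsmul_eq_mul]
  gcongr

end

section
variable {P : Measure Ω} {τ : Zd d → Ω → Ω} {E0 : Finset (Zd d)} {p c₁ : ℝ}
    {V : Zd d → Ω → Rn n → ℝ} {lam : Zd d → Ω → ℝ}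

/-- Centered cube of side `2T+1` around the lattice point `z`. -/
def qb (z : Zd d) (T : ℕ) : Set (Rd d) := intBox (fun i => z i - T) (fun i => z i + T + 1)

/-- Lattice points of `qb`. -/
def bl (z : Zd d) (T : ℕ) : Finset (Zd d) := Finset.Icc (fun i => z i - T) (fun i => z i + T)

lemma mem_bl {z : Zd d} {T : ℕ} {y : Zd d} : y ∈ bl z T ↔ ∀ i, |y i - z i| ≤ T := by
  simp only [bl, Finset.mem_Icc, Pi.le_def, abs_le]
  constructor
  · rintro ⟨h1, h2⟩ i
    have := h1 i; have := h2 i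
    constructor <;> linarith
  · intro h
    constructor <;> intro i <;> have := h i <;> linarith

lemma toRd_mem_intBox {a b z : Zd d} : toRd z ∈ intBox a b ↔ ∀ i, a i ≤ z i ∧ z i < b i := by
  simp only [intBox, Set.mem_setOf_eq, toRd_apply, Int.cast_le, Int.cast_lt]

lemma toRd_mem_qb {z y : Zd d} {T : ℕ} : toRd y ∈ qb z T ↔ y ∈ bl z T := by
  rw [qb, toRd_mem_intBox, mem_bl]
  apply forall_congr'
  intro i
  rw [abs_le]
  constructor <;> rintro ⟨h1, h2⟩ <;> constructor <;> linarith

lemma intBox_bdd (a b : Zd d) : Bornology.IsBounded (intBox a b) := by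
  rw [isBounded_iff_forall_norm_le]
  refine ⟨Real.sqrt (∑ i : Fin d, (|(a i : ℝ)| + |(b i : ℝ)|) ^ 2), fun x hx => ?_⟩
  rw [EuclideanSpace.norm_eq]
  gcongr with i
  rw [Real.norm_eq_abs, abs_le]
  have h1 := hx i
  have h2 := neg_abs_le (a i : ℝ)
  have h3 := le_abs_self (b i : ℝ)
  have h4 := abs_nonneg (a i : ℝ)
  have h5 := abs_nonneg (b i : ℝ)
  constructor <;> linarith [h1.1, h1.2]

lemma qb_bdd (z : Zd d) (T : ℕ) : Bornology.IsBounded (qb z T) := intBox_bdd _ _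

lemma lat_qb (z : Zd d) (T : ℕ) : lat (qb z T) = bl z T := by
  ext y; rw [mem_lat (qb_bdd z T), toRd_mem_qb]

/-- Cube with corner `w` and side `k`. -/
def kc (w : Zd d) (k : ℕ) : Set (Rd d) := intBox w (fun i => w i + k)

lemma mF_kc (H : Hyp P τ E0 p c₁ V lam) (ω : Ω) (F : Rd d →L[ℝ] Rn n) (w : Zd d) (k : ℕ) :
    mF τ E0 V ω F (kc w k) = mF τ E0 V (τ w ω) F (cube d k) := by
  apply mF_shift H
  intro x
  simp only [kc, intBox, cube, Set.mem_setOf_eq, PiLp.sub_apply, toRd_apply]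
  apply forall_congr'
  intro i
  push_cast
  constructor <;> rintro ⟨h1, h2⟩ <;> constructor <;> linarith

lemma mF_qb (H : Hyp P τ E0 p c₁ V lam) (ω : Ω) (F : Rd d →L[ℝ] Rn n) (w : Zd d) (T : ℕ) :
    mF τ E0 V ω F (qb w T) = mF τ E0 V (τ w ω) F (qb 0 T) := by
  apply mF_shift H
  intro x
  simp only [qb, intBox, Set.mem_setOf_eq, PiLp.sub_apply, toRd_apply]
  apply forall_congr'
  intro i
  push_cast
  simp only [Pi.zero_apply, Int.cast_zero]
  constructor <;> rintro ⟨h1, h2⟩ <;> constructor <;> linarith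

/-- Normalized cell energy. -/
def hk (τ : Zd d → Ω → Ω) (E0 : Finset (Zd d)) (V : Zd d → Ω → Rn n → ℝ) (F : Rd d →L[ℝ] Rn n)
    (k : ℕ) (ω : Ω) : ℝ := ((k : ℝ) ^ d)⁻¹ * mF τ E0 V ω F (cube d k)

lemma hk_nonneg (H : Hyp P τ E0 p c₁ V lam) (F : Rd d →L[ℝ] Rn n) (k : ℕ) (ω : Ω) :
    0 ≤ hk τ E0 V F k ω := by
  have := mF_nonneg H ω F (cube_bdd (d := d) k)
  rw [hk]; positivity

lemma hk_integrable (H : Hyp P τ E0 p c₁ V lam) (F : Rd d →L[ℝ] Rn n) (k : ℕ) :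
    Integrable (hk τ E0 V F k) P := (mF_integrable H F (cube_bdd k)).const_mul _

lemma hk_measurable (H : Hyp P τ E0 p c₁ V lam) (F : Rd d →L[ℝ] Rn n) (k : ℕ) :
    Measurable (hk τ E0 V F k) := (mF_measurable H F (cube_bdd k)).const_mul _

lemma mF_tiling (H : Hyp P τ E0 p c₁ V lam) (ω : Ω) (F : Rd d →L[ℝ] Rn n) (N : ℕ)
    {ι : Type*} (s : Finset ι) (C : ι → Set (Rd d))
    (hC : ∀ i ∈ s, C i ⊆ qb 0 N)
    (hdisj : ∀ i ∈ s, ∀ j ∈ s, i ≠ j → ∀ z : Zd d, toRd z ∈ C i → toRd z ∉ C j)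
    {k : ℕ} (hk0 : 0 < k) (rest : Finset (Zd d))
    (hrest : ∀ z, z ∈ rest ↔ z ∈ bl 0 N ∧ ∀ i ∈ s, toRd z ∉ C i) :
    mF τ E0 V ω F (qb 0 N) ≤ ∑ i ∈ s, mF τ E0 V ω F (C i) + ∑ z ∈ rest, hk τ E0 V F k (τ z ω)
      + ∑ z ∈ rest.filter (fun z => ¬ ∀ y ∈ bl z k, y ∈ rest), aff E0 V F (τ z ω) := by
  have hkZ : (0 : ℤ) < k := by exact_mod_cast hk0
  let res : Zd d → (Fin d → Fin k) := fun w i =>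
    ⟨(w i % k).toNat, by
      have h1 := Int.emod_nonneg (w i) hkZ.ne'
      have h2 := Int.emod_lt_of_pos (w i) hkZ
      omega⟩
  have hres : ∀ w w' i, res w i = res w' i → w i % k = w' i % k := by
    intro w w' i h
    have h := congrArg Fin.val h
    simp only [res] at h
    have h1 := Int.emod_nonneg (w i) hkZ.ne'
    have h2 := Int.emod_nonneg (w' i) hkZ.ne'
    omega
  set W := rest.filter (fun w => ∀ y : Zd d, toRd y ∈ kc w k → y ∈ rest) with hW
  set bad := ∑ z ∈ rest.filter (fun z => ¬ ∀ y ∈ bl z k, y ∈ rest), aff E0 V F (τ z ω) with hbad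
  have key : ∀ o : Fin d → Fin k, mF τ E0 V ω F (qb 0 N) ≤ ∑ i ∈ s, mF τ E0 V ω F (C i)
      + ∑ w ∈ W.filter (fun w => res w = o), mF τ E0 V ω F (kc w k) + bad := by
    intro o
    have hmain := mF_subadd H ω F (qb_bdd 0 N) (s.disjSum (W.filter (fun w => res w = o)))
      (Sum.elim C (fun w => kc w k)) ?_ ?_
    · rw [Finset.sum_disjSum] at hmain
      simp only [Sum.elim_inl, Sum.elim_inr] at hmain
      refine hmain.trans ?_
      gcongr
      rw [hbad]
      apply Finset.sum_le_sum_of_subset_of_nonneg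
      · intro z hz
        rw [Finset.mem_filter, lat_qb] at hz
        obtain ⟨hz1, hz2⟩ := hz
        have hzr : z ∈ rest := by
          rw [hrest]
          refine ⟨hz1, fun i hi => ?_⟩
          exact hz2 (Sum.inl i) (by simpa using hi)
        rw [Finset.mem_filter]
        refine ⟨hzr, fun hall => ?_⟩
        let w : Zd d := fun i => z i - (z i - (o i : ℤ)) % k
        have hw1 : ∀ i, w i ≤ z i ∧ z i < w i + k := by
          intro i
          have h1 := Int.emod_nonneg (z i - (o i : ℤ)) hkZ.ne'
          have h2 := Int.emod_lt_of_pos (z i - (o i : ℤ)) hkZ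
          constructor <;> simp only [w] <;> linarith
        have hwres : res w = o := by
          funext i
          apply Fin.ext
          have h3 : w i % k = o i := by
            have h4 : w i = o i + k * ((z i - (o i : ℤ)) / k) := by
              have := Int.emod_add_mul_ediv (z i - (o i : ℤ)) k
              simp only [w]; linarith
            rw [h4, Int.add_mul_emod_self_left]
            exact Int.emod_eq_of_lt (by positivity) (by exact_mod_cast (o i).2)
          simp only [res, h3]
          simp
        have hwW : w ∈ W := by
          rw [hW, Finset.mem_filter]
          constructor
          · apply hall
            rw [mem_bl]
            intro i
            rw [abs_le]
            constructor <;> linarith [(hw1 i).1, (hw1 i).2]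
          · intro y hy
            apply hall
            rw [kc, toRd_mem_intBox] at hy
            rw [mem_bl]
            intro i
            rw [abs_le]
            constructor <;> linarith [(hw1 i).1, (hw1 i).2, (hy i).1, (hy i).2]
        have := hz2 (Sum.inr w) (by simp [hwW, hwres])
        apply this
        simp only [Sum.elim_inr, kc]
        rw [toRd_mem_intBox]
        exact hw1
      · intro z _ _
        exact aff_nonneg H F _
    · rintro (i | w) hi
      · exact hC i (by simpa using hi)
      · simp only [Finset.inr_mem_disjSum, Finset.mem_filter, hW] at hi
        have h1 : w ∈ bl 0 N := ((hrest w).1 hi.1.1).1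
        have h2 : (fun i => w i + (k - 1) : Zd d) ∈ bl 0 N := by
          refine ((hrest _).1 (hi.1.2 _ ?_)).1
          rw [kc, toRd_mem_intBox]
          intro i; constructor <;> linarith
        rw [mem_bl] at h1 h2
        intro x hx i
        have h3 := abs_le.1 (h1 i)
        have h4 := abs_le.1 (h2 i)
        have h5 := hx i
        simp only [Pi.zero_apply, sub_zero] at h3 h4
        have h6 : ((-N : ℤ) : ℝ) ≤ w i := by exact_mod_cast h3.1
        have h7 : ((w i + (k - 1) : ℤ) : ℝ) ≤ (N : ℤ) := by exact_mod_cast h4.2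
        simp only [Pi.zero_apply]
        push_cast at h5 h6 h7 ⊢
        constructor <;> linarith [h5.1, h5.2]
    · rintro (i | w) hi (j | w') hj hij z hz
      · exact hdisj i (by simpa using hi) j (by simpa using hj) (fun h => hij (by rw [h])) z hz
      · simp only [Finset.inr_mem_disjSum, Finset.mem_filter, hW] at hj
        intro hz'
        exact ((hrest z).1 (hj.1.2 z hz')).2 i (by simpa using hi) hz
      · simp only [Finset.inr_mem_disjSum, Finset.mem_filter, hW] at hi
        exact ((hrest z).1 (hi.1.2 z hz)).2 j (by simpa using hj)
      · simp only [Finset.inr_mem_disjSum, Finset.mem_filter] at hi hj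
        intro hz'
        apply hij
        congr 1
        funext i
        simp only [Sum.elim_inr, kc] at hz hz'
        rw [toRd_mem_intBox] at hz hz'
        have h1 := hres w w' i (by rw [hi.2, hj.2])
        have h2 := hz i
        have h3 := hz' i
        have h4 : (k : ℤ) ∣ w i - w' i := Int.ModEq.dvd (Int.ModEq.symm h1)
        have h5 : |w i - w' i| < k := by rw [abs_lt]; constructor <;> linarith
        have := Int.eq_zero_of_abs_lt_dvd h4 h5
        linarith
  have hsum := Finset.sum_le_sum (s := (Finset.univ : Finset (Fin d → Fin k))) (fun o _ => key o)
  rw [Finset.sum_const, Finset.sum_add_distrib, Finset.sum_add_distrib, Finset.sum_const,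
    Finset.sum_const, Finset.sum_fiberwise] at hsum
  simp only [Finset.card_univ, Fintype.card_pi, Fintype.card_fin, Finset.prod_const, nsmul_eq_mul,
    Nat.cast_pow] at hsum
  have hkd : (0 : ℝ) < (k : ℝ) ^ d := by positivity
  have h8 : ∑ w ∈ W, mF τ E0 V ω F (kc w k) ≤ (k : ℝ) ^ d * ∑ z ∈ rest, hk τ E0 V F k (τ z ω) := by
    rw [Finset.mul_sum]
    have : ∀ w, mF τ E0 V ω F (kc w k) = (k : ℝ) ^ d * hk τ E0 V F k (τ w ω) := by
      intro w
      rw [mF_kc H, hk, ← mul_assoc, mul_inv_cancel₀ hkd.ne', one_mul]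
    simp only [this]
    apply Finset.sum_le_sum_of_subset_of_nonneg
    · exact Finset.filter_subset _ _
    · intro z _ _
      have := hk_nonneg H F k (τ z ω)
      positivity
  have h9 : (k : ℝ) ^ d * mF τ E0 V ω F (qb 0 N) ≤ (k : ℝ) ^ d * (∑ i ∈ s, mF τ E0 V ω F (C i)
    + ∑ z ∈ rest, hk τ E0 V F k (τ z ω) + bad) := by
    rw [mul_add, mul_add]
    linarith
  exact le_of_mul_le_mul_left h9 hkd

end

section
variable {P : Measure Ω} {τ : Zd d → Ω → Ω} {E0 : Finset (Zd d)} {p c₁ : ℝ}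
    {V : Zd d → Ω → Rn n → ℝ} {lam : Zd d → Ω → ℝ}

lemma card_bl (z : Zd d) (T : ℕ) : ((bl z T).card : ℝ) = (2 * (T : ℝ) + 1) ^ d := by
  rw [bl, Pi.card_Icc]
  have : ∀ i : Fin d, (Finset.Icc (z i - (T : ℤ)) (z i + T)).card = 2 * T + 1 := by
    intro i
    rw [Int.card_Icc]
    omega
  simp [this]

lemma mem_closedBall_iff_bl {z y : Zd d} {T : ℕ} : y ∈ closedBall z (T : ℝ) ↔ y ∈ bl z T := by
  rw [mem_closedBall, mem_bl, dist_pi_le_iff (by positivity)]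
  apply forall_congr'
  intro i
  rw [Int.dist_eq]
  norm_cast

lemma card_bad_le (ω : Ω) (X : ℕ → Ω → ℝ) (T1 T0 N : ℕ) (hN : T0 ≤ N) (δ S : ℝ) (hδ : 0 < δ)
    (hX : ∀ s : Finset (Zd d), ∀ r : Zd d → ℕ, (∀ z ∈ s, T1 ≤ r z ∧ r z ≤ T0) →
      (∀ z ∈ s, bl z (r z) ⊆ bl 0 N) →
      (∀ z ∈ s, ∀ z' ∈ s, z ≠ z' → Disjoint (bl z (r z)) (bl z' (r z'))) →
      ∑ z ∈ s, X (r z) (τ z ω) ≤ S) :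
    (((bl (0 : Zd d) (N - T0)).filter
      (fun z => ∃ T, T1 ≤ T ∧ T ≤ T0 ∧ δ * (2 * (T : ℝ) + 1) ^ d < X T (τ z ω))).card : ℝ)
      ≤ 5 ^ d / δ * S := by
  set bad := (bl (0 : Zd d) (N - T0)).filter
      (fun z => ∃ T, T1 ≤ T ∧ T ≤ T0 ∧ δ * (2 * (T : ℝ) + 1) ^ d < X T (τ z ω)) with hbad
  have hex : ∀ z : Zd d, ∃ T : ℕ, z ∈ bad → (T1 ≤ T ∧ T ≤ T0 ∧ δ * (2 * (T : ℝ) + 1) ^ d < X T (τ z ω)) := by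
    intro z
    by_cases hz : z ∈ bad
    · obtain ⟨T, hT⟩ := (Finset.mem_filter.1 hz).2
      exact ⟨T, fun _ => hT⟩
    · exact ⟨0, fun h => absurd h hz⟩
  choose r hr using hex
  obtain ⟨u, hu, hdisj, hcov⟩ := Vitali.exists_disjoint_subfamily_covering_enlargement_closedBall
    (bad : Set (Zd d)) id (fun z => (r z : ℝ)) (T0 : ℝ) (fun z hz => by exact_mod_cast (hr z hz).2.1)
    5 (by norm_num)
  have hufin : u.Finite := bad.finite_toSet.subset hu
  set s := hufin.toFinset with hs
  have hmem : ∀ z, z ∈ s ↔ z ∈ u := fun z => by simp [hs]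
  have hsb : ∀ z ∈ s, z ∈ bad := fun z hz => hu ((hmem z).1 hz)
  have hsub : bad ⊆ s.biUnion fun z => bl z (5 * r z) := by
    intro z hz
    obtain ⟨y, hy, hzy⟩ := hcov z hz
    rw [Finset.mem_biUnion]
    refine ⟨y, (hmem y).2 hy, ?_⟩
    rw [← mem_closedBall_iff_bl]
    have h1 := hzy (mem_closedBall_self (by positivity))
    push_cast
    exact h1
  have h1 : (bad.card : ℝ) ≤ ∑ z ∈ s, (2 * ((5 * r z : ℕ) : ℝ) + 1) ^ d := by
    have h2 := (Finset.card_le_card hsub).trans Finset.card_biUnion_le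
    have h3 : ((∑ z ∈ s, (bl z (5 * r z)).card : ℕ) : ℝ) = ∑ z ∈ s, (2 * ((5 * r z : ℕ) : ℝ) + 1) ^ d := by
      push_cast
      apply Finset.sum_congr rfl
      intro z _
      rw [card_bl]; push_cast; rfl
    rw [← h3]
    exact_mod_cast h2
  have h4 : ∑ z ∈ s, X (r z) (τ z ω) ≤ S := by
    apply hX s r
    · intro z hz
      exact ⟨(hr z (hsb z hz)).1, (hr z (hsb z hz)).2.1⟩
    · intro z hz y hy
      have h5 := (Finset.mem_filter.1 (hsb z hz)).1
      have h6 := (hr z (hsb z hz)).2.1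
      rw [mem_bl] at hy h5 ⊢
      intro i
      have h7 := abs_le.1 (hy i)
      have h8 := abs_le.1 (h5 i)
      have h9 : ((N - T0 : ℕ) : ℤ) = N - T0 := by omega
      rw [h9] at h8
      simp only [Pi.zero_apply, sub_zero] at h8 ⊢
      rw [abs_le]
      constructor <;> omega
    · intro z hz z' hz' hne
      have h5 := hdisj ((hmem z).1 hz) ((hmem z').1 hz') hne
      rw [Finset.disjoint_left]
      intro y hy hy'
      exact Set.disjoint_left.1 h5 (mem_closedBall_iff_bl.2 hy) (mem_closedBall_iff_bl.2 hy')
  have h5 : ∀ z ∈ s, (2 * ((5 * r z : ℕ) : ℝ) + 1) ^ d ≤ 5 ^ d / δ * X (r z) (τ z ω) := by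
    intro z hz
    have h6 := (hr z (hsb z hz)).2.2
    have h7 : (2 * ((5 * r z : ℕ) : ℝ) + 1) ^ d ≤ 5 ^ d * (2 * (r z : ℝ) + 1) ^ d := by
      rw [← mul_pow]
      apply pow_le_pow_left₀ (by positivity)
      push_cast; linarith
    refine h7.trans ?_
    rw [div_mul_eq_mul_div, mul_div_assoc]
    gcongr
    rw [le_div_iff₀ hδ]
    linarith
  refine h1.trans ((Finset.sum_le_sum h5).trans ?_)
  rw [← Finset.mul_sum]
  gcongr

lemma vitali_trans (H : Hyp P τ E0 p c₁ V lam) (X : ℕ → Ω → ℝ) (hXm : ∀ T, Measurable (X T))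
    (S : ℕ → Ω → ℝ) (hS : ∀ N, Integrable (S N) P) (T1 T0 : ℕ) (κ δ : ℝ) (hδ : 0 < δ)
    (hX : ∀ ω N, ∀ s : Finset (Zd d), ∀ r : Zd d → ℕ, (∀ z ∈ s, T1 ≤ r z ∧ r z ≤ T0) →
      (∀ z ∈ s, bl z (r z) ⊆ bl 0 N) →
      (∀ z ∈ s, ∀ z' ∈ s, z ≠ z' → Disjoint (bl z (r z)) (bl z' (r z'))) →
      ∑ z ∈ s, X (r z) (τ z ω) ≤ S N ω)
    (hlim : ∀ η > 0, ∀ᶠ N : ℕ in atTop, ∫ ω, S N ω ∂P ≤ (κ + η) * (2 * (N : ℝ) + 1) ^ d) :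
    P.real {ω | ∃ T, T1 ≤ T ∧ T ≤ T0 ∧ δ * (2 * (T : ℝ) + 1) ^ d < X T ω} ≤ 5 ^ d / δ * κ := by
  have := H.prob
  set G := {ω | ∃ T, T1 ≤ T ∧ T ≤ T0 ∧ δ * (2 * (T : ℝ) + 1) ^ d < X T ω} with hG
  have hGm : MeasurableSet G := by
    have : G = ⋃ T : ℕ, ⋃ (_ : T1 ≤ T ∧ T ≤ T0), {ω | δ * (2 * (T : ℝ) + 1) ^ d < X T ω} := by
      ext ω
      simp only [hG, Set.mem_setOf_eq, Set.mem_iUnion]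
      constructor
      · rintro ⟨T, h1, h2, h3⟩; exact ⟨T, ⟨h1, h2⟩, h3⟩
      · rintro ⟨T, ⟨h1, h2⟩, h3⟩; exact ⟨T, h1, h2, h3⟩
    rw [this]
    exact MeasurableSet.iUnion fun T => MeasurableSet.iUnion fun _ =>
      measurableSet_lt measurable_const (hXm T)
  have key : ∀ N, T0 ≤ N → (2 * ((N - T0 : ℕ) : ℝ) + 1) ^ d * P.real G ≤ 5 ^ d / δ * ∫ ω, S N ω ∂P := by
    intro N hN
    have hI : Integrable (G.indicator (fun _ => (1 : ℝ))) P :=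
      (integrable_const _).indicator hGm
    have h1 : ∫ ω, ∑ z ∈ bl (0 : Zd d) (N - T0), G.indicator (fun _ => (1 : ℝ)) (τ z ω) ∂P
        = (2 * ((N - T0 : ℕ) : ℝ) + 1) ^ d * P.real G := by
      rw [integral_finset_sum _ fun z _ => comp_integrable H hI z]
      simp only [comp_integral H hI.aestronglyMeasurable]
      rw [Finset.sum_const, nsmul_eq_mul, card_bl, integral_indicator_const _ hGm]
      simp
    rw [← h1, ← integral_const_mul]
    apply integral_mono (integrable_finset_sum _ fun z _ => comp_integrable H hI z)
      ((hS N).const_mul _)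
    intro ω
    have h2 := card_bad_le ω X T1 T0 N hN δ (S N ω) hδ (hX ω N)
    refine le_trans (le_of_eq ?_) h2
    simp only [Set.indicator_apply]
    rw [Finset.sum_boole]
    rfl
  apply le_of_forall_pos_le_add
  intro η hη
  have hη' : 0 < η * δ / 5 ^ d := by positivity
  have h3 : ∀ᶠ N : ℕ in atTop, ((2 * ((N : ℝ) - T0) + 1) / (2 * (N : ℝ) + 1)) ^ d * P.real G
      ≤ 5 ^ d / δ * κ + η := by
    filter_upwards [hlim _ hη', eventually_ge_atTop T0] with N h4 h5
    have h6 := key N h5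
    rw [Nat.cast_sub h5] at h6
    have h7 : (0 : ℝ) < (2 * (N : ℝ) + 1) ^ d := by positivity
    rw [div_pow, div_mul_eq_mul_div, div_le_iff₀ h7]
    refine h6.trans ((mul_le_mul_of_nonneg_left h4 (by positivity)).trans (le_of_eq ?_))
    field_simp
  have h4 : Tendsto (fun N : ℕ => ((2 * ((N : ℝ) - T0) + 1) / (2 * (N : ℝ) + 1)) ^ d * P.real G)
      atTop (𝓝 (1 ^ d * P.real G)) := by
    refine Tendsto.mul_const _ (Tendsto.pow ?_ d)
    have h5 : Tendsto (fun N : ℕ => 1 - (2 * (T0 : ℝ)) / (2 * (N : ℝ) + 1)) atTop (𝓝 (1 - 0)) := by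
      refine tendsto_const_nhds.sub (Tendsto.const_div_atTop ?_ _)
      exact tendsto_atTop_add_const_right _ _
        (tendsto_natCast_atTop_atTop.const_mul_atTop (by norm_num))
    rw [sub_zero] at h5
    refine h5.congr fun N => ?_
    have : (2 * (N : ℝ) + 1) ≠ 0 := by positivity
    field_simp
    ring
  have h5 := le_of_tendsto h4 h3
  simpa using h5

end

/-- The lattice points `z` with `ε z` in the open box. -/
def latBox (ε : ℝ) (lo hi : Fin d → ℝ) : Finset (Zd d) :=
  Finset.Icc (fun i => ⌊lo i / ε⌋ + 1) (fun i => ⌈hi i / ε⌉ - 1)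

lemma mem_latBox {ε : ℝ} (hε : 0 < ε) {lo hi : Fin d → ℝ} {z : Zd d} :
    z ∈ latBox ε lo hi ↔ ε • toRd z ∈ openBox lo hi := by
  rw [latBox, Finset.mem_Icc, Pi.le_def, Pi.le_def, openBox, Set.mem_setOf_eq, ← forall_and]
  apply forall_congr'
  intro i
  simp only [PiLp.smul_apply, toRd_apply, smul_eq_mul]
  rw [Int.add_one_le_iff, Int.floor_lt, Int.le_sub_one_iff, Int.lt_ceil, div_lt_iff₀ hε,
    lt_div_iff₀ hε, mul_comm ε]

lemma count_one (a b : ℝ) (hab : a < b) (k : ℤ) :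
    Tendsto (fun ε : ℝ => ε * ((Finset.Icc (⌊a / ε⌋ + 1 + k) (⌈b / ε⌉ - 1 - k)).card : ℝ)) (𝓝[>] 0)
      (𝓝 (b - a)) := by
  have hk : Tendsto (fun ε : ℝ => ε * (2 * |(k : ℝ)| + 2)) (𝓝[>] 0) (𝓝 0) := by
    have h : Tendsto (fun ε : ℝ => ε * (2 * |(k : ℝ)| + 2)) (𝓝 0) (𝓝 (0 * (2 * |(k : ℝ)| + 2))) :=
      tendsto_id.mul_const _
    rw [zero_mul] at h
    exact h.mono_left nhdsWithin_le_nhds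
  rw [tendsto_iff_norm_sub_tendsto_zero]
  refine squeeze_zero' (Eventually.of_forall fun _ => norm_nonneg _) ?_ hk
  filter_upwards [self_mem_nhdsWithin] with ε hε
  have hε : 0 < ε := hε
  rw [Int.card_Icc]
  set m : ℤ := ⌈b / ε⌉ - 1 - k + 1 - (⌊a / ε⌋ + 1 + k) with hm
  have h1 := Int.ceil_lt_add_one (b / ε)
  have h2 := Int.le_ceil (b / ε)
  have h3 := Int.floor_le (a / ε)
  have h4 := Int.lt_floor_add_one (a / ε)
  have h5 : (m : ℝ) = ⌈b / ε⌉ - ⌊a / ε⌋ - 1 - 2 * k := by rw [hm]; push_cast; ring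
  have h6 := neg_abs_le (k : ℝ)
  have h7 := le_abs_self (k : ℝ)
  have h8 : (0 : ℝ) < b / ε - a / ε := by
    rw [← sub_div]; exact div_pos (by linarith) hε
  have h9 : |((m.toNat : ℕ) : ℝ) - (b / ε - a / ε)| ≤ 2 * |(k : ℝ)| + 2 := by
    rcases le_total 0 m with h | h
    · have : ((m.toNat : ℕ) : ℝ) = m := by
        exact_mod_cast congrArg (fun x : ℤ => (x : ℝ)) (Int.toNat_of_nonneg h)
      rw [this, abs_le]
      constructor <;> linarith
    · rw [Int.toNat_of_nonpos h]
      have h' : (m : ℝ) ≤ 0 := by exact_mod_cast h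
      rw [abs_le]
      constructor
      · push_cast; linarith
      · push_cast; linarith [abs_nonneg (k : ℝ)]
  have h10 : ε * ((m.toNat : ℕ) : ℝ) - (b - a) = ε * (((m.toNat : ℕ) : ℝ) - (b / ε - a / ε)) := by
    field_simp
  rw [h10, norm_mul, Real.norm_eq_abs, Real.norm_eq_abs, abs_of_pos hε]
  gcongr

lemma count_box (lo hi : Fin d → ℝ) (h : ∀ i, lo i < hi i) (k : ℤ) :
    Tendsto (fun ε : ℝ => ε ^ d * ((Finset.Icc (fun i : Fin d => ⌊lo i / ε⌋ + 1 + k)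
      (fun i => ⌈hi i / ε⌉ - 1 - k)).card : ℝ)) (𝓝[>] 0) (𝓝 (∏ i, (hi i - lo i))) := by
  have := tendsto_finset_prod (Finset.univ : Finset (Fin d))
    (fun i _ => count_one (lo i) (hi i) (h i) k)
  refine this.congr fun ε => ?_
  rw [Finset.prod_mul_distrib, Pi.card_Icc]
  simp

lemma count_latBox (lo hi : Fin d → ℝ) (h : ∀ i, lo i < hi i) :
    Tendsto (fun ε : ℝ => ε ^ d * ((latBox ε lo hi).card : ℝ)) (𝓝[>] 0) (𝓝 (∏ i, (hi i - lo i))) := by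
  have := count_box lo hi h 0
  simpa [latBox] using this

/-- Scaled sums over boxes. -/
def avg (τ : Zd d → Ω → Ω) (f : Ω → ℝ) (ω : Ω) (lo hi : Fin d → ℝ) (ε : ℝ) : ℝ :=
  ε ^ d * ∑ z ∈ latBox ε lo hi, f (τ z ω)

/-- The ergodic theorem holds for `f`. -/
def GoodAt (P : Measure Ω) (τ : Zd d → Ω → Ω) (f : Ω → ℝ) (ω : Ω) : Prop :=
  ∀ lo hi : Fin d → ℝ, (∀ i, lo i < hi i) →
    Tendsto (avg τ f ω lo hi) (𝓝[>] 0) (𝓝 ((∏ i, (hi i - lo i)) * ∫ x, f x ∂P))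

section
variable {P : Measure Ω} {τ : Zd d → Ω → Ω} {E0 : Finset (Zd d)} {p c₁ : ℝ}
    {V : Zd d → Ω → Rn n → ℝ} {lam : Zd d → Ω → ℝ}

lemma good_const (H : Hyp P τ E0 p c₁ V lam) (c : ℝ) (ω : Ω) : GoodAt P τ (fun _ => c) ω := by
  have := H.prob
  intro lo hi h
  have h1 := (count_latBox lo hi h).mul_const c
  simp only [integral_const, probReal_univ, one_smul]
  refine h1.congr fun ε => ?_
  simp [avg, mul_assoc]

lemma good_add {f g : Ω → ℝ} {ω : Ω} (hf : GoodAt P τ f ω) (hg : GoodAt P τ g ω)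
    (hfi : Integrable f P) (hgi : Integrable g P) : GoodAt P τ (fun x => f x + g x) ω := by
  intro lo hi h
  rw [integral_add hfi hgi, mul_add]
  refine ((hf lo hi h).add (hg lo hi h)).congr fun ε => ?_
  simp [avg, Finset.sum_add_distrib, mul_add]

lemma good_smul {f : Ω → ℝ} {ω : Ω} (c : ℝ) (hf : GoodAt P τ f ω) :
    GoodAt P τ (fun x => c * f x) ω := by
  intro lo hi h
  rw [integral_const_mul]
  have := (hf lo hi h).const_mul c
  rw [show (∏ i, (hi i - lo i)) * (c * ∫ x, f x ∂P) = c * ((∏ i, (hi i - lo i)) * ∫ x, f x ∂P) by ring]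
  refine this.congr fun ε => ?_
  simp only [avg, ← Finset.mul_sum]
  ring

lemma good_cobdry (H : Hyp P τ E0 p c₁ V lam) (g : Ω → ℝ) (hg : Integrable g P) (C : ℝ)
    (hC : ∀ x, |g x| ≤ C) (e : Zd d) (ω : Ω) : GoodAt P τ (fun x => g x - g (τ e x)) ω := by
  intro lo hi h
  rw [integral_sub hg (comp_integrable H hg e), comp_integral H hg.aestronglyMeasurable, sub_self,
    mul_zero]
  obtain ⟨k, hk⟩ : ∃ k : ℕ, ∀ i, |e i| ≤ (k : ℤ) := by
    refine ⟨∑ i, (e i).natAbs, fun i => ?_⟩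
    rw [Int.abs_eq_natAbs]
    exact_mod_cast Finset.single_le_sum (f := fun i => (e i).natAbs) (fun _ _ => Nat.zero_le _) (Finset.mem_univ i)
  have h1 := ((count_latBox lo hi h).sub (count_box lo hi h k)).const_mul (2 * C)
  rw [sub_self, mul_zero] at h1
  refine squeeze_zero_norm' ?_ h1
  filter_upwards [self_mem_nhdsWithin] with ε hε
  have hε : 0 < ε := hε
  set B := latBox ε lo hi with hB
  set I := Finset.Icc (fun i : Fin d => ⌊lo i / ε⌋ + 1 + (k : ℤ))
      (fun i => ⌈hi i / ε⌉ - 1 - (k : ℤ)) with hI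
  set B' := B.image (fun z => e + z) with hB'
  have hinj : Function.Injective (fun z : Zd d => e + z) := add_right_injective e
  have hIB : I ⊆ B := by
    intro z hz
    rw [hI, Finset.mem_Icc, Pi.le_def, Pi.le_def] at hz
    rw [hB, latBox, Finset.mem_Icc, Pi.le_def, Pi.le_def]
    exact ⟨fun i => by have := hz.1 i; omega,
      fun i => by have := hz.2 i; omega⟩
  have hIB' : I ⊆ B' := by
    intro z hz
    rw [hB', Finset.mem_image]
    refine ⟨z - e, ?_, by abel⟩
    rw [hI, Finset.mem_Icc, Pi.le_def, Pi.le_def] at hz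
    rw [hB, latBox, Finset.mem_Icc, Pi.le_def, Pi.le_def]
    exact ⟨fun i => by
        have := hz.1 i; have := abs_le.1 (hk i); simp only [Pi.sub_apply] at *; omega,
      fun i => by have := hz.2 i; have := abs_le.1 (hk i); simp only [Pi.sub_apply] at *; omega⟩
  have h2 : ∑ z ∈ B, g (τ e (τ z ω)) = ∑ z ∈ B', g (τ z ω) := by
    rw [hB', Finset.sum_image (fun x _ y _ h => hinj h)]
    apply Finset.sum_congr rfl
    intro z _
    rw [H.τadd]; rfl
  have h3 : ∀ D : Finset (Zd d), I ⊆ D → |∑ z ∈ D, g (τ z ω) - ∑ z ∈ I, g (τ z ω)| ≤ C * ((D.card : ℝ) - I.card) := by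
    intro D hD
    rw [← Finset.sum_sdiff hD, add_sub_cancel_right]
    refine (Finset.abs_sum_le_sum_abs _ _).trans ((Finset.sum_le_sum fun z _ => hC _).trans ?_)
    rw [Finset.sum_const, nsmul_eq_mul, Finset.card_sdiff_of_subset hD, Nat.cast_sub (Finset.card_le_card hD)]
    exact le_of_eq (mul_comm _ _)
  have h4 := h3 B hIB
  have h5 := h3 B' hIB'
  have h6 : B'.card = B.card := Finset.card_image_of_injective _ hinj
  rw [h6] at h5
  have h7 : |∑ z ∈ B, (g (τ z ω) - g (τ e (τ z ω)))| ≤ 2 * C * ((B.card : ℝ) - I.card) := by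
    rw [Finset.sum_sub_distrib, h2]
    rw [abs_le] at *
    constructor <;> linarith
  simp only [avg, norm_mul, Real.norm_eq_abs, ← hB]
  rw [abs_of_pos (pow_pos hε d)]
  calc ε ^ d * _ ≤ ε ^ d * (2 * C * ((B.card : ℝ) - I.card)) := by gcongr
    _ = _ := by ring

lemma maximal (H : Hyp P τ E0 p c₁ V lam) (f : Ω → ℝ) (hfm : Measurable f) (hf0 : ∀ x, 0 ≤ f x)
    (hf : Integrable f P) (δ : ℝ) (hδ : 0 < δ) :
    P.real {ω | ∃ T : ℕ, δ * (2 * (T : ℝ) + 1) ^ d < ∑ z ∈ bl 0 T, f (τ z ω)} ≤ 5 ^ d / δ * ∫ x, f x ∂P := by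
  have := H.prob
  set X : ℕ → Ω → ℝ := fun T ω => ∑ z ∈ bl 0 T, f (τ z ω) with hX
  have hXm : ∀ T, Measurable (X T) := fun T =>
    Finset.measurable_sum _ fun z _ => hfm.comp (H.mp z).measurable
  have key : ∀ T0 : ℕ, P.real {ω | ∃ T, 0 ≤ T ∧ T ≤ T0 ∧ δ * (2 * (T : ℝ) + 1) ^ d < X T ω}
      ≤ 5 ^ d / δ * ∫ x, f x ∂P := by
    intro T0
    refine vitali_trans H X hXm X (fun N => integrable_finset_sum _ fun z _ => comp_integrable H hf z)
      0 T0 _ δ hδ ?_ ?_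
    · intro ω N s r _ hsub hdisj
      have h1 : ∀ z ∈ s, X (r z) (τ z ω) = ∑ y ∈ bl z (r z), f (τ y ω) := by
        intro z _
        rw [hX]
        refine Finset.sum_bij' (fun y _ => y + z) (fun y _ => y - z) ?_ ?_ ?_ ?_ ?_
        · intro y hy
          rw [mem_bl] at hy ⊢
          intro i; simpa using hy i
        · intro y hy
          rw [mem_bl] at hy ⊢
          intro i; simpa using hy i
        · intro y _; simp
        · intro y _; simp
        · intro y _
          rw [H.τadd]; rfl
      rw [Finset.sum_congr rfl h1, ← Finset.sum_biUnion (fun z hz z' hz' hne => hdisj z hz z' hz' hne)]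
      apply Finset.sum_le_sum_of_subset_of_nonneg
      · intro y hy
        obtain ⟨z, hz, hy⟩ := Finset.mem_biUnion.1 hy
        exact hsub z hz hy
      · intro y _ _; exact hf0 _
    · intro η hη
      refine Eventually.of_forall fun N => ?_
      simp only [hX]
      rw [integral_finset_sum _ fun z _ => comp_integrable H hf z]
      simp only [comp_integral H hf.aestronglyMeasurable]
      rw [Finset.sum_const, nsmul_eq_mul, card_bl, mul_comm]
      gcongr
      linarith
  set G : ℕ → Set Ω := fun T0 => {ω | ∃ T, 0 ≤ T ∧ T ≤ T0 ∧ δ * (2 * (T : ℝ) + 1) ^ d < X T ω} with hG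
  have hmono : Monotone G := by
    intro a b hab ω hω
    obtain ⟨T, h1, h2, h3⟩ := hω
    exact ⟨T, h1, h2.trans hab, h3⟩
  have h1 : {ω | ∃ T : ℕ, δ * (2 * (T : ℝ) + 1) ^ d < ∑ z ∈ bl 0 T, f (τ z ω)} = ⋃ T0, G T0 := by
    ext ω
    simp only [hG, Set.mem_iUnion, Set.mem_setOf_eq]
    constructor
    · rintro ⟨T, hT⟩; exact ⟨T, T, Nat.zero_le _, le_rfl, hT⟩
    · rintro ⟨T0, T, _, _, hT⟩; exact ⟨T, hT⟩
  rw [h1]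
  have h2 := tendsto_measure_iUnion_atTop (μ := P) hmono
  have h3 : Tendsto (fun T0 => P.real (G T0)) atTop (𝓝 (P.real (⋃ T0, G T0))) :=
    (ENNReal.tendsto_toReal (measure_ne_top _ _)).comp h2
  exact le_of_tendsto' h3 key

lemma latBox_subset_bl (lo hi : Fin d → ℝ) : ∃ K : ℕ, 0 < K ∧ ∀ ε : ℝ, 0 < ε → 
    ∀ T : ℕ, (K : ℝ) ≤ ε * T → latBox ε lo hi ⊆ bl 0 T := by
  obtain ⟨K, hK⟩ : ∃ K : ℕ, ∀ i, |lo i| ≤ K ∧ |hi i| ≤ K := by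
    obtain ⟨K, hK⟩ := exists_nat_ge (∑ i, (|lo i| + |hi i|))
    refine ⟨K, fun i => ?_⟩
    have := Finset.single_le_sum (f := fun i => |lo i| + |hi i|)
      (fun i _ => by positivity) (Finset.mem_univ i)
    constructor <;> linarith [abs_nonneg (lo i), abs_nonneg (hi i)]
  refine ⟨K + 1, by omega, fun ε hε T hT z hz => ?_⟩
  rw [mem_latBox hε] at hz
  rw [mem_bl]
  intro i
  have h1 := hz i
  simp only [PiLp.smul_apply, toRd_apply, smul_eq_mul] at h1
  have h2 := hK i
  push_cast at hT
  have h3 : |ε * (z i : ℝ)| ≤ ε * T := by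
    have := abs_le.1 h2.1
    have := abs_le.1 h2.2
    rw [abs_le]; constructor <;> linarith
  rw [abs_mul, abs_of_pos hε] at h3
  have h4 := le_of_mul_le_mul_left h3 hε
  simp only [Pi.zero_apply, sub_zero]
  exact_mod_cast h4

lemma good_closure (H : Hyp P τ E0 p c₁ V lam) (f : Ω → ℝ) (hfm : Measurable f) (hf : Integrable f P)
    (happ : ∀ η > 0, ∃ g : Ω → ℝ, Measurable g ∧ Integrable g P ∧ (∀ᵐ ω ∂P, GoodAt P τ g ω) ∧
      ∫ x, |f x - g x| ∂P ≤ η) : ∀ᵐ ω ∂P, GoodAt P τ f ω := by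
  have := H.prob
  choose! g hgm hgi hgg hgf using happ
  set a : ℕ → ℝ := fun m => 1 / ((m : ℝ) + 1) with ha
  have hapos : ∀ m, 0 < a m := fun m => by positivity
  have halim : Tendsto a atTop (𝓝 0) := tendsto_one_div_add_atTop_nhds_zero_nat
  have h1 : ∀ᵐ ω ∂P, ∀ m, GoodAt P τ (g (a m)) ω := by
    rw [ae_all_iff]
    exact fun m => hgg _ (hapos m)
  have h2 : ∀ᵐ ω ∂P, ∀ j : ℕ, ∀ m0 : ℕ, ∃ m ≥ m0, ∀ T : ℕ,
      ∑ z ∈ bl 0 T, |f (τ z ω) - g (a m) (τ z ω)| ≤ a j * (2 * (T : ℝ) + 1) ^ d := by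
    rw [ae_all_iff]
    intro j
    rw [ae_all_iff]
    intro m0
    rw [ae_iff]
    set Bd := {ω | ¬ ∃ m ≥ m0, ∀ T : ℕ,
      ∑ z ∈ bl 0 T, |f (τ z ω) - g (a m) (τ z ω)| ≤ a j * (2 * (T : ℝ) + 1) ^ d} with hBd
    have h3 : ∀ m ≥ m0, P.real Bd ≤ 5 ^ d / a j * a m := by
      intro m hm
      have h4 := maximal H (fun x => |f x - g (a m) x|) ((hfm.sub (hgm _ (hapos m))).abs)
        (fun x => abs_nonneg _) ((hf.sub (hgi _ (hapos m))).abs) (a j) (hapos j)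
      refine le_trans (measureReal_mono ?_) (h4.trans ?_)
      · intro ω hω
        simp only [hBd, Set.mem_setOf_eq] at hω
        push Not at hω
        exact hω m hm
      · have := hapos j
        gcongr
        exact hgf _ (hapos m)
    have h5 : Tendsto (fun m => 5 ^ d / a j * a m) atTop (𝓝 (5 ^ d / a j * 0)) := halim.const_mul _
    rw [mul_zero] at h5
    have h6 : P.real Bd ≤ 0 := ge_of_tendsto h5 (eventually_atTop.2 ⟨m0, h3⟩)
    have h7 : P.real Bd = 0 := le_antisymm h6 measureReal_nonneg
    exact (measureReal_eq_zero_iff).1 h7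
  filter_upwards [h1, h2] with ω hω1 hω2
  intro lo hi hlh
  obtain ⟨K, hK0, hK⟩ := latBox_subset_bl lo hi
  set v := ∏ i, (hi i - lo i) with hv
  have hv0 : 0 ≤ v := Finset.prod_nonneg fun i _ => by linarith [hlh i]
  rw [Metric.tendsto_nhds]
  intro η hη
  set Q : ℝ := (2 * (K : ℝ) + 3) ^ d with hQ
  have hQ0 : 0 < Q := by positivity
  obtain ⟨j, hj⟩ : ∃ j, Q * a j < η / 3 := by
    have h5 : Tendsto (fun m => Q * a m) atTop (𝓝 (Q * 0)) := halim.const_mul _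
    rw [mul_zero] at h5
    exact (h5.eventually_lt_const (by positivity)).exists
  obtain ⟨m0, hm0⟩ : ∃ m0, ∀ m ≥ m0, v * a m < η / 3 := by
    have h5 : Tendsto (fun m => v * a m) atTop (𝓝 (v * 0)) := halim.const_mul _
    rw [mul_zero] at h5
    exact eventually_atTop.1 (h5.eventually_lt_const (by positivity))
  obtain ⟨m, hm, hT⟩ := hω2 j m0
  have h8 := hm0 m hm
  have h9 := (Metric.tendsto_nhds.1 (hω1 m lo hi hlh)) (η / 3) (by positivity)
  have h10 : ∀ᶠ ε : ℝ in 𝓝[>] 0, ε < 1 := 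
    nhdsWithin_le_nhds (Iio_mem_nhds one_pos)
  filter_upwards [h9, h10, self_mem_nhdsWithin] with ε h11 h12 h13
  have hε : 0 < ε := h13
  set T := ⌈(K : ℝ) / ε⌉₊ with hTdef
  have hT1 : (K : ℝ) ≤ ε * T := by
    have := Nat.le_ceil ((K : ℝ) / ε)
    rw [div_le_iff₀ hε] at this
    linarith
  have hT2 : ε * (2 * (T : ℝ) + 1) ≤ 2 * K + 3 := by
    have := Nat.ceil_lt_add_one (a := (K : ℝ) / ε) (by positivity)
    have h := mul_lt_mul_of_pos_left this hε
    rw [mul_add, mul_div_cancel₀ _ hε.ne'] at h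
    linarith
  have h14 : |avg τ f ω lo hi ε - avg τ (g (a m)) ω lo hi ε| ≤ Q * a j := by
    rw [avg, avg, ← mul_sub, ← Finset.sum_sub_distrib, abs_mul, abs_of_pos (pow_pos hε d)]
    calc ε ^ d * |∑ z ∈ latBox ε lo hi, (f (τ z ω) - g (a m) (τ z ω))| 
        ≤ ε ^ d * (a j * (2 * (T : ℝ) + 1) ^ d) := by
          gcongr
          refine (Finset.abs_sum_le_sum_abs _ _).trans (le_trans ?_ (hT T))
          exact Finset.sum_le_sum_of_subset_of_nonneg (hK ε hε T hT1) fun _ _ _ => abs_nonneg _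
      _ = (ε * (2 * (T : ℝ) + 1)) ^ d * a j := by rw [mul_pow]; ring
      _ ≤ Q * a j := by
          have := hapos j
          rw [hQ]; gcongr
  have h15 : |v * ∫ x, g (a m) x ∂P - v * ∫ x, f x ∂P| ≤ v * a m := by
    rw [← mul_sub, ← integral_sub (hgi _ (hapos m)) hf, abs_mul, abs_of_nonneg hv0]
    gcongr
    refine (abs_integral_le_integral_abs).trans (le_trans (le_of_eq ?_) (hgf _ (hapos m)))
    congr 1; ext x; exact abs_sub_comm _ _
  rw [Real.dist_eq] at h11 ⊢
  rw [abs_lt] at *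
  rw [abs_le] at h14 h15
  constructor <;> linarith [h14.1, h14.2, h15.1, h15.2, h11.1, h11.2]

end

section
variable {P : Measure Ω} {τ : Zd d → Ω → Ω} {E0 : Finset (Zd d)} {p c₁ : ℝ}
    {V : Zd d → Ω → Rn n → ℝ} {lam : Zd d → Ω → ℝ}

lemma inv_ae_zero (H : Hyp P τ E0 p c₁ V lam) (h : Ω → ℝ) (hm : Measurable h) (hi : Integrable h P)
    (h0 : ∫ x, h x ∂P = 0)
    (hS : ∀ e : Zd d, ∀ S, MeasurableSet S → ∫ x in S, h x ∂P = ∫ x in τ e ⁻¹' S, h x ∂P) :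
    h =ᵐ[P] 0 := by
  have := H.prob
  have hinv : ∀ e : Zd d, (fun x => h (τ e x)) =ᵐ[P] h := by
    intro e
    apply Integrable.ae_eq_of_forall_setIntegral_eq _ _ (comp_integrable H hi e) hi
    intro S hSm _
    rw [hS (-e) S hSm]
    have hmp := H.mp (-e)
    have h2 : ∫ x in τ (-e) ⁻¹' S, h x ∂P = ∫ x, (τ (-e) ⁻¹' S).indicator h x ∂P :=
      (integral_indicator (hmp.measurable hSm)).symm
    have h3 : ∫ x in S, h (τ e x) ∂P = ∫ x, S.indicator (fun x => h (τ e x)) x ∂P :=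
      (integral_indicator hSm).symm
    rw [h2, h3, ← comp_integral H (f := S.indicator (fun x => h (τ e x)))
      ((hm.comp (H.mp e).measurable).indicator hSm).aestronglyMeasurable (-e)]
    congr 1
    ext x
    have h4 : τ e (τ (-e) x) = x := by
      have := congrFun (H.τadd e (-e)) x
      rw [add_neg_cancel, H.τ0] at this
      exact this.symm
    simp only [Set.indicator_apply, Set.mem_preimage, h4]
  have hall : ∀ᵐ ω ∂P, ∀ z, h (τ z ω) = h ω := by
    rw [ae_all_iff]; exact hinv
  set B : Set Ω := {ω | ∀ z, h (τ z ω) < 0} with hB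
  have hBm : MeasurableSet B := by
    have : B = ⋂ z : Zd d, {ω | h (τ z ω) < 0} := by ext; simp [hB]
    rw [this]
    exact MeasurableSet.iInter fun z => measurableSet_lt (hm.comp (H.mp z).measurable) measurable_const
  have hBi : ∀ z, τ z ⁻¹' B = B := by
    intro z
    ext ω
    simp only [hB, Set.mem_preimage, Set.mem_setOf_eq]
    constructor
    · intro h1 y
      have h2 := h1 (y - z)
      have h3 : τ (y - z) (τ z ω) = τ y ω := by
        have := congrFun (H.τadd (y - z) z) ω
        rw [sub_add_cancel] at this
        exact this.symm
      rwa [h3] at h2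
    · intro h1 y
      have h2 := h1 (y + z)
      rwa [H.τadd] at h2
  have hBe : ∀ᵐ ω ∂P, ω ∈ B ↔ h ω < 0 := by
    filter_upwards [hall] with ω hω
    simp only [hB, Set.mem_setOf_eq, hω]
    exact ⟨fun h => h 0, fun h _ => h⟩
  rcases H.erg B hBm hBi with hz | ho
  · have h1 : ∀ᵐ ω ∂P, 0 ≤ h ω := by
      have : ∀ᵐ ω ∂P, ω ∉ B := measure_eq_zero_iff_ae_notMem.1 hz
      filter_upwards [this, hBe] with ω h2 h3
      rw [h3] at h2; linarith
    exact (integral_eq_zero_iff_of_nonneg_ae h1 hi).1 h0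
  · have h1 : ∀ᵐ ω ∂P, h ω < 0 := by
      have : ∀ᵐ ω ∂P, ω ∈ B := (prob_compl_eq_zero_iff hBm).2 ho
      filter_upwards [this, hBe] with ω h2 h3
      exact h3.1 h2
    have h2 : (fun x => - h x) =ᵐ[P] 0 := by
      apply (integral_eq_zero_iff_of_nonneg_ae (f := fun x => - h x) ?_ hi.neg).1
      · rw [integral_neg, h0, neg_zero]
      · filter_upwards [h1] with ω h
        simp only [Pi.zero_apply]; linarith
    filter_upwards [h2] with ω h3
    simp only [Pi.zero_apply] at h3 ⊢; linarith

/-- Nice classes in `L²`. -/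
def NiceLp (P : Measure Ω) (τ : Zd d → Ω → Ω) (k : Lp ℝ 2 P) : Prop :=
  ∃ g : Ω → ℝ, Measurable g ∧ Integrable g P ∧ (∀ᵐ ω ∂P, GoodAt P τ g ω) ∧ k =ᵐ[P] g

lemma nice_dense (H : Hyp P τ E0 p c₁ V lam) (k : Lp ℝ 2 P) (η : ℝ) (hη : 0 < η) :
    ∃ k' : Lp ℝ 2 P, NiceLp P τ k' ∧ ‖k - k'‖ < η := by
  have := H.prob
  let K : Submodule ℝ (Lp ℝ 2 P) :=
    { carrier := {k | NiceLp P τ k}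
      add_mem' := by
        rintro a b ⟨f, hf1, hf2, hf3, hf4⟩ ⟨g, hg1, hg2, hg3, hg4⟩
        refine ⟨fun x => f x + g x, hf1.add hg1, hf2.add hg2, ?_, ?_⟩
        · filter_upwards [hf3, hg3] with ω h1 h2
          exact good_add h1 h2 hf2 hg2
        · filter_upwards [Lp.coeFn_add a b, hf4, hg4] with ω h1 h2 h3
          rw [h1, Pi.add_apply, h2, h3]
      zero_mem' := by
        refine ⟨fun _ => 0, measurable_const, integrable_const _, Eventually.of_forall (good_const H 0), ?_⟩
        exact Lp.coeFn_zero _ _ _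
      smul_mem' := by
        rintro c a ⟨f, hf1, hf2, hf3, hf4⟩
        refine ⟨fun x => c * f x, hf1.const_mul c, hf2.const_mul c, ?_, ?_⟩
        · filter_upwards [hf3] with ω h1
          exact good_smul c h1
        · filter_upwards [Lp.coeFn_smul c a, hf4] with ω h1 h2
          rw [h1, Pi.smul_apply, h2, smul_eq_mul] }
  have hK : Kᗮ = ⊥ := by
    rw [Submodule.eq_bot_iff]
    intro h hh
    rw [Submodule.mem_orthogonal] at hh
    have hm : Measurable (h : Ω → ℝ) := (Lp.stronglyMeasurable h).measurable
    have hi : Integrable (h : Ω → ℝ) P := (Lp.memLp h).integrable (by norm_num)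
    have h0 : ∫ x, h x ∂P = 0 := by
      have h1 := hh (indicatorConstLp 2 MeasurableSet.univ (measure_ne_top P _) (1 : ℝ)) (by
        refine ⟨fun _ => 1, measurable_const, integrable_const _, Eventually.of_forall (good_const H 1), ?_⟩
        filter_upwards [indicatorConstLp_coeFn (p := 2) (hs := MeasurableSet.univ) (hμs := measure_ne_top P _) (c := (1 : ℝ))] with ω h1
        rw [h1]; simp)
      rw [L2.inner_indicatorConstLp_one] at h1
      simpa using h1
    have hS : ∀ e : Zd d, ∀ S, MeasurableSet S → ∫ x in S, h x ∂P = ∫ x in τ e ⁻¹' S, h x ∂P := by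
      intro e S hSm
      have hSm' : MeasurableSet (τ e ⁻¹' S) := (H.mp e).measurable hSm
      have h1 := hh (indicatorConstLp 2 hSm (measure_ne_top P _) (1 : ℝ) -
          indicatorConstLp 2 hSm' (measure_ne_top P _) (1 : ℝ)) (by
        have hgi : Integrable (S.indicator (fun _ => (1 : ℝ))) P := (integrable_const _).indicator hSm
        refine ⟨fun x => S.indicator (fun _ => (1 : ℝ)) x - S.indicator (fun _ => (1 : ℝ)) (τ e x),
          ?_, ?_, Eventually.of_forall (good_cobdry H _ hgi 1 ?_ e), ?_⟩
        · exact (measurable_const.indicator hSm).sub ((measurable_const.indicator hSm).comp (H.mp e).measurable)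
        · exact hgi.sub (comp_integrable H hgi e)
        · intro x
          simp only [Set.indicator_apply]
          split_ifs <;> simp
        · filter_upwards [Lp.coeFn_sub (indicatorConstLp 2 hSm (measure_ne_top P _) (1 : ℝ))
            (indicatorConstLp 2 hSm' (measure_ne_top P _) (1 : ℝ)),
            indicatorConstLp_coeFn (p := 2) (hs := hSm) (hμs := measure_ne_top P _) (c := (1 : ℝ)),
            indicatorConstLp_coeFn (p := 2) (hs := hSm') (hμs := measure_ne_top P _) (c := (1 : ℝ))] with ω h1 h2 h3
          rw [h1, Pi.sub_apply, h2, h3]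
          rfl)
      rw [inner_sub_left, L2.inner_indicatorConstLp_one, L2.inner_indicatorConstLp_one] at h1
      linarith
    have := inv_ae_zero H h hm hi h0 hS
    exact (Lp.eq_zero_iff_ae_eq_zero).2 this
  have h1 : K.topologicalClosure = ⊤ := Submodule.topologicalClosure_eq_top_iff.2 hK
  have h2 : k ∈ closure (K : Set (Lp ℝ 2 P)) := by
    have : k ∈ K.topologicalClosure := by rw [h1]; trivial
    exact this
  obtain ⟨k', hk', hd⟩ := Metric.mem_closure_iff.1 h2 η hη
  exact ⟨k', hk', by rwa [dist_eq_norm] at hd⟩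

/-- The multi-parameter ergodic theorem. -/
lemma ergodic (H : Hyp P τ E0 p c₁ V lam) (f : Ω → ℝ) (hfm : Measurable f) (hf : Integrable f P) :
    ∀ᵐ ω ∂P, GoodAt P τ f ω := by
  have := H.prob
  apply good_closure H f hfm hf
  intro η hη
  obtain ⟨s, hs, -⟩ := (memLp_one_iff_integrable.2 hf).exists_simpleFunc_eLpNorm_sub_lt
    ENNReal.one_ne_top (ε := ENNReal.ofReal (η / 2)) (by simpa using hη)
  have hs2 : MemLp s 2 P := SimpleFunc.memLp_of_isFiniteMeasure s _ _
  obtain ⟨k, ⟨g, hg1, hg2, hg3, hg4⟩, hk⟩ := nice_dense H (hs2.toLp s) (η / 2) (by positivity)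
  refine ⟨g, hg1, hg2, hg3, ?_⟩
  have hsi : Integrable s P := SimpleFunc.integrable_of_isFiniteMeasure s
  have key : ∀ (q : Ω → ℝ), Integrable q P → eLpNorm q 1 P ≤ ENNReal.ofReal (η / 2) → ∫ x, |q x| ∂P ≤ η / 2 := by
    intro q hq h
    rw [eLpNorm_one_eq_lintegral_enorm] at h
    have h1 := integral_norm_eq_lintegral_enorm hq.aestronglyMeasurable
    simp only [Real.norm_eq_abs] at h1
    rw [h1]
    exact ENNReal.toReal_le_of_le_ofReal (by positivity) h
  have h1 : ∫ x, |f x - s x| ∂P ≤ η / 2 := key _ (hf.sub hsi) hs.le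
  have h2 : ∫ x, |s x - g x| ∂P ≤ η / 2 := by
    apply key _ (hsi.sub hg2)
    have h3 : eLpNorm (fun x => s x - g x) 2 P = ENNReal.ofReal ‖hs2.toLp s - k‖ := by
      rw [Lp.norm_def, ENNReal.ofReal_toReal (Lp.eLpNorm_ne_top _)]
      apply eLpNorm_congr_ae
      filter_upwards [Lp.coeFn_sub (hs2.toLp s) k, hg4, hs2.coeFn_toLp] with ω h1 h2 h3
      rw [h1, Pi.sub_apply, h2, h3]
    refine (eLpNorm_le_eLpNorm_of_exponent_le (q := 2) (by norm_num) 
      (hsi.sub hg2).aestronglyMeasurable).trans ?_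
    refine h3.le.trans (ENNReal.ofReal_le_ofReal hk.le)
  calc ∫ x, |f x - g x| ∂P ≤ ∫ x, (|f x - s x| + |s x - g x|) ∂P := by
        apply integral_mono (hf.sub hg2).abs ((hf.sub hsi).abs.add (hsi.sub hg2).abs)
        intro x
        exact abs_sub_le _ _ _
    _ = _ := integral_add (hf.sub hsi).abs (hsi.sub hg2).abs
    _ ≤ η := by linarith

end

section
variable {P : Measure Ω} {τ : Zd d → Ω → Ω} {E0 : Finset (Zd d)} {p c₁ : ℝ}
    {V : Zd d → Ω → Rn n → ℝ} {lam : Zd d → Ω → ℝ}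

lemma sum_bl_shift (H : Hyp P τ E0 p c₁ V lam) (f : Ω → ℝ) (ω : Ω) (z : Zd d) (T : ℕ) :
    ∑ y ∈ bl 0 T, f (τ y (τ z ω)) = ∑ y ∈ bl z T, f (τ y ω) := by
  refine Finset.sum_bij' (fun y _ => y + z) (fun y _ => y - z) ?_ ?_ ?_ ?_ ?_
  · intro y hy
    rw [mem_bl] at hy ⊢
    intro i; simpa using hy i
  · intro y hy
    rw [mem_bl] at hy ⊢
    intro i; simpa using hy i
  · intro y _; simp
  · intro y _; simp
  · intro y _
    rw [H.τadd]; rfl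

lemma sum_union_le' {ι : Type*} [DecidableEq ι] (A B : Finset ι) (f : ι → ℝ) (hf : ∀ i, 0 ≤ f i) :
    ∑ i ∈ A ∪ B, f i ≤ ∑ i ∈ A, f i + ∑ i ∈ B, f i := by
  rw [← Finset.sum_union_inter]
  linarith [Finset.sum_nonneg (s := A ∩ B) fun i _ => hf i]

lemma sum_biUnion_le' {ι κ : Type*} [DecidableEq ι] (s : Finset κ) (A : κ → Finset ι) (f : ι → ℝ) (hf : ∀ i, 0 ≤ f i) :
    ∑ i ∈ s.biUnion A, f i ≤ ∑ z ∈ s, ∑ i ∈ A z, f i := by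
  induction s using Finset.induction_on with
  | empty => simp
  | insert a s ha ih =>
    rw [Finset.biUnion_insert, Finset.sum_insert ha]
    exact (sum_union_le' _ _ f hf).trans (by linarith)

lemma bl_mono (z : Zd d) {T T' : ℕ} (h : T ≤ T') : bl z T ⊆ bl z T' := by
  intro y hy
  rw [mem_bl] at hy ⊢
  intro i
  have := hy i
  have : (T : ℤ) ≤ T' := by exact_mod_cast h
  linarith

lemma mF_qb_int (H : Hyp P τ E0 p c₁ V lam) (F : Rd d →L[ℝ] Rn n) (N : ℕ) :
    W0 P τ E0 V F * (2 * (N : ℝ) + 1) ^ d ≤ ∫ ω, mF τ E0 V ω F (qb 0 N) ∂P := by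
  have h1 : ∀ ω, mF τ E0 V ω F (qb 0 N) = mF τ E0 V (τ (fun _ => -(N : ℤ)) ω) F (cube d (2 * N + 1)) := by
    intro ω
    apply mF_shift H
    intro x
    simp only [qb, intBox, cube, Set.mem_setOf_eq, PiLp.sub_apply, toRd_apply]
    apply forall_congr'
    intro i
    push_cast
    constructor <;> rintro ⟨h1, h2⟩ <;> constructor <;> simp at * <;> linarith
  simp only [h1]
  rw [comp_integral H (f := fun ω => mF τ E0 V ω F (cube d (2 * N + 1))) 
    (mF_measurable H F (cube_bdd _)).aestronglyMeasurable]
  have h2 := W0_le H F (k := 2 * N + 1) (by omega)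
  push_cast at h2
  exact h2

/-- Error functional in the subadditive ergodic theorem. -/
def XT (τ : Zd d → Ω → Ω) (E0 : Finset (Zd d)) (V : Zd d → Ω → Rn n → ℝ) (F : Rd d →L[ℝ] Rn n)
    (k T : ℕ) (ω : Ω) : ℝ :=
  ∑ z ∈ bl 0 T, hk τ E0 V F k (τ z ω) - mF τ E0 V ω F (qb 0 T) -
    (∑ z ∈ bl 0 (T + k), aff E0 V F (τ z ω) - ∑ z ∈ bl 0 T, aff E0 V F (τ z ω))

lemma XT_measurable (H : Hyp P τ E0 p c₁ V lam) (F : Rd d →L[ℝ] Rn n) (k T : ℕ) :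
    Measurable (XT τ E0 V F k T) := by
  have h1 : ∀ N, Measurable fun ω => ∑ z ∈ bl (0 : Zd d) N, aff E0 V F (τ z ω) := fun N =>
    Finset.measurable_sum _ fun z _ => (aff_measurable H F).comp (H.mp z).measurable
  have h2 : Measurable fun ω => ∑ z ∈ bl (0 : Zd d) T, hk τ E0 V F k (τ z ω) :=
    Finset.measurable_sum _ fun z _ => (hk_measurable H F k).comp (H.mp z).measurable
  exact (h2.sub (mF_measurable H F (qb_bdd 0 T))).sub ((h1 _).sub (h1 _))

lemma XT_prob (H : Hyp P τ E0 p c₁ V lam) (F : Rd d →L[ℝ] Rn n) {k : ℕ} (hk0 : 0 < k) (δ : ℝ)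
    (hδ : 0 < δ) (T0 : ℕ) :
    P.real {ω | ∃ T, 0 ≤ T ∧ T ≤ T0 ∧ δ * (2 * (T : ℝ) + 1) ^ d < XT τ E0 V F k T ω}
      ≤ 5 ^ d / δ * (∫ ω, hk τ E0 V F k ω ∂P - W0 P τ E0 V F) := by
  have := H.prob
  set bd : ℕ → Finset (Zd d) := fun N => (bl 0 N).filter fun z => ¬ bl z k ⊆ bl 0 N with hbd
  set S : ℕ → Ω → ℝ := fun N ω => ∑ z ∈ bl 0 N, hk τ E0 V F k (τ z ω) - mF τ E0 V ω F (qb 0 N) +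
    ∑ z ∈ bd N, aff E0 V F (τ z ω) with hS
  have hhi := fun z => comp_integrable H (hk_integrable H F k) z
  have hai := fun z => comp_integrable H (aff_integrable H F) z
  refine vitali_trans H _ (XT_measurable H F k) S ?_ 0 T0 _ δ hδ ?_ ?_
  · intro N
    exact ((integrable_finset_sum _ fun z _ => hhi z).sub (mF_integrable H F (qb_bdd 0 N))).add
      (integrable_finset_sum _ fun z _ => hai z)
  · intro ω N s r _ hsub hdisj
    set rest := (bl 0 N).filter fun z => ∀ i ∈ s, toRd z ∉ qb i (r i) with hrest
    have ht := mF_tiling H ω F N s (fun z => qb z (r z)) ?_ ?_ hk0 rest ?_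
    rotate_left
    · intro z hz x hx
      have h1 := hsub z hz
      have hlo : (fun i => z i - (r z : ℤ)) ∈ bl z (r z) := by
        rw [mem_bl]; intro i; simp
      have hhi : (fun i => z i + (r z : ℤ)) ∈ bl z (r z) := by
        rw [mem_bl]; intro i; simp
      have h2 := mem_bl.1 (h1 hlo)
      have h3 := mem_bl.1 (h1 hhi)
      intro i
      have h4 := hx i
      have h5 := (abs_le.1 (h2 i)).1
      have h6 := (abs_le.1 (h3 i)).2
      simp only [Pi.zero_apply] at h5 h6 h4 ⊢
      constructor
      · refine le_trans ?_ h4.1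
        have : (0 : ℤ) - N ≤ z i - r z := by linarith
        exact_mod_cast this
      · refine lt_of_lt_of_le h4.2 ?_
        have : z i + r z + 1 ≤ (0 : ℤ) + N + 1 := by linarith
        exact_mod_cast this
    · intro i hi j hj hne z hz hz'
      rw [toRd_mem_qb] at hz hz'
      exact Finset.disjoint_left.1 (hdisj i hi j hj hne) hz hz'
    · intro z
      rw [hrest, Finset.mem_filter]
    set U := s.biUnion fun z => bl z (r z) with hU
    have hUdisj : (s : Set (Zd d)).PairwiseDisjoint (fun z => bl z (r z)) :=
      fun z hz z' hz' hne => hdisj z hz z' hz' hne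
    have hUsub : U ⊆ bl 0 N := by
      intro y hy
      obtain ⟨z, hz, hy⟩ := Finset.mem_biUnion.1 hy
      exact hsub z hz hy
    have hrest' : rest = bl 0 N \ U := by
      ext y
      rw [hrest, Finset.mem_filter, Finset.mem_sdiff, hU, Finset.mem_biUnion]
      simp only [toRd_mem_qb]
      push Not
      rfl
    have e1 : ∑ z ∈ s, ∑ y ∈ bl z (r z), hk τ E0 V F k (τ y ω) + ∑ z ∈ rest, hk τ E0 V F k (τ z ω)
        = ∑ z ∈ bl 0 N, hk τ E0 V F k (τ z ω) := by
      rw [hrest', ← Finset.sum_biUnion hUdisj, add_comm]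
      exact Finset.sum_sdiff hUsub
    have e2 : ∑ z ∈ rest.filter (fun z => ¬ ∀ y ∈ bl z k, y ∈ rest), aff E0 V F (τ z ω) ≤
        ∑ z ∈ bd N, aff E0 V F (τ z ω) + 
        ∑ z ∈ s, ∑ y ∈ bl z (r z + k) \ bl z (r z), aff E0 V F (τ y ω) := by
      have h1 : rest.filter (fun z => ¬ ∀ y ∈ bl z k, y ∈ rest) ⊆ 
          bd N ∪ s.biUnion fun z => bl z (r z + k) \ bl z (r z) := by
        intro z hz
        rw [Finset.mem_filter] at hz
        obtain ⟨hz1, hz2⟩ := hz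
        rw [hrest', Finset.mem_sdiff] at hz1
        push Not at hz2
        obtain ⟨y, hy, hyr⟩ := hz2
        rw [Finset.mem_union]
        by_cases hyN : y ∈ bl 0 N
        · right
          have hyU : y ∈ U := by
            by_contra h
            exact hyr (by rw [hrest', Finset.mem_sdiff]; exact ⟨hyN, h⟩)
          obtain ⟨w, hw, hyw⟩ := Finset.mem_biUnion.1 hyU
          rw [Finset.mem_biUnion]
          refine ⟨w, hw, ?_⟩
          rw [Finset.mem_sdiff]
          constructor
          · rw [mem_bl] at hy hyw ⊢
            intro i
            have h3 := abs_le.1 (hy i)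
            have h4 := abs_le.1 (hyw i)
            rw [abs_le]; push_cast
            constructor <;> linarith
          · intro h
            exact hz1.2 (Finset.mem_biUnion.2 ⟨w, hw, h⟩)
        · left
          rw [hbd, Finset.mem_filter]
          exact ⟨hz1.1, fun h => hyN (h hy)⟩
      have hn : ∀ z, 0 ≤ aff E0 V F (τ z ω) := fun z => aff_nonneg H F _
      refine (Finset.sum_le_sum_of_subset_of_nonneg h1 fun z _ _ => hn z).trans ?_
      refine (sum_union_le' _ _ _ hn).trans ?_
      have := sum_biUnion_le' s (fun z => bl z (r z + k) \ bl z (r z)) _ hn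
      linarith
    have e3 : ∀ z ∈ s, XT τ E0 V F k (r z) (τ z ω) = ∑ y ∈ bl z (r z), hk τ E0 V F k (τ y ω) -
        mF τ E0 V ω F (qb z (r z)) - ∑ y ∈ bl z (r z + k) \ bl z (r z), aff E0 V F (τ y ω) := by
      intro z _
      rw [XT, sum_bl_shift H, sum_bl_shift H, sum_bl_shift H, ← mF_qb H,
        Finset.sum_sdiff_eq_sub (bl_mono z (by omega))]
    rw [Finset.sum_congr rfl e3, Finset.sum_sub_distrib, Finset.sum_sub_distrib]
    simp only [hS]
    linarith
  · intro η hη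
    set a := ∫ ω, aff E0 V F ω ∂P with ha
    have ha0 : 0 ≤ a := integral_nonneg fun ω => aff_nonneg H F ω
    have hlim : Tendsto (fun N : ℕ => (1 - (1 - (2 * (k : ℝ)) / (2 * (N : ℝ) + 1)) ^ d) * a) atTop (𝓝 ((1 - (1 - 0) ^ d) * a)) := by
      refine Tendsto.mul_const _ (tendsto_const_nhds.sub (Tendsto.pow (tendsto_const_nhds.sub (Tendsto.const_div_atTop ?_ _)) d))
      exact tendsto_atTop_add_const_right _ _
        (tendsto_natCast_atTop_atTop.const_mul_atTop (by norm_num))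
    simp only [sub_zero, one_pow, sub_self, zero_mul] at hlim
    filter_upwards [hlim.eventually_lt_const hη, eventually_ge_atTop k] with N hN hNk
    simp only [hS]
    have hI1 : Integrable (fun ω => ∑ z ∈ bl 0 N, hk τ E0 V F k (τ z ω) - mF τ E0 V ω F (qb 0 N)) P :=
      (integrable_finset_sum _ fun z _ => hhi z).sub (mF_integrable H F (qb_bdd 0 N))
    rw [integral_add hI1
      (integrable_finset_sum _ fun z _ => hai z), integral_sub (integrable_finset_sum _ fun z _ => hhi z)
      (mF_integrable H F (qb_bdd 0 N)), integral_finset_sum _ fun z _ => hhi z,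
      integral_finset_sum _ fun z _ => hai z]
    simp only [comp_integral H (hk_integrable H F k).aestronglyMeasurable, 
      comp_integral H (aff_integrable H F).aestronglyMeasurable]
    rw [Finset.sum_const, Finset.sum_const, nsmul_eq_mul, nsmul_eq_mul, card_bl, ← ha]
    have h1 := mF_qb_int H F N
    have h2 : ((bd N).card : ℝ) ≤ (2 * (N : ℝ) + 1) ^ d - (2 * ((N - k : ℕ) : ℝ) + 1) ^ d := by
      rw [← card_bl (0 : Zd d) N, ← card_bl (0 : Zd d) (N - k)]
      have h3 : bd N ⊆ bl 0 N \ bl 0 (N - k) := by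
        intro z hz
        rw [hbd, Finset.mem_filter] at hz
        rw [Finset.mem_sdiff]
        refine ⟨hz.1, fun h => hz.2 ?_⟩
        intro y hy
        rw [mem_bl] at h hy ⊢
        intro i
        have h3 := abs_le.1 (hy i)
        have h4 := abs_le.1 (h i)
        rw [Nat.cast_sub hNk] at h4
        rw [abs_le]; 
        constructor <;> linarith
      have h4 := Finset.card_le_card h3
      rw [Finset.card_sdiff_of_subset (bl_mono 0 (by omega))] at h4
      have h5 := Finset.card_le_card (bl_mono (0 : Zd d) (T := N - k) (T' := N) (by omega))
      have : ((bd N).card : ℝ) ≤ ((bl (0 : Zd d) N).card - (bl (0 : Zd d) (N - k)).card : ℕ) := by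
        exact_mod_cast h4
      rwa [Nat.cast_sub h5] at this
    have h3 : (0 : ℝ) < 2 * (N : ℝ) + 1 := by positivity
    have h4 : ((2 * (N : ℝ) + 1) ^ d - (2 * ((N - k : ℕ) : ℝ) + 1) ^ d) = 
      (1 - (1 - (2 * (k : ℝ)) / (2 * (N : ℝ) + 1)) ^ d) * (2 * (N : ℝ) + 1) ^ d := by
      rw [sub_mul, ← mul_pow, Nat.cast_sub hNk, one_mul]
      congr 2
      field_simp
      ring
    have h5 : ((bd N).card : ℝ) * a ≤ η * (2 * (N : ℝ) + 1) ^ d := by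
      calc ((bd N).card : ℝ) * a ≤ _ * a := mul_le_mul_of_nonneg_right (h2.trans h4.le) ha0
        _ = ((1 - (1 - (2 * (k : ℝ)) / (2 * (N : ℝ) + 1)) ^ d) * a) * (2 * (N : ℝ) + 1) ^ d := by ring
        _ ≤ _ := by gcongr
    nlinarith

lemma XT_prob' (H : Hyp P τ E0 p c₁ V lam) (F : Rd d →L[ℝ] Rn n) {k : ℕ} (hk0 : 0 < k) (δ : ℝ)
    (hδ : 0 < δ) :
    P.real {ω | ∃ T : ℕ, δ * (2 * (T : ℝ) + 1) ^ d < XT τ E0 V F k T ω}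
      ≤ 5 ^ d / δ * (∫ ω, hk τ E0 V F k ω ∂P - W0 P τ E0 V F) := by
  have := H.prob
  set G : ℕ → Set Ω := fun T0 => {ω | ∃ T, 0 ≤ T ∧ T ≤ T0 ∧ δ * (2 * (T : ℝ) + 1) ^ d < XT τ E0 V F k T ω} with hG
  have hmono : Monotone G := by
    intro a b hab ω hω
    obtain ⟨T, h1, h2, h3⟩ := hω
    exact ⟨T, h1, h2.trans hab, h3⟩
  have h1 : {ω | ∃ T : ℕ, δ * (2 * (T : ℝ) + 1) ^ d < XT τ E0 V F k T ω} = ⋃ T0, G T0 := by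
    ext ω
    simp only [hG, Set.mem_iUnion, Set.mem_setOf_eq]
    constructor
    · rintro ⟨T, hT⟩; exact ⟨T, T, Nat.zero_le _, le_rfl, hT⟩
    · rintro ⟨T0, T, _, _, hT⟩; exact ⟨T, hT⟩
  rw [h1]
  have h2 := tendsto_measure_iUnion_atTop (μ := P) hmono
  have h3 : Tendsto (fun T0 => P.real (G T0)) atTop (𝓝 (P.real (⋃ T0, G T0))) :=
    (ENNReal.tendsto_toReal (measure_ne_top _ _)).comp h2
  exact le_of_tendsto' h3 (XT_prob H F hk0 δ hδ)

lemma hk_near (H : Hyp P τ E0 p c₁ V lam) (F : Rd d →L[ℝ] Rn n) (η : ℝ) (hη : 0 < η) :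
    ∃ k : ℕ, 0 < k ∧ ∫ ω, hk τ E0 V F k ω ∂P < W0 P τ E0 V F + η := by
  haveI : Nonempty {k : ℕ // 0 < k} := ⟨⟨1, one_pos⟩⟩
  obtain ⟨k, hk⟩ := exists_lt_of_ciInf_lt (lt_add_of_pos_right (W0 P τ E0 V F) hη)
  refine ⟨k, k.2, ?_⟩
  simp only [StochHom.hk]
  rw [integral_const_mul]
  exact hk

lemma W0_le_hk (H : Hyp P τ E0 p c₁ V lam) (F : Rd d →L[ℝ] Rn n) {k : ℕ} (hk0 : 0 < k) :
    W0 P τ E0 V F ≤ ∫ ω, hk τ E0 V F k ω ∂P := by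
  simp only [StochHom.hk]
  rw [integral_const_mul]
  exact ciInf_le (W0_bdd H F) ⟨k, hk0⟩

lemma good_bl {f : Ω → ℝ} {ω : Ω} (hf : GoodAt P τ f ω) :
    Tendsto (fun T : ℕ => (∑ z ∈ bl 0 T, f (τ z ω)) / (2 * (T : ℝ) + 1) ^ d) atTop (𝓝 (∫ x, f x ∂P)) := by
  have h := hf (fun _ => -1) (fun _ => 1) (fun i => by norm_num)
  have h1 : Tendsto (fun T : ℕ => ((T : ℝ) + 1 / 2)⁻¹) atTop (𝓝[>] 0) := by
    rw [tendsto_nhdsWithin_iff]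
    refine ⟨tendsto_inv_atTop_zero.comp (tendsto_atTop_add_const_right _ _ tendsto_natCast_atTop_atTop), 
      Eventually.of_forall fun T => ?_⟩
    rw [Set.mem_Ioi]; positivity
  have h2 := (h.comp h1).const_mul ((2 : ℝ) ^ d)⁻¹
  have h3 : ((2 : ℝ) ^ d)⁻¹ * ((∏ i : Fin d, ((1 : ℝ) - -1)) * ∫ x, f x ∂P) = ∫ x, f x ∂P := by
    norm_num
  rw [h3] at h2
  refine h2.congr fun T => ?_
  simp only [Function.comp, avg]
  have hb : latBox ((T : ℝ) + 1 / 2)⁻¹ (fun _ => (-1 : ℝ)) (fun _ : Fin d => (1 : ℝ)) = bl 0 T := by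
    ext z
    have hpos : (0 : ℝ) < (T : ℝ) + 1 / 2 := by positivity
    rw [mem_latBox (by positivity), mem_bl, openBox, Set.mem_setOf_eq]
    apply forall_congr'
    intro i
    simp only [PiLp.smul_apply, toRd_apply, smul_eq_mul, Pi.zero_apply, sub_zero]
    rw [← abs_lt, abs_mul, abs_of_pos (inv_pos.2 hpos), inv_mul_lt_iff₀ hpos, mul_one]
    constructor
    · intro h
      have h2 : |(z i : ℝ)| < (T : ℝ) + 1 := by linarith
      have h3 : |z i| < (T : ℤ) + 1 := by exact_mod_cast h2
      omega
    · intro h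
      have h2 : |(z i : ℝ)| ≤ T := by exact_mod_cast h
      linarith
  rw [hb, ← mul_assoc, ← inv_pow, ← mul_pow, div_eq_inv_mul _ ((2 * (T : ℝ) + 1) ^ d), ← inv_pow]
  congr 2
  rw [← mul_inv]; congr 1; ring

/-- Lower bound for the large cubes centred at the origin. -/
lemma cube_lower (H : Hyp P τ E0 p c₁ V lam) (F : Rd d →L[ℝ] Rn n) :
    ∀ᵐ ω ∂P, ∀ δ > 0, ∀ᶠ T : ℕ in atTop,
      (2 * (T : ℝ) + 1) ^ d * (W0 P τ E0 V F - δ) ≤ mF τ E0 V ω F (qb 0 T) := by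
  have := H.prob
  have h1 : ∀ᵐ ω ∂P, ∀ k, GoodAt P τ (hk τ E0 V F k) ω := by
    rw [ae_all_iff]
    exact fun k => ergodic H _ (hk_measurable H F k) (hk_integrable H F k)
  have h2 := ergodic H _ (aff_measurable H F) (aff_integrable H F)
  have h3 : ∀ᵐ ω ∂P, ∀ j : ℕ, ∃ k : ℕ, 0 < k ∧ ∀ T : ℕ, 
      XT τ E0 V F k T ω ≤ (1 / ((j : ℝ) + 1)) * (2 * (T : ℝ) + 1) ^ d := by
    rw [ae_all_iff]
    intro j
    have hj : 0 < 1 / ((j : ℝ) + 1) := by positivity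
    rw [ae_iff]
    set Bd := {ω | ¬ ∃ k : ℕ, 0 < k ∧ ∀ T : ℕ, 
      XT τ E0 V F k T ω ≤ (1 / ((j : ℝ) + 1)) * (2 * (T : ℝ) + 1) ^ d} with hBd
    apply (measureReal_eq_zero_iff).1
    refine le_antisymm ?_ measureReal_nonneg
    apply le_of_forall_pos_le_add
    intro η hη
    have hη' : 0 < η * (1 / ((j : ℝ) + 1)) / 5 ^ d := by positivity
    obtain ⟨k, hk0, hk1⟩ := hk_near H F _ hη'
    refine (measureReal_mono ?_).trans ((XT_prob' H F hk0 _ hj).trans ?_)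
    · intro ω hω
      simp only [hBd, Set.mem_setOf_eq] at hω
      push Not at hω
      exact hω k hk0
    · calc 5 ^ d / (1 / ((j : ℝ) + 1)) * (∫ ω, hk τ E0 V F k ω ∂P - W0 P τ E0 V F) 
          ≤ 5 ^ d / (1 / ((j : ℝ) + 1)) * (η * (1 / ((j : ℝ) + 1)) / 5 ^ d) := by
            gcongr; linarith
        _ = 0 + η := by field_simp; ring
  filter_upwards [h1, h2, h3] with ω hω1 hω2 hω3
  intro δ hδ
  obtain ⟨j, hj⟩ := exists_nat_one_div_lt (show (0 : ℝ) < δ / 3 by positivity)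
  obtain ⟨k, hk0, hX⟩ := hω3 j
  have h4 := (good_bl (hω1 k)).eventually_const_lt (show W0 P τ E0 V F - δ / 3 < ∫ ω, hk τ E0 V F k ω ∂P by
    linarith [W0_le_hk H F hk0])
  have h5 := good_bl hω2
  have h6 : Tendsto (fun T : ℕ => (∑ z ∈ bl 0 (T + k), aff E0 V F (τ z ω)) / (2 * (T : ℝ) + 1) ^ d)
      atTop (𝓝 ((∫ x, aff E0 V F x ∂P) * (1 + 0) ^ d)) := by
    have h7 : Tendsto (fun N : ℕ => (1 + (2 * (k : ℝ)) / (2 * (N : ℝ) + 1)) ^ d) atTop (𝓝 ((1 + 0) ^ d)) := by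
      refine (Tendsto.pow (tendsto_const_nhds.add (Tendsto.const_div_atTop ?_ _)) d)
      exact tendsto_atTop_add_const_right _ _
        (tendsto_natCast_atTop_atTop.const_mul_atTop (by norm_num))
    refine ((h5.comp (tendsto_add_atTop_nat k)).mul h7).congr fun T => ?_
    simp only [Function.comp]
    have e1 : (0 : ℝ) < 2 * (T : ℝ) + 1 := by positivity
    have e2 : (0 : ℝ) < 2 * ((T + k : ℕ) : ℝ) + 1 := by positivity
    have e3 : 1 + (2 * (k : ℝ)) / (2 * (T : ℝ) + 1) = (2 * ((T + k : ℕ) : ℝ) + 1) / (2 * (T : ℝ) + 1) := by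
      push_cast; field_simp; ring
    rw [e3, div_pow]
    field_simp
  have h7 := h6.sub h5
  simp only [add_zero, one_pow, mul_one, sub_self] at h7
  filter_upwards [h4, h7.eventually_lt_const (show (0 : ℝ) < δ / 3 by positivity)] with T h8 h9
  have e1 : (0 : ℝ) < (2 * (T : ℝ) + 1) ^ d := by positivity
  rw [← sub_div, div_lt_iff₀ e1] at h9
  rw [lt_div_iff₀ e1] at h8
  have h10 := hX T
  rw [XT] at h10
  have h11 : 1 / ((j : ℝ) + 1) * (2 * (T : ℝ) + 1) ^ d ≤ δ / 3 * (2 * (T : ℝ) + 1) ^ d := by gcongr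
  nlinarith

end

/-- The rescaled open box. -/
def sb (ε : ℝ) (lo hi : Fin d → ℝ) : Set (Rd d) := {x | ε • x ∈ openBox lo hi}

section
variable {P : Measure Ω} {τ : Zd d → Ω → Ω} {E0 : Finset (Zd d)} {p c₁ : ℝ}
    {V : Zd d → Ω → Rn n → ℝ} {lam : Zd d → Ω → ℝ}

lemma good_bl_eps {f : Ω → ℝ} {ω : Ω} (hf : GoodAt P τ f ω) (N : ℝ → ℕ)
    (hN : Tendsto N (𝓝[>] 0) atTop) (K : ℝ)
    (hK : Tendsto (fun ε : ℝ => ε * (2 * (N ε : ℝ) + 1)) (𝓝[>] 0) (𝓝 K)) :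
    Tendsto (fun ε : ℝ => ε ^ d * ∑ z ∈ bl 0 (N ε), f (τ z ω)) (𝓝[>] 0) (𝓝 (K ^ d * ∫ x, f x ∂P)) := by
  refine ((hK.pow d).mul ((good_bl hf).comp hN)).congr fun ε => ?_
  simp only [Function.comp]
  have e1 : (0 : ℝ) < (2 * (N ε : ℝ) + 1) ^ d := by positivity
  rw [mul_pow]
  field_simp

lemma ceil_lim (K : ℝ) (hK : 0 < K) (k : ℕ) :
    Tendsto (fun ε : ℝ => ⌈K / ε⌉₊ - k) (𝓝[>] 0) atTop ∧
    Tendsto (fun ε : ℝ => ε * (2 * ((⌈K / ε⌉₊ - k : ℕ) : ℝ) + 1)) (𝓝[>] 0) (𝓝 (2 * K)) := by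
  have h0 : Tendsto (fun ε : ℝ => K / ε) (𝓝[>] 0) atTop := by
    simp only [div_eq_mul_inv]
    exact tendsto_inv_nhdsGT_zero.const_mul_atTop hK
  have h1 : Tendsto (fun ε : ℝ => ⌈K / ε⌉₊) (𝓝[>] 0) atTop := tendsto_nat_ceil_atTop.comp h0
  have h2 : Tendsto (fun ε : ℝ => ⌈K / ε⌉₊ - k) (𝓝[>] 0) atTop := (tendsto_sub_atTop_nat k).comp h1
  refine ⟨h2, ?_⟩
  have h3 : Tendsto (fun ε : ℝ => ε * (2 * (k : ℝ) + 4)) (𝓝[>] 0) (𝓝 0) := by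
    have h : Tendsto (fun ε : ℝ => ε * (2 * (k : ℝ) + 4)) (𝓝 0) (𝓝 (0 * (2 * (k : ℝ) + 4))) :=
      tendsto_id.mul_const _
    rw [zero_mul] at h
    exact h.mono_left nhdsWithin_le_nhds
  rw [tendsto_iff_norm_sub_tendsto_zero]
  refine squeeze_zero' (Eventually.of_forall fun _ => norm_nonneg _) ?_ h3
  filter_upwards [self_mem_nhdsWithin, h1.eventually_ge_atTop k] with ε hε hk
  have hε : 0 < ε := hε
  rw [Nat.cast_sub hk, Real.norm_eq_abs]
  have h4 := Nat.ceil_lt_add_one (a := K / ε) (by positivity)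
  have h5 := Nat.le_ceil (K / ε)
  have h6 : ε * (2 * ((⌈K / ε⌉₊ : ℝ) - k) + 1) - 2 * K = ε * (2 * ((⌈K / ε⌉₊ : ℝ) - k) + 1 - 2 * (K / ε)) := by
    field_simp
  rw [h6, abs_mul, abs_of_pos hε]
  gcongr
  rw [abs_le]
  have : (0 : ℝ) ≤ k := by positivity
  constructor <;> linarith

lemma sb_bdd (ε : ℝ) (hε : 0 < ε) (lo hi : Fin d → ℝ) : Bornology.IsBounded (sb ε lo hi) := by
  rw [isBounded_iff_forall_norm_le]
  refine ⟨ε⁻¹ * Real.sqrt (∑ i : Fin d, (|(lo i : ℝ)| + |(hi i : ℝ)|) ^ 2), fun x hx => ?_⟩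
  have h0 : ‖x‖ = ε⁻¹ * ‖ε • x‖ := by
    rw [norm_smul, Real.norm_eq_abs, abs_of_pos hε]; field_simp
  rw [h0]
  gcongr
  rw [EuclideanSpace.norm_eq]
  gcongr with i
  rw [Real.norm_eq_abs, abs_le]
  have h1 := hx i
  constructor
  · linarith [neg_abs_le (lo i), abs_nonneg (hi i)]
  · linarith [le_abs_self (hi i), abs_nonneg (lo i)]

lemma box_lower (H : Hyp P τ E0 p c₁ V lam) (F : Rd d →L[ℝ] Rn n) :
    ∀ᵐ ω ∂P, ∀ lo hi : Fin d → ℝ, (∀ i, lo i < hi i) → ∀ δ > 0, ∀ᶠ ε : ℝ in 𝓝[>] 0,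
      (∏ i, (hi i - lo i)) * W0 P τ E0 V F - δ ≤ ε ^ d * mF τ E0 V ω F (sb ε lo hi) := by
  have := H.prob
  have h1 : ∀ᵐ ω ∂P, ∀ k, GoodAt P τ (hk τ E0 V F k) ω := by
    rw [ae_all_iff]
    exact fun k => ergodic H _ (hk_measurable H F k) (hk_integrable H F k)
  have h2 := ergodic H _ (aff_measurable H F) (aff_integrable H F)
  filter_upwards [h1, h2, cube_lower H F] with ω hω1 hω2 hω3
  intro lo hi hlh δ hδ
  obtain ⟨K, hK0, hK⟩ : ∃ K : ℝ, 0 < K ∧ ∀ i, |lo i| ≤ K ∧ |hi i| ≤ K := by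
    refine ⟨∑ i, (|lo i| + |hi i|) + 1, by positivity, fun i => ?_⟩
    have := Finset.single_le_sum (f := fun i => |lo i| + |hi i|)
      (fun i _ => by positivity) (Finset.mem_univ i)
    constructor <;> linarith [abs_nonneg (lo i), abs_nonneg (hi i)]
  set v := ∏ i, (hi i - lo i) with hv
  set w := W0 P τ E0 V F with hw
  set Q := (2 * K) ^ d with hQ
  have hQ0 : 0 < Q := by positivity
  set a := ∫ x, aff E0 V F x ∂P with ha
  obtain ⟨k, hk0, hkn⟩ := hk_near H F (δ / (4 * (|Q - v| + 1))) (by positivity)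
  have hkw := W0_le_hk H F hk0
  set h := ∫ x, hk τ E0 V F k x ∂P with hh
  rw [← hw] at hkn hkw
  -- choice of σ
  obtain ⟨σ, hσ0, hσ⟩ : ∃ σ : ℝ, 0 < σ ∧ ((∏ i, ((hi i + σ) - (lo i - σ))) - v) * a < δ / 4 := by
    have hc : Continuous fun σ : ℝ => ((∏ i, ((hi i + σ) - (lo i - σ))) - v) * a := by fun_prop
    have h0 := hc.tendsto 0
    simp only [add_zero, sub_zero, ← hv, sub_self, zero_mul] at h0
    have h3 := (h0.mono_left (nhdsWithin_le_nhds (s := Set.Ioi 0))).eventually_lt_const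
      (show (0 : ℝ) < δ / 4 by positivity)
    obtain ⟨σ, h4, h5⟩ := (h3.and self_mem_nhdsWithin).exists
    exact ⟨σ, h5, h4⟩
  set v' := ∏ i, ((hi i + σ) - (lo i - σ)) with hv'
  have hlh' : ∀ i, lo i - σ < hi i + σ := fun i => by linarith [hlh i]
  set δ' := δ / (4 * Q) with hδ'
  have hδ'0 : 0 < δ' := by positivity
  set T : ℝ → ℕ := fun ε => ⌈K / ε⌉₊ with hT
  obtain ⟨hT1, hT2⟩ := ceil_lim K hK0 0
  simp only [Nat.sub_zero] at hT1 hT2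
  obtain ⟨hT1', hT2'⟩ := ceil_lim K hK0 k
  -- limits
  have l1 := good_bl_eps (hω1 k) T hT1 _ hT2
  have l2 := hω1 k lo hi hlh
  have l3 := good_bl_eps hω2 T hT1 _ hT2
  have l4 := good_bl_eps hω2 _ hT1' _ hT2'
  have l5 := hω2 lo hi hlh
  have l6 := hω2 _ _ hlh'
  have l7 := (hT2.pow d).mul_const (w - δ')
  have L := ((l7.sub (l1.sub l2)).sub (l3.sub l4)).sub (l6.sub l5)
  have hL : v * w - δ < ((2 * K) ^ d * (w - δ') - ((2 * K) ^ d * h - v * h) - ((2 * K) ^ d * a - (2 * K) ^ d * a)) - (v' * a - v * a) := by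
    rw [← hQ]
    have e1 : Q * δ' = δ / 4 := by rw [hδ']; field_simp
    have e2 : (Q - v) * (h - w) ≤ δ / 4 := by
      calc (Q - v) * (h - w) ≤ |Q - v| * (δ / (4 * (|Q - v| + 1))) := by
            gcongr
            · exact le_abs_self _
            · linarith
        _ ≤ (|Q - v| + 1) * (δ / (4 * (|Q - v| + 1))) := by gcongr; linarith
        _ = δ / 4 := by field_simp
    nlinarith
  have hε1 : ∀ᶠ ε : ℝ in 𝓝[>] 0, ε * k < σ := by
    have h : Tendsto (fun ε : ℝ => ε * (k : ℝ)) (𝓝 0) (𝓝 (0 * k)) := tendsto_id.mul_const _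
    rw [zero_mul] at h
    exact (h.mono_left nhdsWithin_le_nhds).eventually_lt_const hσ0
  filter_upwards [L.eventually_const_lt hL, hT1.eventually (hω3 δ' hδ'0), hε1, self_mem_nhdsWithin,
    hT1.eventually_ge_atTop k] with ε h3 h4 h5 hε hkT
  have hε : 0 < ε := hε
  change k ≤ T ε at hkT
  have hcoord : ∀ x ∈ sb ε lo hi, ∀ i, |x i| < K / ε := by
    intro x hx i
    have h6 := hx i
    simp only [PiLp.smul_apply, smul_eq_mul] at h6
    have h7 := hK i
    have h8 := abs_le.1 h7.1
    have h9 := abs_le.1 h7.2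
    rw [lt_div_iff₀ hε, ← abs_of_pos hε, ← abs_mul, abs_lt]
    constructor <;> nlinarith
  have hsub : sb ε lo hi ⊆ qb 0 (T ε) := by
    intro x hx i
    have h6 := abs_lt.1 (hcoord x hx i)
    have h7 : K / ε ≤ (T ε : ℝ) := Nat.le_ceil _
    push_cast
    simp only [Pi.zero_apply]
    push_cast
    constructor <;> linarith
  set rest := bl 0 (T ε) \ latBox ε lo hi with hrest
  have hlatsub : latBox ε lo hi ⊆ bl 0 (T ε) := by
    intro z hz
    rw [mem_latBox hε] at hz
    exact toRd_mem_qb.1 (hsub hz)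
  have ht := mF_tiling H ω F (T ε) ({()} : Finset Unit) (fun _ => sb ε lo hi) (fun _ _ => hsub)
    (fun i _ j _ hne => absurd rfl hne) hk0 rest (by
      intro z
      rw [hrest, Finset.mem_sdiff, mem_latBox hε]
      simp [sb])
  simp only [Finset.sum_singleton] at ht
  have hn : ∀ z, 0 ≤ aff E0 V F (τ z ω) := fun z => aff_nonneg H F _
  have hsub2 : rest.filter (fun z => ¬ ∀ y ∈ bl z k, y ∈ rest) ⊆
      (bl 0 (T ε) \ bl 0 (T ε - k)) ∪ (latBox ε (fun i => lo i - σ) (fun i => hi i + σ) \ latBox ε lo hi) := by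
    intro z hz
    rw [Finset.mem_filter, hrest, Finset.mem_sdiff] at hz
    obtain ⟨⟨hz1, hz2⟩, hz3⟩ := hz
    push Not at hz3
    obtain ⟨y, hy, hyr⟩ := hz3
    rw [Finset.mem_sdiff, not_and_not_right] at hyr
    rw [Finset.mem_union, Finset.mem_sdiff, Finset.mem_sdiff]
    by_cases hyT : y ∈ bl 0 (T ε)
    · right
      refine ⟨?_, hz2⟩
      have hy2 := hyr hyT
      rw [mem_latBox hε] at hy2 ⊢
      intro i
      have h6 := hy2 i
      rw [mem_bl] at hy
      have h7 : |(y i : ℝ) - z i| ≤ k := by exact_mod_cast hy i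
      simp only [PiLp.smul_apply, toRd_apply, smul_eq_mul] at h6 ⊢
      have h8 := abs_le.1 h7
      have h9 := mul_le_mul_of_nonneg_left h8.1 hε.le
      have h10 := mul_le_mul_of_nonneg_left h8.2 hε.le
      constructor <;> linarith
    · left
      refine ⟨hz1, fun h => hyT ?_⟩
      rw [mem_bl] at h hy ⊢
      intro i
      have h6 := abs_le.1 (h i)
      have h7 := abs_le.1 (hy i)
      rw [Nat.cast_sub hkT] at h6
      rw [abs_le]
      constructor <;> linarith
  have hlatsub2 : latBox ε lo hi ⊆ latBox ε (fun i => lo i - σ) (fun i => hi i + σ) := by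
    intro z hz
    rw [mem_latBox hε] at hz ⊢
    intro i
    have := hz i
    constructor <;> linarith
  have e1 : ∑ z ∈ rest.filter (fun z => ¬ ∀ y ∈ bl z k, y ∈ rest), aff E0 V F (τ z ω) ≤
      (∑ z ∈ bl 0 (T ε), aff E0 V F (τ z ω) - ∑ z ∈ bl 0 (T ε - k), aff E0 V F (τ z ω)) +
      (∑ z ∈ latBox ε (fun i => lo i - σ) (fun i => hi i + σ), aff E0 V F (τ z ω) 
        - ∑ z ∈ latBox ε lo hi, aff E0 V F (τ z ω)) := by
    rw [← Finset.sum_sdiff_eq_sub hlatsub2, ← Finset.sum_sdiff_eq_sub (bl_mono 0 (by omega))]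
    exact (Finset.sum_le_sum_of_subset_of_nonneg hsub2 fun z _ _ => hn z).trans (sum_union_le' _ _ _ hn)
  have e2 : ∑ z ∈ rest, hk τ E0 V F k (τ z ω) = ∑ z ∈ bl 0 (T ε), hk τ E0 V F k (τ z ω) -
      ∑ z ∈ latBox ε lo hi, hk τ E0 V F k (τ z ω) := Finset.sum_sdiff_eq_sub hlatsub
  have e3 := mul_le_mul_of_nonneg_left (h4.trans (ht.trans (add_le_add (add_le_add le_rfl e2.le) e1)))
    (pow_pos hε d).le
  simp only [avg] at h3
  simp only [mul_pow] at h3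
  simp only [hT] at e3
  nlinarith

end

/-- Scalar cut-off factor. -/
def kcut (s : ℝ) : ℝ := max 0 (min 1 s)

lemma kcut_nonneg (s : ℝ) : 0 ≤ kcut s := le_max_left _ _
lemma kcut_le_one (s : ℝ) : kcut s ≤ 1 := by
  unfold kcut; exact max_le (by norm_num) (min_le_left _ _)
lemma kcut_of_ge {s : ℝ} (h : 1 ≤ s) : kcut s = 1 := by
  unfold kcut; rw [min_eq_left h]; norm_num
lemma kcut_of_le {s : ℝ} (h : s ≤ 0) : kcut s = 0 := by
  unfold kcut; exact max_eq_left ((min_le_right _ _).trans h)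
lemma kcut_lip (s s' : ℝ) : |kcut s - kcut s'| ≤ |s - s'| := by
  unfold kcut
  calc |max 0 (min 1 s) - max 0 (min 1 s')| ≤ |min 1 s - min 1 s'| := by
        simpa using abs_max_sub_max_le_max 0 (min 1 s) 0 (min 1 s')
    _ ≤ |s - s'| := by simpa using abs_min_sub_min_le_max 1 s 1 s'

/-- Vectorial truncation at level `t`. -/
def tr (t : ℝ) (y : Rn n) : Rn n := kcut (2 - ‖y‖ / t) • y

lemma tr_small {t : ℝ} (ht : 0 < t) {y : Rn n} (h : ‖y‖ ≤ t) : tr t y = y := by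
  unfold tr
  rw [kcut_of_ge, one_smul]
  have : ‖y‖ / t ≤ 1 := by rw [div_le_one ht]; exact h
  linarith

lemma tr_large {t : ℝ} (ht : 0 < t) {y : Rn n} (h : 2 * t ≤ ‖y‖) : tr t y = 0 := by
  unfold tr
  rw [kcut_of_le, zero_smul]
  have : 2 ≤ ‖y‖ / t := by rw [le_div_iff₀ ht]; exact h
  linarith

lemma tr_norm_le (t : ℝ) (y : Rn n) : ‖tr t y‖ ≤ ‖y‖ := by
  unfold tr
  rw [norm_smul, Real.norm_eq_abs, abs_of_nonneg (kcut_nonneg _)]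
  exact mul_le_of_le_one_left (norm_nonneg _) (kcut_le_one _)

lemma tr_norm {t : ℝ} (ht : 0 < t) (y : Rn n) : ‖tr t y‖ ≤ 2 * t := by
  by_cases h : 2 * t ≤ ‖y‖
  · rw [tr_large ht h, norm_zero]; positivity
  · exact (tr_norm_le t y).trans (le_of_not_ge h)

lemma tr_lip_aux {t : ℝ} (ht : 0 < t) (s l : Rn n) (h : ‖s‖ ≤ ‖l‖) :
    ‖tr t l - tr t s‖ ≤ 3 * ‖l - s‖ := by
  by_cases h2 : 2 * t ≤ ‖s‖
  · rw [tr_large ht h2, tr_large ht (h2.trans h)]; simp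
  push Not at h2
  have h3 : tr t l - tr t s = kcut (2 - ‖l‖ / t) • (l - s)
      + (kcut (2 - ‖l‖ / t) - kcut (2 - ‖s‖ / t)) • s := by
    unfold tr
    rw [smul_sub, sub_smul]; abel
  have h4 : |kcut (2 - ‖l‖ / t) - kcut (2 - ‖s‖ / t)| ≤ ‖l - s‖ / t := by
    refine (kcut_lip _ _).trans ?_
    have : 2 - ‖l‖ / t - (2 - ‖s‖ / t) = (‖s‖ - ‖l‖) / t := by ring
    rw [this, abs_div, abs_of_pos ht]
    gcongr
    rw [abs_sub_comm]
    exact abs_norm_sub_norm_le l s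
  rw [h3]
  refine (norm_add_le _ _).trans ?_
  rw [norm_smul, norm_smul, Real.norm_eq_abs, Real.norm_eq_abs, abs_of_nonneg (kcut_nonneg _)]
  have h5 : kcut (2 - ‖l‖ / t) * ‖l - s‖ ≤ ‖l - s‖ :=
    mul_le_of_le_one_left (norm_nonneg _) (kcut_le_one _)
  have h6 : |kcut (2 - ‖l‖ / t) - kcut (2 - ‖s‖ / t)| * ‖s‖ ≤ ‖l - s‖ / t * (2 * t) := by
    gcongr
  have h7 : ‖l - s‖ / t * (2 * t) = 2 * ‖l - s‖ := by field_simp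
  linarith

lemma tr_lip {t : ℝ} (ht : 0 < t) (y y' : Rn n) :
    ‖tr t y' - tr t y‖ ≤ 3 * ‖y' - y‖ := by
  rcases le_total ‖y‖ ‖y'‖ with h | h
  · exact tr_lip_aux ht _ _ h
  · rw [norm_sub_rev, norm_sub_rev y' y]; exact tr_lip_aux ht _ _ h

lemma tr_dec_aux {t : ℝ} (ht : 0 < t) (s l : Rn n) (h : ‖s‖ ≤ ‖l‖) (hl : t < ‖l‖) :
    ‖tr t l - tr t s‖ ≤ 12 * ‖l - s‖ * (t / ‖l‖) := by
  have hM : 0 < ‖l‖ := ht.trans hl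
  by_cases h1 : ‖l‖ ≤ 4 * t
  · have h2 : 1 / 4 ≤ t / ‖l‖ := by rw [le_div_iff₀ hM]; linarith
    have h3 := tr_lip_aux ht s l h
    have h4 : 12 * ‖l - s‖ * (1 / 4) ≤ 12 * ‖l - s‖ * (t / ‖l‖) := by gcongr
    linarith
  push Not at h1
  by_cases h2 : ‖l‖ / 2 ≤ ‖s‖
  · rw [tr_large ht (by linarith : 2 * t ≤ ‖s‖), tr_large ht (by linarith : 2 * t ≤ ‖l‖)]
    simp; positivity
  push Not at h2
  rw [tr_large ht (by linarith : 2 * t ≤ ‖l‖), zero_sub, norm_neg]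
  have h3 : ‖l‖ / 2 ≤ ‖l - s‖ := by
    have := norm_sub_norm_le l s
    linarith
  have h4 := tr_norm ht s
  have h5 : 12 * (‖l‖ / 2) * (t / ‖l‖) ≤ 12 * ‖l - s‖ * (t / ‖l‖) := by gcongr
  have h6 : 12 * (‖l‖ / 2) * (t / ‖l‖) = 6 * t := by field_simp; norm_num
  linarith

lemma tr_dec {t : ℝ} (ht : 0 < t) (y y' : Rn n) (h : t < max ‖y‖ ‖y'‖) :
    ‖tr t y' - tr t y‖ ≤ 12 * ‖y' - y‖ * (t / max ‖y‖ ‖y'‖) := by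
  rcases le_total ‖y‖ ‖y'‖ with h1 | h1
  · rw [max_eq_right h1] at h ⊢
    exact tr_dec_aux ht _ _ h1 h
  · rw [max_eq_left h1] at h ⊢
    rw [norm_sub_rev, norm_sub_rev y' y]; exact tr_dec_aux ht _ _ h1 h

lemma rpow_add_le {x y p : ℝ} (hx : 0 ≤ x) (hy : 0 ≤ y) (hp : 0 ≤ p) :
    (x + y) ^ p ≤ 2 ^ p * (x ^ p + y ^ p) := by
  have hx' := Real.rpow_nonneg hx p
  have hy' := Real.rpow_nonneg hy p
  have h2 : (0:ℝ) ≤ 2 ^ p := by positivity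
  rcases le_total x y with h | h
  · calc (x + y) ^ p ≤ (2 * y) ^ p := by
          apply Real.rpow_le_rpow (by positivity) (by linarith) hp
      _ = 2 ^ p * y ^ p := Real.mul_rpow (by norm_num) hy
      _ ≤ _ := by gcongr; linarith
  · calc (x + y) ^ p ≤ (2 * x) ^ p := by
          apply Real.rpow_le_rpow (by positivity) (by linarith) hp
      _ = 2 ^ p * x ^ p := Real.mul_rpow (by norm_num) hx
      _ ≤ _ := by gcongr; linarith

lemma count_three (x : ℝ) (J : ℕ) :
    ∑ j ∈ Finset.range J, (if (j:ℝ) < x ∧ x < j + 3 then (1:ℝ) else 0) ≤ 3 := by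
  rw [← Finset.sum_filter, Finset.sum_const, nsmul_eq_mul, mul_one]
  have h : (Finset.range J).filter (fun j : ℕ => (j:ℝ) < x ∧ x < j + 3)
      ⊆ Finset.Ico (⌈x⌉₊ - 3) ⌈x⌉₊ := by
    intro j hj
    rw [Finset.mem_filter] at hj
    rw [Finset.mem_Ico]
    obtain ⟨_, h1, h2⟩ := hj
    have h3 : j < ⌈x⌉₊ := Nat.lt_ceil.2 h1
    have h4 : ⌈x⌉₊ ≤ j + 3 := Nat.ceil_le.2 (by push_cast; exact h2.le)
    omega
  have h5 := Finset.card_le_card h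
  rw [Nat.card_Ico] at h5
  have : ((Finset.range J).filter (fun j : ℕ => (j:ℝ) < x ∧ x < j + 3)).card ≤ 3 := by omega
  exact_mod_cast this

lemma geom_two {T M : ℝ} (hT : 0 < T) (hM : 0 ≤ M) (J : ℕ) :
    ∑ j ∈ Finset.range J, (if 4 ^ j * T < M then (4 ^ j * T) / M else 0) ≤ 2 := by
  by_cases hM0 : M = 0
  · apply le_trans _ (by norm_num : (0:ℝ) ≤ 2)
    apply Finset.sum_nonpos
    intro j _
    rw [hM0]; simp
  have hM' : 0 < M := lt_of_le_of_ne hM (Ne.symm hM0)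
  have key : ∑ j ∈ Finset.range J, (if 4 ^ j * T < M then (4 ^ j * T) else 0) ≤ 2 * (4 ^ J * T)
      ∧ ∑ j ∈ Finset.range J, (if 4 ^ j * T < M then (4 ^ j * T) else 0) ≤ 2 * M := by
    induction J with
    | zero => simp; constructor <;> positivity
    | succ k ih =>
      rw [Finset.sum_range_succ]
      obtain ⟨h1, h2⟩ := ih
      have hk : 0 < (4:ℝ) ^ k * T := by positivity
      have hs : (4:ℝ) ^ (k + 1) * T = 4 * (4 ^ k * T) := by ring
      rw [hs]
      have hbase : ∑ j ∈ Finset.range k, (if 4 ^ j * T < M then (4 ^ j * T) else 0)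
          ≤ 4 ^ k * T := by
        clear h1 h2
        induction k with
        | zero => simp; positivity
        | succ m ih =>
          rw [Finset.sum_range_succ]
          have hm : 0 < (4:ℝ) ^ m * T := by positivity
          have := ih hm (by ring)
          have hs : (4:ℝ) ^ (m + 1) * T = 4 * (4 ^ m * T) := by ring
          split_ifs <;> linarith
      split_ifs with h <;> constructor <;> linarith
  have : ∑ j ∈ Finset.range J, (if 4 ^ j * T < M then (4 ^ j * T) / M else 0)
      = (∑ j ∈ Finset.range J, (if 4 ^ j * T < M then (4 ^ j * T) else 0)) / M := by
    rw [Finset.sum_div]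
    apply Finset.sum_congr rfl
    intro j _
    split_ifs <;> simp
  rw [this, div_le_iff₀ hM']
  exact key.2

section
variable {P : Measure Ω} {τ : Zd d → Ω → Ω} {E0 : Finset (Zd d)} {p c₁ : ℝ}
    {V : Zd d → Ω → Rn n → ℝ} {lam : Zd d → Ω → ℝ}

lemma V_upper (H : Hyp P τ E0 p c₁ V lam) {b : Zd d} (hb : b ∈ E0) (ω : Ω) {r : Rn n}
    {K X : ℝ} (hK : 0 ≤ K) (hX : 0 ≤ X) (hr : ‖r‖ ≤ K + X) :
    V b ω r ≤ (c₁ * (2 ^ p * K ^ p + 1)) * (1 + lam b ω) + c₁ * 2 ^ p * (lam b ω * X ^ p) := by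
  have hp0 : 0 ≤ p := by linarith [H.hp]
  have h1 := (H.growth b hb ω r).2
  have h2 : ‖r‖ ^ p ≤ 2 ^ p * (K ^ p + X ^ p) :=
    (Real.rpow_le_rpow (norm_nonneg _) hr hp0).trans (rpow_add_le hK hX hp0)
  have hl := H.lnn b hb ω
  have hc := H.hc
  have h3 : lam b ω * (‖r‖ ^ p + 1) ≤ lam b ω * (2 ^ p * (K ^ p + X ^ p) + 1) := by gcongr
  have h4 : c₁ * (1 + lam b ω * (‖r‖ ^ p + 1))
      ≤ c₁ * (1 + lam b ω * (2 ^ p * (K ^ p + X ^ p) + 1)) := by gcongr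
  have h5 : 0 ≤ c₁ * (2 ^ p * K ^ p) := by positivity
  nlinarith

lemma lamY (H : Hyp P τ E0 p c₁ V lam) {b : Zd d} (hb : b ∈ E0) (ω : Ω) {r : Rn n}
    {K Y : ℝ} (hK : 0 ≤ K) (hY : 0 ≤ Y) (hr : Y ≤ ‖r‖ + K) :
    lam b ω * Y ^ p ≤ 2 ^ p * (c₁ * V b ω r + (c₁ ^ 2 + K ^ p) * lam b ω) := by
  have hp0 : 0 ≤ p := by linarith [H.hp]
  have h1 := (H.growth b hb ω r).1
  have h2 : Y ^ p ≤ 2 ^ p * (‖r‖ ^ p + K ^ p) :=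
    (Real.rpow_le_rpow hY hr hp0).trans (rpow_add_le (norm_nonneg _) hK hp0)
  have hl := H.lnn b hb ω
  have hc := H.hc
  have h3 : lam b ω * Y ^ p ≤ lam b ω * (2 ^ p * (‖r‖ ^ p + K ^ p)) := by gcongr
  have h4 : c₁ * (lam b ω * (‖r‖ ^ p / c₁ - c₁)) ≤ c₁ * V b ω r := by gcongr
  have h5 : c₁ * (lam b ω * (‖r‖ ^ p / c₁ - c₁)) = lam b ω * ‖r‖ ^ p - c₁ ^ 2 * lam b ω := by
    field_simp
  have h6 : lam b ω * ‖r‖ ^ p + K ^ p * lam b ω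
      ≤ c₁ * V b ω r + (c₁ ^ 2 + K ^ p) * lam b ω := by linarith
  calc _ ≤ _ := h3
    _ = 2 ^ p * (lam b ω * ‖r‖ ^ p + K ^ p * lam b ω) := by ring
    _ ≤ _ := by gcongr

/-- the layer cut-off -/
def lay (L ρ : ℝ) (j : ℕ) : ℝ := kcut ((ρ - (j + 1) * L) / L)

lemma edge_j (H : Hyp P τ E0 p c₁ V lam) {b : Zd d} (hb : b ∈ E0) (ω : Ω) {a y y' : Rn n}
    {K t L ρ ρ' : ℝ} (j : ℕ) (hK : ‖(‖toRd b‖)⁻¹ • a‖ ≤ K) (ht : 0 < t) (htL : 2 * t ≤ L)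
    (hρ : |ρ' - ρ| ≤ ‖toRd b‖) (hbL : ‖toRd b‖ ≤ L) :
    V b ω ((‖toRd b‖)⁻¹ • (a + (lay L ρ' j • tr t y' - lay L ρ j • tr t y)))
    ≤ V b ω ((‖toRd b‖)⁻¹ • (a + (y' - y)))
      + (if ρ ≤ (j + 3) * L ∨ t < max ‖y‖ ‖y'‖ then
          (c₁ * (2 ^ p * (K + 1) ^ p + 1)) * (1 + lam b ω) else 0)
      + c₁ * 2 ^ p * 12 ^ p * (lam b ω * ((‖toRd b‖)⁻¹ * ‖y' - y‖) ^ p)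
        * ((if (j:ℝ) < ρ / L ∧ ρ / L < j + 3 then 1 else 0)
          + (if t < max ‖y‖ ‖y'‖ then t / max ‖y‖ ‖y'‖ else 0)) := by
  have hp0 : 0 ≤ p := by linarith [H.hp]
  have hb0 : b ≠ 0 := fun h => H.E00 (h ▸ hb)
  have hβ := toRd_norm_pos hb0
  set β := ‖toRd b‖ with hβd
  have hL : 0 < L := hβ.trans_le hbL
  have hl := H.lnn b hb ω
  have hc := H.hc
  have hK0 : 0 ≤ K := (norm_nonneg _).trans hK
  have hVn := H.Vnn b hb ω (β⁻¹ • (a + (y' - y)))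
  obtain ⟨hρ1, hρ2⟩ := abs_le.1 hρ
  set M := max ‖y‖ ‖y'‖ with hM
  have hM0 : 0 ≤ M := (norm_nonneg _).trans (le_max_left _ _)
  set C1 := c₁ * (2 ^ p * (K + 1) ^ p + 1) with hC1
  have hC1p : 0 ≤ C1 := by positivity
  set Y := β⁻¹ * ‖y' - y‖ with hY
  have hY0 : 0 ≤ Y := by positivity
  have hmain : 0 ≤ c₁ * 2 ^ p * 12 ^ p * (lam b ω * Y ^ p) := by positivity
  have hi1 : (0:ℝ) ≤ (if (j:ℝ) < ρ / L ∧ ρ / L < j + 3 then 1 else 0) := by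
    split_ifs <;> norm_num
  have hi2 : (0:ℝ) ≤ (if t < M then t / M else 0) := by
    split_ifs <;> positivity
  -- general estimate with bound X
  have gen : ∀ X : ℝ, 0 ≤ X → ‖lay L ρ' j • tr t y' - lay L ρ j • tr t y‖ ≤ β * (1 + X) →
      V b ω (β⁻¹ • (a + (lay L ρ' j • tr t y' - lay L ρ j • tr t y)))
        ≤ C1 * (1 + lam b ω) + c₁ * 2 ^ p * (lam b ω * X ^ p) := by
    intro X hX hle
    apply V_upper H hb ω (by positivity) hX
    rw [smul_add]
    refine (norm_add_le _ _).trans ?_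
    have : ‖β⁻¹ • (lay L ρ' j • tr t y' - lay L ρ j • tr t y)‖ ≤ 1 + X := by
      rw [norm_smul, norm_inv, Real.norm_eq_abs, abs_of_pos hβ, inv_mul_le_iff₀ hβ]
      exact hle
    linarith
  have lay0 : ∀ r : ℝ, r ≤ (j + 1) * L → lay L r j = 0 := by
    intro r hr
    apply kcut_of_le
    apply div_nonpos_of_nonpos_of_nonneg _ hL.le
    linarith
  have lay1 : ∀ r : ℝ, (j + 2) * L ≤ r → lay L r j = 1 := by
    intro r hr
    apply kcut_of_ge
    rw [le_div_iff₀ hL]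
    linarith
  by_cases h0 : ρ ≤ (j + 1) * L ∧ ρ' ≤ (j + 1) * L
  · have hbad : ρ ≤ (j + 3) * L := by nlinarith
    rw [if_pos (Or.inl hbad)]
    have := gen 0 le_rfl (by rw [lay0 _ h0.1, lay0 _ h0.2]; simp; positivity)
    rw [Real.zero_rpow (by linarith [H.hp])] at this
    have h7 := mul_nonneg hmain (add_nonneg hi1 hi2)
    linarith
  by_cases h1 : (j + 2) * L ≤ ρ ∧ (j + 2) * L ≤ ρ'
  · rw [lay1 _ h1.1, lay1 _ h1.2, one_smul, one_smul] at gen ⊢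
    by_cases hMt : t < M
    · rw [if_pos (Or.inr hMt), if_pos hMt]
      have hMp : 0 < M := ht.trans hMt
      have h3 := tr_dec ht y y' hMt
      have h4 := gen (12 * Y * (t / M)) (by positivity) (by
        refine h3.trans ?_
        have : β * (1 + 12 * Y * (t / M)) = β + 12 * ‖y' - y‖ * (t / M) := by
          rw [hY]; field_simp
        rw [this]; linarith)
      have h5 : (12 * Y * (t / M)) ^ p ≤ 12 ^ p * Y ^ p * (t / M) := by
        rw [Real.mul_rpow (by positivity) (by positivity), Real.mul_rpow (by norm_num) hY0]
        have : (t / M) ^ p ≤ (t / M) ^ (1:ℝ) :=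
          Real.rpow_le_rpow_of_exponent_ge (by positivity) (by rw [div_le_one hMp]; exact hMt.le) H.hp.le
        rw [Real.rpow_one] at this
        gcongr
      have h6 : c₁ * 2 ^ p * (lam b ω * (12 * Y * (t / M)) ^ p)
          ≤ c₁ * 2 ^ p * (lam b ω * (12 ^ p * Y ^ p * (t / M))) := by gcongr
      have h7 := mul_nonneg hmain hi1
      rw [mul_add]
      have h8 : c₁ * 2 ^ p * (lam b ω * (12 ^ p * Y ^ p * (t / M)))
        = c₁ * 2 ^ p * 12 ^ p * (lam b ω * Y ^ p) * (t / M) := by ring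
      linarith
    · push Not at hMt
      rw [tr_small ht ((le_max_left _ _).trans hMt), tr_small ht ((le_max_right _ _).trans hMt)]
      have h7 := mul_nonneg hmain (add_nonneg hi1 hi2)
      have h8 : (0:ℝ) ≤ (if ρ ≤ (j + 3) * L ∨ t < M then C1 * (1 + lam b ω) else 0) := by
        split_ifs <;> positivity
      linarith
  · have hlo : (j:ℝ) * L < ρ := by
      by_contra hcon
      push Not at hcon
      apply h0
      constructor <;> nlinarith
    have hhi : ρ < (j + 3) * L := by
      by_contra hcon
      push Not at hcon
      apply h1
      constructor <;> nlinarith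
    rw [if_pos (Or.inl hhi.le), if_pos (⟨by rw [lt_div_iff₀ hL]; exact hlo,
      by rw [div_lt_iff₀ hL]; exact hhi⟩ : (j:ℝ) < ρ / L ∧ ρ / L < j + 3)]
    have h3 := tr_lip ht y y'
    have hlay : |lay L ρ' j - lay L ρ j| ≤ β / L := by
      refine (kcut_lip _ _).trans ?_
      rw [← sub_div, abs_div, abs_of_pos hL]
      gcongr
      rw [sub_sub_sub_cancel_right]
      exact hρ
    have h4 := gen (12 * Y) (by positivity) (by
      have e : lay L ρ' j • tr t y' - lay L ρ j • tr t y
          = lay L ρ' j • (tr t y' - tr t y) + (lay L ρ' j - lay L ρ j) • tr t y := by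
        rw [smul_sub, sub_smul]; abel
      rw [e]
      refine (norm_add_le _ _).trans ?_
      rw [norm_smul, norm_smul, Real.norm_eq_abs, Real.norm_eq_abs,
        abs_of_nonneg (show 0 ≤ lay L ρ' j from kcut_nonneg _)]
      have h5 : lay L ρ' j * ‖tr t y' - tr t y‖ ≤ 3 * ‖y' - y‖ :=
        (mul_le_of_le_one_left (norm_nonneg _) (kcut_le_one _)).trans h3
      have h6 : |lay L ρ' j - lay L ρ j| * ‖tr t y‖ ≤ β / L * (2 * t) := by
        gcongr
        exact tr_norm ht y
      have h7 : β / L * (2 * t) ≤ β / L * L := by gcongr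
      have h8 : β / L * L = β := by field_simp
      have h9 : β * (1 + 12 * Y) = β + 12 * ‖y' - y‖ := by rw [hY]; field_simp
      rw [h9]
      linarith [norm_nonneg (y' - y)])
    rw [Real.mul_rpow (by norm_num) hY0] at h4
    have h7 := mul_nonneg hmain hi2
    rw [mul_add]
    linarith

/-- the gluing constant (per edge) -/
def GC (p c₁ K : ℝ) : ℝ :=
  c₁ * (2 ^ p * (K + 1) ^ p + 1) + 5 * (c₁ * 2 ^ p * 12 ^ p) * (2 ^ p * (c₁ + c₁ ^ 2 + K ^ p))

lemma GC_nonneg {p c₁ K : ℝ} (hc : 0 < c₁) (hK : 0 ≤ K) : 0 ≤ GC p c₁ K := by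
  unfold GC; positivity

lemma edge_sum (H : Hyp P τ E0 p c₁ V lam) {b : Zd d} (hb : b ∈ E0) (ω : Ω) {a y y' : Rn n}
    {K T L ρ ρ' : ℝ} (J : ℕ) (hK : ‖(‖toRd b‖)⁻¹ • a‖ ≤ K) (hT : 0 < T)
    (hTL : 2 * (4 ^ J * T) ≤ L)
    (hρ : |ρ' - ρ| ≤ ‖toRd b‖) (hbL : ‖toRd b‖ ≤ L) :
    ∑ j ∈ Finset.range J, V b ω ((‖toRd b‖)⁻¹ •
        (a + (lay L ρ' j • tr (4 ^ j * T) y' - lay L ρ j • tr (4 ^ j * T) y)))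
    ≤ (J + GC p c₁ K) * V b ω ((‖toRd b‖)⁻¹ • (a + (y' - y))) + GC p c₁ K * (1 + lam b ω)
      + J * (if ρ ≤ (J + 2) * L ∨ T < max ‖y‖ ‖y'‖ then
          GC p c₁ K * (1 + lam b ω) else 0) := by
  have hp0 : 0 ≤ p := by linarith [H.hp]
  have hb0 : b ≠ 0 := fun h => H.E00 (h ▸ hb)
  have hβ := toRd_norm_pos hb0
  have hL : 0 < L := hβ.trans_le hbL
  have hl := H.lnn b hb ω
  have hc := H.hc
  have hK0 : 0 ≤ K := (norm_nonneg _).trans hK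
  have hVn := H.Vnn b hb ω ((‖toRd b‖)⁻¹ • (a + (y' - y)))
  set e := V b ω ((‖toRd b‖)⁻¹ • (a + (y' - y))) with he
  set M := max ‖y‖ ‖y'‖ with hM
  have hM0 : 0 ≤ M := (norm_nonneg _).trans (le_max_left _ _)
  set Y := (‖toRd b‖)⁻¹ * ‖y' - y‖ with hY
  have hY0 : 0 ≤ Y := by positivity
  set C2 := c₁ * 2 ^ p * 12 ^ p with hC2
  have hC2p : 0 ≤ C2 := by positivity
  set C1 := c₁ * (2 ^ p * (K + 1) ^ p + 1) with hC1
  have hC1p : 0 ≤ C1 := by positivity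
  set bad : ℝ := (if ρ ≤ (J + 2) * L ∨ T < M then C1 * (1 + lam b ω) else 0) with hbad
  have hYle : lam b ω * Y ^ p ≤ 2 ^ p * (c₁ * e + (c₁ ^ 2 + K ^ p) * lam b ω) := by
    apply lamY H hb ω hK0 hY0
    have : Y = ‖(‖toRd b‖)⁻¹ • (y' - y)‖ := by
      rw [norm_smul, norm_inv, norm_norm]
    rw [this, smul_add]
    have h1 := norm_sub_norm_le ((‖toRd b‖)⁻¹ • (y' - y)) (-((‖toRd b‖)⁻¹ • a))
    rw [norm_neg, sub_neg_eq_add, add_comm ((‖toRd b‖)⁻¹ • (y' - y))] at h1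
    linarith
  have hlY : 0 ≤ lam b ω * Y ^ p := by positivity
  have h1 : ∀ j ∈ Finset.range J, V b ω ((‖toRd b‖)⁻¹ •
        (a + (lay L ρ' j • tr (4 ^ j * T) y' - lay L ρ j • tr (4 ^ j * T) y)))
      ≤ e + bad + C2 * (lam b ω * Y ^ p) *
        ((if (j:ℝ) < ρ / L ∧ ρ / L < j + 3 then 1 else 0)
          + (if 4 ^ j * T < M then (4 ^ j * T) / M else 0)) := by
    intro j hj
    have hj' : j < J := Finset.mem_range.1 hj
    have h4 : (4:ℝ) ^ j ≤ 4 ^ J := pow_le_pow_right₀ (by norm_num) hj'.le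
    have h5 : (4:ℝ) ^ j * T ≤ 4 ^ J * T := by gcongr
    have h6 : T ≤ (4:ℝ) ^ j * T := le_mul_of_one_le_left hT.le (one_le_pow₀ (by norm_num))
    have := edge_j H hb ω (y := y) (y' := y') j hK (by positivity : 0 < (4:ℝ) ^ j * T)
      (by linarith) hρ hbL
    refine this.trans ?_
    gcongr
    have hj2 : ((j:ℝ) + 3) * L ≤ (J + 2) * L := by
      have : (j:ℝ) + 1 ≤ J := by exact_mod_cast hj'
      gcongr ?_ * L
      linarith
    rw [hbad]
    by_cases hq : ρ ≤ (j + 3) * L ∨ 4 ^ j * T < M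
    · rw [if_pos hq, if_pos (hq.imp (fun h => h.trans hj2) (fun h => h6.trans_lt h))]
    · rw [if_neg hq]; split_ifs <;> positivity
  refine (Finset.sum_le_sum h1).trans ?_
  rw [Finset.sum_add_distrib, Finset.sum_const, Finset.card_range, nsmul_eq_mul, ← Finset.mul_sum,
    Finset.sum_add_distrib]
  have h2 := count_three (ρ / L) J
  have h3 := geom_two hT hM0 J
  have h4 : C2 * (lam b ω * Y ^ p) *
      (∑ j ∈ Finset.range J, (if (j:ℝ) < ρ / L ∧ ρ / L < j + 3 then (1:ℝ) else 0)
        + ∑ j ∈ Finset.range J, (if 4 ^ j * T < M then (4 ^ j * T) / M else 0))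
      ≤ C2 * (2 ^ p * (c₁ * e + (c₁ ^ 2 + K ^ p) * lam b ω)) * 5 := by
    gcongr
    linarith
  have hG : GC p c₁ K = C1 + 5 * C2 * (2 ^ p * (c₁ + c₁ ^ 2 + K ^ p)) := rfl
  have h5 : C2 * (2 ^ p * (c₁ * e + (c₁ ^ 2 + K ^ p) * lam b ω)) * 5
      ≤ GC p c₁ K * e + GC p c₁ K * (1 + lam b ω) := by
    rw [hG]
    have q1 : 0 ≤ C2 * 2 ^ p * (c₁ ^ 2 + K ^ p) * e := by positivity
    have q2 : 0 ≤ C2 * 2 ^ p * (c₁ + c₁ ^ 2 + K ^ p) := by positivity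
    have q3 : 0 ≤ C2 * 2 ^ p * c₁ * lam b ω := by positivity
    have q4 : 0 ≤ C1 * e := by positivity
    have q5 : 0 ≤ C1 * (1 + lam b ω) := by positivity
    nlinarith
  have h6 : bad ≤ (if ρ ≤ (J + 2) * L ∨ T < M then GC p c₁ K * (1 + lam b ω) else 0) := by
    rw [hbad]
    split_ifs
    · gcongr
      rw [hG]
      have : 0 ≤ 5 * C2 * (2 ^ p * (c₁ + c₁ ^ 2 + K ^ p)) := by positivity
      linarith
    · exact le_rfl
  have h7 : (J:ℝ) * bad ≤ J * (if ρ ≤ (J + 2) * L ∨ T < M then GC p c₁ K * (1 + lam b ω) else 0) := by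
    gcongr
  linarith

/-- bad sites for the gluing -/
def badS (E0 : Finset (Zd d)) (B : Set (Rd d)) (φ : Zd d → Rn n) (T r : ℝ) (z : Zd d) : Prop :=
  infDist (toRd z) Bᶜ ≤ r ∨ T < ‖φ z‖ ∨ ∃ b ∈ E0, T < ‖φ (z + b)‖

lemma gluing (H : Hyp P τ E0 p c₁ V lam) (ω : Ω) {B : Set (Rd d)} (hB : Bornology.IsBounded B)
    (v : Zd d → Rn n) (F : Rd d →L[ℝ] Rn n) (c : Rn n) {K T L : ℝ} (J : ℕ) (hF : ‖F‖ ≤ K)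
    (hT : 0 < T) (hL : irange d E0 ≤ L) (hTL : 2 * (4 ^ J * T) ≤ L) :
    J * mF τ E0 V ω F B ≤ (J + GC p c₁ K) * energy1 τ E0 V ω v B
      + (GC p c₁ K * (E0.card + 1)) * ∑ z ∈ lat B, (1 + Lam E0 lam (τ z ω))
      + (GC p c₁ K * (E0.card + 1)) * J *
        ∑ z ∈ (lat B).filter (badS E0 B (fun z => v z - (F (toRd z) + c)) T ((J + 2) * L)),
          (1 + Lam E0 lam (τ z ω)) := by
  have hK0 : 0 ≤ K := (norm_nonneg _).trans hF
  have hG := GC_nonneg (p := p) H.hc hK0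
  have hLp : 0 < L := lt_of_lt_of_le (by positivity) hTL
  set φ : Zd d → Rn n := fun z => v z - (F (toRd z) + c) with hφ
  set ρ : Zd d → ℝ := fun z => infDist (toRd z) Bᶜ with hρ
  set ψ : ℕ → Zd d → Rn n := fun j z => lay L (ρ z) j • tr (4 ^ j * T) (φ z) with hψ
  have h1 : ∀ j ∈ Finset.range J, mF τ E0 V ω F B
      ≤ ∑ z ∈ lat B, site τ E0 V ω (fun z => F (toRd z) + ψ j z) z := by
    intro j _
    rw [← energy1_eq _ _ _ _ _ hB]
    apply mF_le H ω F hB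
    intro z hz
    have : lay L (ρ z) j = 0 := by
      apply kcut_of_le
      apply div_nonpos_of_nonpos_of_nonneg _ hLp.le
      have h2 : ρ z ≤ L := hz.trans hL
      nlinarith [mul_nonneg (Nat.cast_nonneg (α := ℝ) j) hLp.le]
    rw [hψ]
    simp only [this, zero_smul]
  have h2 := Finset.sum_le_sum h1
  rw [Finset.sum_const, Finset.card_range, nsmul_eq_mul, Finset.sum_comm] at h2
  refine h2.trans ?_
  rw [energy1_eq _ _ _ _ _ hB, Finset.sum_filter, Finset.mul_sum, Finset.mul_sum, Finset.mul_sum,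
    ← Finset.sum_add_distrib, ← Finset.sum_add_distrib]
  apply Finset.sum_le_sum
  intro z _
  unfold site
  rw [Finset.sum_comm]
  have hLamn := Lam_nonneg H (τ z ω)
  have h3 : ∀ b ∈ E0, ∑ j ∈ Finset.range J, V b (τ z ω) ((‖toRd b‖)⁻¹ •
        ((F (toRd (z + b)) + ψ j (z + b)) - (F (toRd z) + ψ j z)))
      ≤ (J + GC p c₁ K) * V b (τ z ω) ((‖toRd b‖)⁻¹ • (v (z + b) - v z))
        + GC p c₁ K * (1 + lam b (τ z ω))
        + J * (if badS E0 B φ T ((J + 2) * L) z then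
          GC p c₁ K * (1 + lam b (τ z ω)) else 0) := by
    intro b hb
    have hl := H.lnn b hb (τ z ω)
    have h4 := edge_sum H hb (τ z ω) (a := F (toRd b)) (y := φ z) (y' := φ (z + b)) (K := K)
      (T := T) (L := L) (ρ := ρ z) (ρ' := ρ (z + b)) J
      ((norm_aff_le F b).trans hF) hT hTL (by
        have h5 := (lipschitz_infDist_pt (Bᶜ)).dist_le_mul (toRd (z + b)) (toRd z)
        rw [NNReal.coe_one, one_mul, Real.dist_eq, toRd_add, dist_eq_norm, add_sub_cancel_left] at h5
        simpa [hρ, toRd_add] using h5) ((norm_le_irange hb).trans hL)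
    have e1 : v (z + b) - v z = F (toRd b) + (φ (z + b) - φ z) := by
      simp only [hφ, toRd_add, map_add]; abel
    rw [e1]
    have e2 : ∀ j, (F (toRd (z + b)) + ψ j (z + b)) - (F (toRd z) + ψ j z)
        = F (toRd b) + (lay L (ρ (z + b)) j • tr (4 ^ j * T) (φ (z + b))
          - lay L (ρ z) j • tr (4 ^ j * T) (φ z)) := by
      intro j
      simp only [hψ, toRd_add, map_add]; abel
    simp only [e2]
    refine h4.trans ?_
    gcongr
    by_cases hq : ρ z ≤ (J + 2) * L ∨ T < max ‖φ z‖ ‖φ (z + b)‖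
    · rw [if_pos hq, if_pos]
      rcases hq with h | h
      · exact Or.inl h
      · rcases lt_max_iff.1 h with h | h
        · exact Or.inr (Or.inl h)
        · exact Or.inr (Or.inr ⟨b, hb, h⟩)
    · rw [if_neg hq]; split_ifs <;> positivity
  refine (Finset.sum_le_sum h3).trans ?_
  rw [Finset.sum_add_distrib, Finset.sum_add_distrib, ← Finset.mul_sum, ← Finset.mul_sum,
    ← Finset.mul_sum]
  have h5 : ∑ b ∈ E0, (1 + lam b (τ z ω)) ≤ (E0.card + 1) * (1 + Lam E0 lam (τ z ω)) := by
    rw [Finset.sum_add_distrib, Finset.sum_const, nsmul_eq_mul, mul_one]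
    change (E0.card : ℝ) + Lam E0 lam (τ z ω) ≤ _
    nlinarith [Nat.cast_nonneg (α := ℝ) E0.card]
  have h6 : ∑ b ∈ E0, (if badS E0 B φ T ((J + 2) * L) z then GC p c₁ K * (1 + lam b (τ z ω)) else 0)
      ≤ GC p c₁ K * (E0.card + 1) *
        (if badS E0 B φ T ((J + 2) * L) z then (1 + Lam E0 lam (τ z ω)) else 0) := by
    split_ifs
    · rw [← Finset.mul_sum, mul_assoc]; gcongr
    · simp
  have h7 : GC p c₁ K * ∑ b ∈ E0, (1 + lam b (τ z ω))
      ≤ GC p c₁ K * (E0.card + 1) * (1 + Lam E0 lam (τ z ω)) := by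
    rw [mul_assoc]; gcongr
  have h8 : (J:ℝ) * ∑ b ∈ E0, (if badS E0 B φ T ((J + 2) * L) z then GC p c₁ K * (1 + lam b (τ z ω)) else 0)
      ≤ J * (GC p c₁ K * (E0.card + 1) *
        (if badS E0 B φ T ((J + 2) * L) z then (1 + Lam E0 lam (τ z ω)) else 0)) := by gcongr
  linarith
end

/-- The tail of `Lam`. -/
def tailL (E0 : Finset (Zd d)) (lam : Zd d → Ω → ℝ) (m : ℕ) (ω : Ω) : ℝ :=
  if (m:ℝ) < Lam E0 lam ω then Lam E0 lam ω else 0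

section
variable {P : Measure Ω} {τ : Zd d → Ω → Ω} {E0 : Finset (Zd d)} {p c₁ : ℝ}
    {V : Zd d → Ω → Rn n → ℝ} {lam : Zd d → Ω → ℝ}

lemma tailL_measurable (H : Hyp P τ E0 p c₁ V lam) (m : ℕ) : Measurable (tailL E0 lam m) :=
  Measurable.ite (measurableSet_lt measurable_const (Lam_measurable H)) (Lam_measurable H)
    measurable_const

lemma tailL_nonneg (H : Hyp P τ E0 p c₁ V lam) (m : ℕ) (ω : Ω) : 0 ≤ tailL E0 lam m ω := by
  unfold tailL
  split_ifs
  · exact Lam_nonneg H ω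
  · exact le_rfl

lemma tailL_le (H : Hyp P τ E0 p c₁ V lam) (m : ℕ) (ω : Ω) :
    tailL E0 lam m ω ≤ Lam E0 lam ω := by
  unfold tailL
  split_ifs
  · exact le_rfl
  · exact Lam_nonneg H ω

lemma tailL_integrable (H : Hyp P τ E0 p c₁ V lam) (m : ℕ) : Integrable (tailL E0 lam m) P := by
  refine (Lam_integrable H).mono' (tailL_measurable H m).aestronglyMeasurable ?_
  refine Filter.Eventually.of_forall fun ω => ?_
  rw [Real.norm_of_nonneg (tailL_nonneg H m ω)]
  exact tailL_le H m ω

lemma tailL_tendsto (H : Hyp P τ E0 p c₁ V lam) :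
    Tendsto (fun m : ℕ => ∫ ω, tailL E0 lam m ω ∂P) atTop (𝓝 0) := by
  have h := tendsto_integral_of_dominated_convergence (μ := P) (F := fun m : ℕ => tailL E0 lam m)
    (f := fun _ => (0:ℝ)) (Lam E0 lam) (fun m => (tailL_measurable H m).aestronglyMeasurable)
    (Lam_integrable H) (fun m => Filter.Eventually.of_forall fun ω => by
      rw [Real.norm_of_nonneg (tailL_nonneg H m ω)]; exact tailL_le H m ω)
    (Filter.Eventually.of_forall fun ω => by
      obtain ⟨N, hN⟩ := exists_nat_ge (Lam E0 lam ω)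
      apply tendsto_const_nhds.congr'
      filter_upwards [eventually_ge_atTop N] with m hm
      unfold tailL
      rw [if_neg]
      push Not
      exact hN.trans (by exact_mod_cast hm))
  simpa using h

/-- All pointwise ergodic properties of `Lam` that we use. -/
def GoodLam (P : Measure Ω) (τ : Zd d → Ω → Ω) (E0 : Finset (Zd d)) (lam : Zd d → Ω → ℝ)
    (ω : Ω) : Prop :=
  GoodAt P τ (fun ω => 1 + Lam E0 lam ω) ω ∧ ∀ m, GoodAt P τ (tailL E0 lam m) ω

lemma goodLam_ae (H : Hyp P τ E0 p c₁ V lam) : ∀ᵐ ω ∂P, GoodLam P τ E0 lam ω := by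
  have := H.prob
  have h1 := ergodic H (fun ω => 1 + Lam E0 lam ω) (measurable_const.add (Lam_measurable H))
    ((integrable_const 1).add (Lam_integrable H))
  have h2 : ∀ᵐ ω ∂P, ∀ m, GoodAt P τ (tailL E0 lam m) ω := by
    rw [ae_all_iff]
    exact fun m => ergodic H _ (tailL_measurable H m) (tailL_integrable H m)
  filter_upwards [h1, h2] with ω a b using ⟨a, b⟩

lemma small_sum (H : Hyp P τ E0 p c₁ V lam) {ω : Ω} (hω : GoodLam P τ E0 lam ω)
    (lo hi : Fin d → ℝ) (h : ∀ i, lo i < hi i) (S : ℝ → Finset (Zd d))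
    (hS : ∀ ε, S ε ⊆ latBox ε lo hi)
    (hlim : Tendsto (fun ε : ℝ => ε ^ d * ((S ε).card : ℝ)) (𝓝[>] 0) (𝓝 0)) {δ : ℝ} (hδ : 0 < δ) :
    ∀ᶠ ε : ℝ in 𝓝[>] 0, ε ^ d * ∑ z ∈ S ε, (1 + Lam E0 lam (τ z ω)) < δ := by
  set vol := ∏ i, (hi i - lo i) with hvol
  have h1 : Tendsto (fun m : ℕ => vol * ∫ ω, tailL E0 lam m ω ∂P) atTop (𝓝 0) := by
    simpa using (tailL_tendsto H).const_mul vol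
  obtain ⟨m, hm⟩ := (h1.eventually (gt_mem_nhds (half_pos hδ))).exists
  have h2 := (hω.2 m lo hi h).eventually (gt_mem_nhds hm)
  have h3 : Tendsto (fun ε : ℝ => (1 + (m:ℝ)) * (ε ^ d * ((S ε).card : ℝ))) (𝓝[>] 0) (𝓝 0) := by
    simpa using hlim.const_mul (1 + (m:ℝ))
  filter_upwards [h2, h3.eventually (gt_mem_nhds (half_pos hδ)), self_mem_nhdsWithin] with ε h4 h5 hε
  have hε' : 0 < ε := hε
  have h6 : ∑ z ∈ S ε, (1 + Lam E0 lam (τ z ω))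
      ≤ (1 + (m:ℝ)) * ((S ε).card : ℝ) + ∑ z ∈ latBox ε lo hi, tailL E0 lam m (τ z ω) := by
    calc ∑ z ∈ S ε, (1 + Lam E0 lam (τ z ω))
        ≤ ∑ z ∈ S ε, ((1 + (m:ℝ)) + tailL E0 lam m (τ z ω)) := by
          apply Finset.sum_le_sum
          intro z _
          unfold tailL
          split_ifs with hq
          · linarith [Nat.cast_nonneg (α := ℝ) m]
          · push Not at hq; linarith
      _ = (1 + (m:ℝ)) * ((S ε).card : ℝ) + ∑ z ∈ S ε, tailL E0 lam m (τ z ω) := by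
          rw [Finset.sum_add_distrib, Finset.sum_const, nsmul_eq_mul]; ring
      _ ≤ _ := by
          gcongr
          · exact fun _ _ _ => tailL_nonneg H m _
          · exact hS ε
  calc ε ^ d * ∑ z ∈ S ε, (1 + Lam E0 lam (τ z ω))
      ≤ ε ^ d * ((1 + (m:ℝ)) * ((S ε).card : ℝ) + ∑ z ∈ latBox ε lo hi, tailL E0 lam m (τ z ω)) := by
        gcongr
    _ = (1 + (m:ℝ)) * (ε ^ d * ((S ε).card : ℝ)) + avg τ (tailL E0 lam m) ω lo hi ε := by
        unfold avg; ring
    _ < δ := by linarith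

lemma lat_sb {ε : ℝ} (hε : 0 < ε) (lo hi : Fin d → ℝ) : lat (sb ε lo hi) = latBox ε lo hi := by
  ext z
  rw [mem_lat (sb_bdd ε hε lo hi), mem_latBox hε]
  rfl

lemma energyE_eq {ε : ℝ} (ω : Ω) (u : Zd d → Rn n) (lo hi : Fin d → ℝ) :
    energyE τ E0 V ε ω u (openBox lo hi)
      = ε ^ d * energy1 τ E0 V ω (fun z => ε⁻¹ • u z) (sb ε lo hi) := by
  unfold energyE energy1
  congr 1
  apply tsum_congr
  intro z
  have : (toRd z ∈ sb ε lo hi) ↔ (ε • toRd z ∈ openBox lo hi) := Iff.rfl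
  simp only [this]
  split_ifs
  · apply Finset.sum_congr rfl
    intro b _
    rw [← smul_sub, smul_smul, mul_inv, mul_comm]
  · rfl

lemma infDist_sb (hd : 0 < d) {ε r : ℝ} (hε : 0 < ε) {lo hi : Fin d → ℝ} {z : Zd d}
    (hz : ∀ i, lo i + r ≤ ε * z i ∧ ε * z i ≤ hi i - r) :
    r / ε ≤ infDist (toRd z) (sb ε lo hi)ᶜ := by
  have hne : ((sb ε lo hi)ᶜ).Nonempty := by
    refine ⟨ε⁻¹ • (WithLp.toLp 2 lo : Rd d), ?_⟩
    intro hcon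
    have := (hcon ⟨0, hd⟩).1
    simp [mul_inv_cancel_left₀ hε.ne'] at this
  rw [le_infDist hne]
  intro y hy
  have hy' : ¬ ∀ i, lo i < (ε • y) i ∧ (ε • y) i < hi i := hy
  push Not at hy'
  obtain ⟨i, hi'⟩ := hy'
  have h1 := abs_coord_le (toRd z - y) i
  rw [dist_eq_norm]
  refine le_trans ?_ h1
  rw [div_le_iff₀ hε]
  simp only [PiLp.smul_apply, smul_eq_mul, PiLp.sub_apply, toRd_apply] at hi' ⊢
  have h2 := hz i
  by_cases h3 : lo i < ε * y i
  · have h4 := hi' h3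
    have := neg_le_abs ((z i : ℝ) - y i)
    nlinarith
  · push Not at h3
    have := le_abs_self ((z i : ℝ) - y i)
    nlinarith

lemma card_bad (N L : Finset (Zd d)) (E0 : Finset (Zd d)) :
    (L.filter (fun z => z ∈ N ∨ ∃ b ∈ E0, z + b ∈ N)).card ≤ (E0.card + 1) * N.card := by
  have h : L.filter (fun z => z ∈ N ∨ ∃ b ∈ E0, z + b ∈ N)
      ⊆ N ∪ E0.biUnion (fun b => N.image (fun z => z - b)) := by
    intro z hz
    rw [Finset.mem_filter] at hz
    rw [Finset.mem_union, Finset.mem_biUnion]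
    rcases hz.2 with h | ⟨b, hb, h⟩
    · exact Or.inl h
    · exact Or.inr ⟨b, hb, Finset.mem_image.2 ⟨z + b, h, by simp⟩⟩
  refine (Finset.card_le_card h).trans ((Finset.card_union_le _ _).trans ?_)
  have h2 : (E0.biUnion (fun b => N.image (fun z => z - b))).card ≤ E0.card * N.card :=
    Finset.card_biUnion_le_card_mul _ _ _ fun b _ => Finset.card_image_le
  linarith [add_mul E0.card 1 N.card]

set_option maxHeartbeats 1600000 in
lemma local_lower (H : Hyp P τ E0 p c₁ V lam) {ω : Ω} (hω : GoodLam P τ E0 lam ω)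
    (F : Rd d →L[ℝ] Rn n) {K : ℝ} (hF : ‖F‖ ≤ K)
    (hBL : ∀ lo hi : Fin d → ℝ, (∀ i, lo i < hi i) → ∀ δ > 0, ∀ᶠ ε : ℝ in 𝓝[>] 0,
      (∏ i, (hi i - lo i)) * W0 P τ E0 V F - δ ≤ ε ^ d * mF τ E0 V ω F (sb ε lo hi))
    (J : ℕ) {θ s T : ℝ} (hθ : 0 < θ) (hθ2 : θ < 1 / 2) (hs : 0 < s) (lo hi : Fin d → ℝ)
    (hside : ∀ i, s ≤ hi i - lo i) (hT : 0 < T) (hTs : 2 * (4 ^ J * T) * (J + 2) * 2 ≤ θ * s)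
    (c : Rn n) (u : Rd d → Rn n) (hu : ∀ x ∈ openBox lo hi, ‖u x - (F x + c)‖ ≤ T / 2)
    (uε : ℝ → Zd d → Rn n)
    (hconv : Tendsto (fun ε : ℝ => ε ^ d * ∑ z ∈ latBox ε lo hi, ‖uε ε z - u (ε • toRd z)‖)
      (𝓝[>] 0) (𝓝 0)) {δ : ℝ} (hδ : 0 < δ) :
    ∀ᶠ ε : ℝ in 𝓝[>] 0,
      J * ((∏ i, (hi i - lo i)) * W0 P τ E0 V F) - δ
        ≤ (J + GC p c₁ K) * energyE τ E0 V ε ω (uε ε) (openBox lo hi)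
          + (GC p c₁ K * (E0.card + 1)) *
            ((∏ i, (hi i - lo i)) * ∫ ω, (1 + Lam E0 lam ω) ∂P)
          + (GC p c₁ K * (E0.card + 1)) * J *
            ((1 - (1 - 2 * θ) ^ d) * (∏ i, (hi i - lo i)) * ∫ ω, (1 + Lam E0 lam ω) ∂P) := by
  have hK0 : 0 ≤ K := (norm_nonneg _).trans hF
  have hG0 := GC_nonneg (p := p) H.hc hK0
  set G := GC p c₁ K * (E0.card + 1) with hG
  have hGn : 0 ≤ G := by positivity
  have hlt : ∀ i, lo i < hi i := fun i => by linarith [hside i]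
  set vol := ∏ i, (hi i - lo i) with hvol
  set e := ∫ ω, (1 + Lam E0 lam ω) ∂P with he
  set lo' : Fin d → ℝ := fun i => lo i + θ * (hi i - lo i) with hlo'
  set hi' : Fin d → ℝ := fun i => hi i - θ * (hi i - lo i) with hhi'
  have hlt' : ∀ i, lo' i < hi' i := fun i => by
    have := hlt i
    simp only [hlo', hhi']; nlinarith
  have hvol' : ∏ i, (hi' i - lo' i) = (1 - 2 * θ) ^ d * vol := by
    have : ∀ i, hi' i - lo' i = (1 - 2 * θ) * (hi i - lo i) := fun i => by
      simp only [hlo', hhi']; ring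
    simp only [this, Finset.prod_mul_distrib, Finset.prod_const, Finset.card_univ, Fintype.card_fin]
    rfl
  have hsub : ∀ ε : ℝ, 0 < ε → latBox ε lo' hi' ⊆ latBox ε lo hi := by
    intro ε hε z hz
    rw [mem_latBox hε] at hz ⊢
    intro i
    have h1 := hz i
    have h2 := hlt i
    simp only [hlo', hhi'] at h1
    constructor <;> nlinarith
  -- macroscopic length
  set r := θ * s with hr
  have hrp : 0 < r := by positivity
  set ℓ := r / (2 * (J + 2)) with hℓ
  have hJ2 : (0:ℝ) < J + 2 := by positivity
  have hℓp : 0 < ℓ := by positivity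
  have hℓr : (J + 2) * ℓ = r / 2 := by rw [hℓ]; field_simp
  have hTℓ : 2 * (4 ^ J * T) ≤ ℓ := by
    rw [hℓ, le_div_iff₀ (by positivity)]
    linarith
  -- value-bad sites
  set N : ℝ → Finset (Zd d) := fun ε => (latBox ε lo hi).filter
    (fun z => T < ‖uε ε z - (F (ε • toRd z) + c)‖) with hN
  set S : ℝ → Finset (Zd d) := fun ε => (latBox ε lo hi).filter
    (fun z => z ∈ N ε ∨ ∃ b ∈ E0, z + b ∈ N ε) with hS
  have hNlim : ∀ᶠ ε : ℝ in 𝓝[>] 0, ε ^ d * ((S ε).card : ℝ) ≤ ((E0.card : ℝ) + 1) * (2 / T) *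
      (ε ^ d * ∑ z ∈ latBox ε lo hi, ‖uε ε z - u (ε • toRd z)‖) := by
    filter_upwards [self_mem_nhdsWithin] with ε hε
    have hε' : 0 < ε := hε
    have h1 : ((S ε).card : ℝ) ≤ ((E0.card : ℝ) + 1) * (N ε).card := by
      exact_mod_cast card_bad (N ε) (latBox ε lo hi) E0
    have h2 : ((N ε).card : ℝ) * (T / 2) ≤ ∑ z ∈ latBox ε lo hi, ‖uε ε z - u (ε • toRd z)‖ := by
      rw [← nsmul_eq_mul, ← Finset.sum_const]
      refine (Finset.sum_le_sum (g := fun z => ‖uε ε z - u (ε • toRd z)‖) ?_).trans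
        (Finset.sum_le_sum_of_subset_of_nonneg (Finset.filter_subset _ _)
          fun _ _ _ => norm_nonneg _)
      intro z hz
      rw [Finset.mem_filter] at hz
      have h3 := hu _ ((mem_latBox hε').1 hz.1)
      have h4 : uε ε z - (F (ε • toRd z) + c) = (uε ε z - u (ε • toRd z))
        + (u (ε • toRd z) - (F (ε • toRd z) + c)) := by abel
      have h5 := norm_add_le (uε ε z - u (ε • toRd z)) (u (ε • toRd z) - (F (ε • toRd z) + c))
      rw [← h4] at h5
      linarith [hz.2]
    have h3 : ((N ε).card : ℝ) ≤ (2 / T) * ∑ z ∈ latBox ε lo hi, ‖uε ε z - u (ε • toRd z)‖ := by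
      rw [div_mul_eq_mul_div, le_div_iff₀ hT]; linarith
    calc ε ^ d * ((S ε).card : ℝ) ≤ ε ^ d * (((E0.card : ℝ) + 1) * ((2 / T) *
          ∑ z ∈ latBox ε lo hi, ‖uε ε z - u (ε • toRd z)‖)) := by
          gcongr
          exact h1.trans (by gcongr)
      _ = _ := by ring
  have hSlim : Tendsto (fun ε : ℝ => ε ^ d * ((S ε).card : ℝ)) (𝓝[>] 0) (𝓝 0) := by
    refine tendsto_of_tendsto_of_tendsto_of_le_of_le' tendsto_const_nhds
      (by simpa using hconv.const_mul (((E0.card : ℝ) + 1) * (2 / T))) ?_ hNlim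
    filter_upwards [self_mem_nhdsWithin] with ε hε
    have hε' : 0 < ε := hε
    positivity
  -- small parameter
  set δ₁ := δ / (4 * (J + G + G * J + 1)) with hδ₁
  have hden : 0 < 4 * ((J:ℝ) + G + G * J + 1) := by positivity
  have hδ₁p : 0 < δ₁ := by positivity
  have hδeq : δ₁ * (4 * (J + G + G * J + 1)) = δ := by rw [hδ₁]; field_simp
  have E1 := hBL lo hi hlt δ₁ hδ₁p
  have E2 := (hω.1 lo hi hlt).eventually (gt_mem_nhds (show vol * e < vol * e + δ₁ by linarith))
  have E3 : ∀ᶠ ε : ℝ in 𝓝[>] 0, avg τ (fun ω => 1 + Lam E0 lam ω) ω lo hi ε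
      - avg τ (fun ω => 1 + Lam E0 lam ω) ω lo' hi' ε < (1 - (1 - 2 * θ) ^ d) * vol * e + δ₁ := by
    have := (hω.1 lo hi hlt).sub (hω.1 lo' hi' hlt')
    rw [hvol'] at this
    apply this.eventually (gt_mem_nhds _)
    change vol * e - (1 - 2 * θ) ^ d * vol * e < _
    nlinarith
  have E4 := small_sum H hω lo hi hlt S (fun ε => Finset.filter_subset _ _) hSlim hδ₁p
  have E5 : ∀ᶠ ε : ℝ in 𝓝[>] 0, ε * irange d E0 < ℓ := by
    have : Tendsto (fun ε : ℝ => ε * irange d E0) (𝓝[>] 0) (𝓝 (0 * irange d E0)) :=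
      (tendsto_id.mono_left nhdsWithin_le_nhds).mul_const _
    rw [zero_mul] at this
    exact this.eventually (gt_mem_nhds hℓp)
  filter_upwards [E1, E2, E3, E4, E5, self_mem_nhdsWithin] with ε h1 h2 h3 h4 h5 hε
  have hε' : 0 < ε := hε
  have hεd : 0 < ε ^ d := by positivity
  have g := gluing H ω (sb_bdd ε hε' lo hi) (fun z => ε⁻¹ • uε ε z) F (ε⁻¹ • c) (K := K)
    (T := T / ε) (L := ℓ / ε) J hF (by positivity) (by rw [le_div_iff₀ hε']; linarith)
    (by rw [show 2 * (4 ^ J * (T / ε)) = (2 * (4 ^ J * T)) / ε by ring]; gcongr)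
  rw [lat_sb hε'] at g
  set B := (latBox ε lo hi).filter (badS E0 (sb ε lo hi)
    (fun z => ε⁻¹ • uε ε z - (F (toRd z) + ε⁻¹ • c)) (T / ε) ((J + 2) * (ℓ / ε))) with hB
  have hBsub : B ⊆ (latBox ε lo hi \ latBox ε lo' hi') ∪ S ε := by
    intro z hz
    rw [hB, Finset.mem_filter] at hz
    rw [Finset.mem_union, Finset.mem_sdiff]
    by_cases hz' : z ∈ latBox ε lo' hi'
    · right
      have hin := (mem_latBox hε').1 hz'
      have hval : ∀ w : Zd d, T / ε < ‖ε⁻¹ • uε ε w - (F (toRd w) + ε⁻¹ • c)‖ →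
          T < ‖uε ε w - (F (ε • toRd w) + c)‖ := by
        intro w hw
        have e1 : ε⁻¹ • uε ε w - (F (toRd w) + ε⁻¹ • c)
            = ε⁻¹ • (uε ε w - (F (ε • toRd w) + c)) := by
          rw [smul_sub, smul_add, map_smul, smul_smul, inv_mul_cancel₀ hε'.ne', one_smul]
        rw [e1, norm_smul, norm_inv, Real.norm_eq_abs, abs_of_pos hε', div_eq_inv_mul] at hw
        exact lt_of_mul_lt_mul_left hw (by positivity)
      have hrow : ∀ i, r ≤ θ * (hi i - lo i) := fun i => by
        rw [hr]; gcongr; exact hside i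
      simp only [hS]
      rw [Finset.mem_filter]
      refine ⟨hz.1, ?_⟩
      rcases hz.2 with h | h | ⟨b, hb, h⟩
      · exfalso
        have h6 := infDist_sb H.dpos (r := r) hε' (lo := lo) (hi := hi) (z := z) (fun i => by
          have h7 := hin i
          have h8 := hrow i
          simp only [PiLp.smul_apply, toRd_apply, smul_eq_mul, hlo', hhi'] at h7
          constructor <;> linarith)
        have h7 : (J + 2) * (ℓ / ε) = (r / 2) / ε := by rw [← hℓr]; ring
        rw [h7] at h
        have h8 : (r / 2) / ε < r / ε := by gcongr; linarith
        linarith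
      · left
        simp only [hN]
        exact Finset.mem_filter.2 ⟨hz.1, hval _ h⟩
      · right
        refine ⟨b, hb, ?_⟩
        simp only [hN]
        refine Finset.mem_filter.2 ⟨?_, hval _ h⟩
        rw [mem_latBox hε']
        intro i
        have h7 := hin i
        have h8 := hrow i
        have h9 : |(b i : ℝ)| ≤ irange d E0 := (abs_coord_le (toRd b) i).trans (norm_le_irange hb)
        have h10 : ε * |(b i : ℝ)| ≤ ε * irange d E0 := by gcongr
        have h11 : ℓ ≤ r := by
          rw [hℓ]
          exact div_le_self hrp.le (by linarith [Nat.cast_nonneg (α := ℝ) J])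
        have h12 : ε * (b i : ℝ) ≤ ε * |(b i : ℝ)| := by gcongr; exact le_abs_self _
        have h13 : -(ε * |(b i : ℝ)|) ≤ ε * (b i : ℝ) := by
          rw [← mul_neg]
          exact mul_le_mul_of_nonneg_left (neg_abs_le _) hε'.le
        simp only [PiLp.smul_apply, toRd_apply, smul_eq_mul, hlo', hhi'] at h7
        simp only [PiLp.smul_apply, toRd_apply, smul_eq_mul, Pi.add_apply, Int.cast_add, mul_add]
        constructor <;> linarith
    · exact Or.inl ⟨hz.1, hz'⟩
  have hfn : ∀ z : Zd d, 0 ≤ 1 + Lam E0 lam (τ z ω) := fun z => by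
    have := Lam_nonneg H (τ z ω); positivity
  have hBsum : ∑ z ∈ B, (1 + Lam E0 lam (τ z ω)) ≤
      (∑ z ∈ latBox ε lo hi, (1 + Lam E0 lam (τ z ω))
        - ∑ z ∈ latBox ε lo' hi', (1 + Lam E0 lam (τ z ω)))
      + ∑ z ∈ S ε, (1 + Lam E0 lam (τ z ω)) := by
    have q1 := Finset.sum_le_sum_of_subset_of_nonneg hBsub
      (f := fun z => 1 + Lam E0 lam (τ z ω)) (fun z _ _ => hfn z)
    have q2 := sum_union_le' (latBox ε lo hi \ latBox ε lo' hi') (S ε)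
      (fun z => 1 + Lam E0 lam (τ z ω)) hfn
    have q3 := Finset.sum_sdiff (hsub ε hε') (f := fun z => 1 + Lam E0 lam (τ z ω))
    linarith
  have hBε : ε ^ d * ∑ z ∈ B, (1 + Lam E0 lam (τ z ω))
      ≤ (1 - (1 - 2 * θ) ^ d) * vol * e + 2 * δ₁ := by
    have q := mul_le_mul_of_nonneg_left hBsum hεd.le
    rw [mul_add, mul_sub] at q
    unfold avg at h3
    linarith
  unfold avg at h2
  rw [energyE_eq]
  have g' := mul_le_mul_of_nonneg_left g hεd.le
  have i1 : (J:ℝ) * (vol * W0 P τ E0 V F - δ₁) ≤ J * (ε ^ d * mF τ E0 V ω F (sb ε lo hi)) := by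
    gcongr
  have i2 : G * (ε ^ d * ∑ z ∈ latBox ε lo hi, (1 + Lam E0 lam (τ z ω))) ≤ G * (vol * e + δ₁) := by
    gcongr
  have i3 : G * J * (ε ^ d * ∑ z ∈ B, (1 + Lam E0 lam (τ z ω)))
      ≤ G * J * ((1 - (1 - 2 * θ) ^ d) * vol * e + 2 * δ₁) := by gcongr
  have i4 : 0 ≤ G * J * δ₁ := by positivity
  have i5 : 0 ≤ G * δ₁ := by positivity
  have i6 : 0 ≤ (J:ℝ) * δ₁ := by positivity
  have g'' : J * (ε ^ d * mF τ E0 V ω F (sb ε lo hi))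
      ≤ (J + GC p c₁ K) * (ε ^ d * energy1 τ E0 V ω (fun z => ε⁻¹ • uε ε z) (sb ε lo hi))
        + G * (ε ^ d * ∑ z ∈ latBox ε lo hi, (1 + Lam E0 lam (τ z ω)))
        + G * J * (ε ^ d * ∑ z ∈ B, (1 + Lam E0 lam (τ z ω))) := by
    refine le_trans (le_of_eq ?_) (g'.trans (le_of_eq ?_)) <;> ring
  linarith
end

lemma exists_dense_graph (W : (Rd d →L[ℝ] Rn n) → ℝ) :
    ∃ D : Set (Rd d →L[ℝ] Rn n), D.Countable ∧
      ∀ F0 : Rd d →L[ℝ] Rn n, ∀ r > 0, ∃ F ∈ D, ‖F - F0‖ < r ∧ |W F - W F0| < r := by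
  obtain ⟨S, hS, hd⟩ := TopologicalSpace.exists_countable_dense
    (Set.range fun F : Rd d →L[ℝ] Rn n => (F, W F))
  refine ⟨(fun q => q.1.1) '' S, hS.image _, fun F0 r hr => ?_⟩
  obtain ⟨q, hq, hqS⟩ := hd.exists_dist_lt ⟨(F0, W F0), F0, rfl⟩ hr
  obtain ⟨⟨F, w⟩, F', hF'⟩ := q
  obtain ⟨rfl, rfl⟩ := Prod.mk.inj hF'
  refine ⟨F', ⟨_, hq, rfl⟩, ?_⟩
  rw [Subtype.dist_eq, Prod.dist_eq, max_lt_iff] at hqS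
  constructor
  · rw [← dist_eq_norm, dist_comm]; exact hqS.1
  · rw [← Real.dist_eq, dist_comm]; exact hqS.2

lemma choose_F {W : (Rd d →L[ℝ] Rn n) → ℝ} {D : Set (Rd d →L[ℝ] Rn n)}
    (hD : ∀ F0 : Rd d →L[ℝ] Rn n, ∀ r > 0, ∃ F ∈ D, ‖F - F0‖ < r ∧ |W F - W F0| < r)
    (hW : ∀ K : ℝ, ∃ B : ℝ, ∀ F, ‖F‖ ≤ K → W F ≤ B)
    (F0 : Rd d →L[ℝ] Rn n) {r δ : ℝ} (hr : 0 < r) (hδ : 0 < δ) :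
    ∃ F ∈ D, ‖F - F0‖ < 2 * r ∧ ∀ F', ‖F' - F0‖ < r → W F' ≤ W F + δ := by
  obtain ⟨B, hB⟩ := hW (‖F0‖ + r)
  set A := W '' {F' | ‖F' - F0‖ < r} with hA
  have hne : A.Nonempty := ⟨W F0, F0, by simpa using hr, rfl⟩
  have hbdd : BddAbove A := by
    refine ⟨B, ?_⟩
    rintro _ ⟨F', hF', rfl⟩
    apply hB
    have h1 := norm_add_le F0 (F' - F0)
    rw [add_sub_cancel] at h1
    have h2 : ‖F' - F0‖ < r := hF'
    linarith
  obtain ⟨_, ⟨F1, hF1, rfl⟩, h1⟩ := exists_lt_of_lt_csSup hne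
    (show sSup A - δ / 2 < sSup A by linarith)
  obtain ⟨F, hF, h2, h3⟩ := hD F1 (min r (δ / 2)) (by positivity)
  refine ⟨F, hF, ?_, ?_⟩
  · have h4 := norm_add_le (F - F1) (F1 - F0)
    rw [sub_add_sub_cancel] at h4
    have h5 : ‖F1 - F0‖ < r := hF1
    have h6 := h2.trans_le (min_le_left _ _)
    linarith
  · intro F' hF'
    have h4 := le_csSup hbdd ⟨F', hF', rfl⟩
    have h5 := (abs_lt.1 (h3.trans_le (min_le_right _ _))).1
    linarith

lemma openBox_eq (a b : Fin d → ℝ) :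
    openBox a b = (WithLp.ofLp : Rd d → (Fin d → ℝ)) ⁻¹' (Set.univ.pi fun i => Set.Ioo (a i) (b i)) := by
  ext x; simp [openBox]

lemma closedBox_eq (a b : Fin d → ℝ) :
    closedBox a b = (WithLp.ofLp : Rd d → (Fin d → ℝ)) ⁻¹' (Set.univ.pi fun i => Set.Icc (a i) (b i)) := by
  ext x; simp only [closedBox, Set.mem_setOf_eq, Set.mem_preimage, Set.mem_univ_pi, Set.mem_Icc]

lemma openBox_measurable (a b : Fin d → ℝ) : MeasurableSet (openBox a b) := by
  rw [openBox_eq]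
  exact (PiLp.volume_preserving_ofLp (Fin d)).measurable
    (MeasurableSet.univ_pi fun i => measurableSet_Ioo)

lemma openBox_volume (a b : Fin d → ℝ) :
    volume (openBox a b) = ∏ i, ENNReal.ofReal (b i - a i) := by
  rw [openBox_eq, (PiLp.volume_preserving_ofLp (Fin d)).measure_preimage
    (MeasurableSet.univ_pi fun i => measurableSet_Ioo).nullMeasurableSet, Real.volume_pi_Ioo]

lemma closedBox_compact (a b : Fin d → ℝ) : IsCompact (closedBox a b) := by
  have : closedBox a b = (EuclideanSpace.equiv (Fin d) ℝ).toHomeomorph ⁻¹'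
      (Set.univ.pi fun i => Set.Icc (a i) (b i)) := closedBox_eq a b
  rw [this, Homeomorph.isCompact_preimage]
  exact isCompact_univ_pi fun i => isCompact_Icc

lemma closedBox_subset_closure (a b : Fin d → ℝ) (h : ∀ i, a i < b i) :
    closedBox a b ⊆ closure (openBox a b) := by
  have h1 : openBox a b = (EuclideanSpace.equiv (Fin d) ℝ).toHomeomorph ⁻¹'
      (Set.univ.pi fun i => Set.Ioo (a i) (b i)) := openBox_eq a b
  have h2 : closedBox a b = (EuclideanSpace.equiv (Fin d) ℝ).toHomeomorph ⁻¹'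
      (Set.univ.pi fun i => Set.Icc (a i) (b i)) := closedBox_eq a b
  rw [h1, h2, ← Homeomorph.preimage_closure, closure_pi_set]
  simp only [closure_Ioo (h _).ne]
  exact subset_rfl

lemma closedBox_convex (a b : Fin d → ℝ) : Convex ℝ (closedBox a b) := by
  intro x hx y hy s t hs ht hst i
  exact convex_Icc (a i) (b i) (hx i) (hy i) hs ht hst

lemma openBox_subset_closedBox (a b : Fin d → ℝ) : openBox a b ⊆ closedBox a b :=
  fun _ hx i => ⟨(hx i).1.le, (hx i).2.le⟩

lemma closedBox_dist {a b : Fin d → ℝ} {σ : ℝ} (h : ∀ i, b i - a i ≤ σ) {x y : Rd d}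
    (hx : x ∈ closedBox a b) (hy : y ∈ closedBox a b) (hσ : 0 ≤ σ) : ‖x - y‖ ≤ d * σ := by
  rw [EuclideanSpace.norm_eq]
  apply Real.sqrt_le_iff.2
  refine ⟨by positivity, ?_⟩
  have h1 : ∀ i ∈ Finset.univ, ‖(x - y) i‖ ^ 2 ≤ σ ^ 2 := by
    intro i _
    gcongr
    rw [PiLp.sub_apply, Real.norm_eq_abs, abs_le]
    have h2 := hx i
    have h3 := hy i
    have h4 := h i
    constructor <;> linarith
  refine (Finset.sum_le_sum h1).trans ?_
  rw [Finset.sum_const, Finset.card_univ, Fintype.card_fin, nsmul_eq_mul, mul_pow]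
  gcongr
  rcases Nat.eq_zero_or_pos d with h0 | h0
  · simp [h0]
  · have : (1:ℝ) ≤ d := by exact_mod_cast h0
    nlinarith

/-- lower corner of a subdivision box -/
def slo (a b : Fin d → ℝ) (M : ℕ) (k : Fin d → Fin M) (i : Fin d) : ℝ :=
  a i + (k i : ℕ) * ((b i - a i) / M)

/-- upper corner of a subdivision box -/
def shi (a b : Fin d → ℝ) (M : ℕ) (k : Fin d → Fin M) (i : Fin d) : ℝ :=
  slo a b M k i + (b i - a i) / M

lemma shi_sub (a b : Fin d → ℝ) (M : ℕ) (k : Fin d → Fin M) (i : Fin d) :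
    shi a b M k i - slo a b M k i = (b i - a i) / M := by unfold shi; ring

lemma slo_ge {a b : Fin d → ℝ} (h : ∀ i, a i < b i) {M : ℕ} (k : Fin d → Fin M) (i : Fin d) :
    a i ≤ slo a b M k i := by
  unfold slo
  have : 0 ≤ b i - a i := by linarith [h i]
  have : 0 ≤ ((k i : ℕ) : ℝ) * ((b i - a i) / M) := by positivity
  linarith

lemma shi_le {a b : Fin d → ℝ} (h : ∀ i, a i < b i) {M : ℕ} (hM : 0 < M) (k : Fin d → Fin M)
    (i : Fin d) : shi a b M k i ≤ b i := by
  unfold shi slo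
  have h0 : 0 ≤ b i - a i := by linarith [h i]
  have hM' : (0:ℝ) < M := by exact_mod_cast hM
  have h1 : (((k i : ℕ) : ℝ) + 1) * ((b i - a i) / M) ≤ M * ((b i - a i) / M) := by
    gcongr
    exact_mod_cast (k i).2
  have h2 : M * ((b i - a i) / M) = b i - a i := by field_simp
  linarith

lemma sub_subset {a b : Fin d → ℝ} (h : ∀ i, a i < b i) {M : ℕ} (hM : 0 < M) (k : Fin d → Fin M) :
    openBox (slo a b M k) (shi a b M k) ⊆ openBox a b := fun _ hx i =>
  ⟨(slo_ge h k i).trans_lt (hx i).1, (hx i).2.trans_le (shi_le h hM k i)⟩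

lemma sub_closed_subset {a b : Fin d → ℝ} (h : ∀ i, a i < b i) {M : ℕ} (hM : 0 < M)
    (k : Fin d → Fin M) :
    closedBox (slo a b M k) (shi a b M k) ⊆ closedBox a b := fun _ hx i =>
  ⟨(slo_ge h k i).trans (hx i).1, (hx i).2.trans (shi_le h hM k i)⟩

lemma sub_disj {a b : Fin d → ℝ} (h : ∀ i, a i < b i) {M : ℕ} (hM : 0 < M)
    {k k' : Fin d → Fin M} (hk : k ≠ k') :
    Disjoint (openBox (slo a b M k) (shi a b M k)) (openBox (slo a b M k') (shi a b M k')) := by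
  rw [Set.disjoint_left]
  intro x hx hx'
  apply hk
  funext i
  have hM' : (0:ℝ) < M := by exact_mod_cast hM
  have hs : 0 < (b i - a i) / M := by
    have := h i
    apply div_pos _ hM'
    linarith
  have h1 := hx i
  have h2 := hx' i
  unfold shi slo at h1 h2
  set s := (b i - a i) / M
  have h3 : ((k i : ℕ) : ℝ) < (k' i : ℕ) + 1 := by
    by_contra hc
    push Not at hc
    have := mul_le_mul_of_nonneg_right hc hs.le
    linarith
  have h4 : ((k' i : ℕ) : ℝ) < (k i : ℕ) + 1 := by
    by_contra hc
    push Not at hc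
    have := mul_le_mul_of_nonneg_right hc hs.le
    linarith
  have h5 : (k i : ℕ) < (k' i : ℕ) + 1 := by exact_mod_cast h3
  have h6 : (k' i : ℕ) < (k i : ℕ) + 1 := by exact_mod_cast h4
  apply Fin.ext
  omega

lemma sub_ae {a b : Fin d → ℝ} (h : ∀ i, a i < b i) {M : ℕ} (hM : 0 < M) :
    (⋃ k : Fin d → Fin M, openBox (slo a b M k) (shi a b M k)) =ᵐ[volume] openBox a b := by
  have hM' : (0:ℝ) < M := by exact_mod_cast hM
  apply ae_eq_of_subset_of_measure_ge
  · exact Set.iUnion_subset fun k => sub_subset h hM k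
  · rw [measure_iUnion (fun k k' hk => sub_disj h hM hk) (fun k => openBox_measurable _ _),
      tsum_fintype]
    simp only [openBox_volume, shi_sub, Finset.sum_const, Finset.card_univ, Fintype.card_pi,
      Fintype.card_fin, Finset.prod_const]
    have : ∀ i, ENNReal.ofReal (b i - a i) = (M : ℝ≥0∞) * ENNReal.ofReal ((b i - a i) / M) := by
      intro i
      rw [← ENNReal.ofReal_natCast, ← ENNReal.ofReal_mul hM'.le]
      congr 1
      field_simp
    rw [Finset.prod_congr rfl fun i _ => this i, Finset.prod_mul_distrib, Finset.prod_const,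
      Finset.card_univ, Fintype.card_fin, nsmul_eq_mul]
    push_cast
    exact le_rfl
  · exact (MeasurableSet.iUnion fun k => openBox_measurable _ _).nullMeasurableSet
  · rw [openBox_volume]
    exact (ENNReal.prod_lt_top fun i _ => ENNReal.ofReal_lt_top).ne

lemma openBox_real_volume {a b : Fin d → ℝ} (h : ∀ i, a i < b i) :
    (volume (openBox a b)).toReal = ∏ i, (b i - a i) := by
  rw [openBox_volume, ENNReal.toReal_prod]
  apply Finset.prod_congr rfl
  intro i _
  rw [ENNReal.toReal_ofReal]
  linarith [h i]

lemma integral_sub_le {a b : Fin d → ℝ} (h : ∀ i, a i < b i) {M : ℕ} (hM : 0 < M)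
    {f : Rd d → ℝ} (hf : IntegrableOn f (openBox a b)) (w : (Fin d → Fin M) → ℝ)
    (hw : ∀ k, ∀ x ∈ openBox (slo a b M k) (shi a b M k), f x ≤ w k) :
    ∫ x in openBox a b, f x ≤ ∑ k, (∏ i, (shi a b M k i - slo a b M k i)) * w k := by
  rw [← setIntegral_congr_set (sub_ae h hM), integral_iUnion_fintype
    (fun k => openBox_measurable _ _) (fun k k' hk => sub_disj h hM hk)
    (fun k => hf.mono_set (sub_subset h hM k))]
  apply Finset.sum_le_sum
  intro k _
  have hM' : (0:ℝ) < M := by exact_mod_cast hM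
  have hlt : ∀ i, slo a b M k i < shi a b M k i := by
    intro i
    have h1 := shi_sub a b M k i
    have : 0 < (b i - a i) / M := div_pos (by linarith [h i]) hM'
    linarith
  have hfin : volume (openBox (slo a b M k) (shi a b M k)) ≠ ⊤ := by
    rw [openBox_volume]
    exact (ENNReal.prod_lt_top fun i _ => ENNReal.ofReal_lt_top).ne
  have h1 : ∫ x in openBox (slo a b M k) (shi a b M k), f x
      ≤ ∫ _ in openBox (slo a b M k) (shi a b M k), w k := by
    apply setIntegral_mono_on (hf.mono_set (sub_subset h hM k)) _ (openBox_measurable _ _) (hw k)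
    exact integrableOn_const hfin
  refine h1.trans (le_of_eq ?_)
  rw [setIntegral_const, smul_eq_mul, Measure.real, openBox_real_volume hlt]

section
variable {P : Measure Ω} {τ : Zd d → Ω → Ω} {E0 : Finset (Zd d)} {p c₁ : ℝ}
    {V : Zd d → Ω → Rn n → ℝ} {lam : Zd d → Ω → ℝ}

lemma energyE_nonneg (H : Hyp P τ E0 p c₁ V lam) {ε : ℝ} (hε : 0 < ε) (ω : Ω) (u : Zd d → Rn n)
    (lo hi : Fin d → ℝ) : 0 ≤ energyE τ E0 V ε ω u (openBox lo hi) := by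
  rw [energyE_eq]
  exact mul_nonneg (by positivity) (energy1_nonneg H ω _ (sb_bdd ε hε lo hi))

lemma energyE_sub (H : Hyp P τ E0 p c₁ V lam) {ε : ℝ} (hε : 0 < ε) (ω : Ω) (u : Zd d → Rn n)
    {a b : Fin d → ℝ} (h : ∀ i, a i < b i) {M : ℕ} (hM : 0 < M) :
    ∑ k : Fin d → Fin M, energyE τ E0 V ε ω u (openBox (slo a b M k) (shi a b M k))
      ≤ energyE τ E0 V ε ω u (openBox a b) := by
  simp only [energyE_eq, energy1_eq _ _ _ _ _ (sb_bdd ε hε _ _), lat_sb hε]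
  rw [← Finset.mul_sum]
  gcongr
  rw [← Finset.sum_biUnion]
  · apply Finset.sum_le_sum_of_subset_of_nonneg
    · intro z hz
      rw [Finset.mem_biUnion] at hz
      obtain ⟨k, _, hk⟩ := hz
      rw [mem_latBox hε] at hk ⊢
      exact sub_subset h hM k hk
    · intro z _ _
      exact site_nonneg H _ _ _
  · intro k _ k' _ hk
    rw [Function.onFun, Finset.disjoint_left]
    intro z hz hz'
    rw [mem_latBox hε] at hz hz'
    exact Set.disjoint_left.1 (sub_disj h hM hk) hz hz'

/-- The error bookkeeping. -/
lemma choose_params {I c vol e g G GC0 : ℝ} (hg : c + g = I) (hgp : 0 < g) (hvol : 0 < vol)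
    (hG : 0 ≤ G) (he : 0 ≤ e) (d : ℕ) :
    ∃ δ₀ > 0, ∃ θ > 0, θ < 1 / 2 ∧ ∃ J : ℕ, 0 < J ∧
      (J + GC0) * c < J * (I - δ₀ * vol) - G * (vol * e)
        - G * J * ((1 - (1 - 2 * θ) ^ d) * vol * e) - 1 := by
  have h1 : Tendsto (fun θ : ℝ => G * ((1 - (1 - 2 * θ) ^ d) * vol * e)) (𝓝[>] 0)
      (𝓝 (G * ((1 - (1 - 2 * 0) ^ d) * vol * e))) := by
    apply Tendsto.mono_left _ nhdsWithin_le_nhds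
    apply Continuous.tendsto
    fun_prop
  simp only [mul_zero, sub_zero, one_pow, sub_self, zero_mul] at h1
  obtain ⟨θ, h2, h3, h4⟩ := ((h1.eventually (gt_mem_nhds (by positivity : 0 < g / 4))).and
    ((eventually_mem_nhdsWithin (a := (0:ℝ)) (s := Set.Ioi 0)).and
      (nhdsWithin_le_nhds (gt_mem_nhds (by norm_num : (0:ℝ) < 1 / 2))))).exists
  obtain ⟨J, hJ⟩ := exists_nat_gt (max 0 ((GC0 * c + G * (vol * e) + 1) / (g / 2)))
  have hJ0 : (0:ℝ) < J := (le_max_left _ _).trans_lt hJ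
  have hJ1 : (GC0 * c + G * (vol * e) + 1) / (g / 2) < J := (le_max_right _ _).trans_lt hJ
  rw [div_lt_iff₀ (by positivity)] at hJ1
  refine ⟨g / 4 / vol, by positivity, θ, h3, h4, J, by exact_mod_cast hJ0, ?_⟩
  have h5 : g / 4 / vol * vol = g / 4 := by field_simp
  rw [h5]
  have h6 : (J:ℝ) * (G * ((1 - (1 - 2 * θ) ^ d) * vol * e)) ≤ J * (g / 4) := by gcongr
  nlinarith

set_option maxHeartbeats 1000000 in
lemma main_lower (H : Hyp P τ E0 p c₁ V lam) {ω : Ω} (hω : GoodLam P τ E0 lam ω)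
    {D : Set (Rd d →L[ℝ] Rn n)}
    (hD : ∀ F0 : Rd d →L[ℝ] Rn n, ∀ r > 0, ∃ F ∈ D, ‖F - F0‖ < r ∧
      |W0 P τ E0 V F - W0 P τ E0 V F0| < r)
    (hBL : ∀ F ∈ D, ∀ lo hi : Fin d → ℝ, (∀ i, lo i < hi i) → ∀ δ > 0, ∀ᶠ ε : ℝ in 𝓝[>] 0,
      (∏ i, (hi i - lo i)) * W0 P τ E0 V F - δ ≤ ε ^ d * mF τ E0 V ω F (sb ε lo hi))
    (a b : Fin d → ℝ) (hab : ∀ i, a i < b i) (u : Rd d → Rn n) (U : Set (Rd d)) (hU : IsOpen U)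
    (hAU : closure (openBox a b) ⊆ U) (hu : ContDiffOn ℝ 1 u U) (uε : ℝ → Zd d → Rn n)
    (hconv : Tendsto (fun ε : ℝ => ε ^ d * ∑ z ∈ latBox ε a b, ‖uε ε z - u (ε • toRd z)‖)
      (𝓝[>] 0) (𝓝 0))
    (hInteg : IntegrableOn (fun x => W0 P τ E0 V (fderiv ℝ u x)) (openBox a b))
    (c : ℝ) (hc : c < ∫ x in openBox a b, W0 P τ E0 V (fderiv ℝ u x)) :
    ∀ᶠ ε in 𝓝[>] (0 : ℝ), c < energyE τ E0 V ε ω (uε ε) (openBox a b) := by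
  have := H.prob
  have hCU : closedBox a b ⊆ U := (closedBox_subset_closure a b hab).trans hAU
  have hcont : ContinuousOn (fderiv ℝ u) (closedBox a b) :=
    (hu.continuousOn_fderiv_of_isOpen hU le_rfl).mono hCU
  have hcpt := closedBox_compact a b
  obtain ⟨K0, hK0⟩ := hcpt.exists_bound_of_continuousOn hcont
  have huc := hcpt.uniformContinuousOn_of_continuous hcont
  rw [Metric.uniformContinuousOn_iff] at huc
  have hdiff : ∀ x ∈ closedBox a b, DifferentiableAt ℝ u x := fun x hx =>
    (hu.differentiableOn (by norm_num) x (hCU hx)).differentiableAt (hU.mem_nhds (hCU hx))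
  have hWb : ∀ K : ℝ, ∃ B : ℝ, ∀ F, ‖F‖ ≤ K → W0 P τ E0 V F ≤ B := fun K =>
    ⟨_, fun F hF => W0_le_of_norm H hF⟩
  set I := ∫ x in openBox a b, W0 P τ E0 V (fderiv ℝ u x) with hI
  set vol := ∏ i, (b i - a i) with hvol
  have hvolp : 0 < vol := Finset.prod_pos fun i _ => by linarith [hab i]
  set e := ∫ ω, (1 + Lam E0 lam ω) ∂P with he
  have hep : 0 ≤ e := integral_nonneg fun ω => by
    have := Lam_nonneg H ω
    simp only [Pi.zero_apply]; positivity
  -- side bounds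
  have hne : (Finset.univ : Finset (Fin d)).Nonempty := ⟨⟨0, H.dpos⟩, Finset.mem_univ _⟩
  obtain ⟨i0, _, hi0⟩ := Finset.exists_min_image Finset.univ (fun i => b i - a i) hne
  obtain ⟨i1, _, hi1⟩ := Finset.exists_max_image Finset.univ (fun i => b i - a i) hne
  set sm := b i0 - a i0 with hsm
  set sM := b i1 - a i1 with hsM
  have hsmp : 0 < sm := by linarith [hab i0]
  have hsMp : 0 < sM := by linarith [hab i1]
  set K := max K0 0 + 2 with hK
  have hKp : 0 ≤ K := by positivity
  have hGCn := GC_nonneg (p := p) H.hc hKp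
  set GC0 := GC p c₁ K with hGC0
  set G := GC0 * (E0.card + 1) with hG
  have hGn : 0 ≤ G := by positivity
  obtain ⟨δ₀, hδ₀, θ, hθ, hθ2, J, hJ, hmain⟩ := choose_params (I := I) (c := c) (vol := vol) (e := e)
    (g := I - c) (G := G) (GC0 := GC0) (by ring) (by linarith) hvolp hGn hep d
  have hd1 : (0:ℝ) < d := by exact_mod_cast H.dpos
  -- choose r
  set r := min 1 (θ * sm / (4 * 4 ^ J * (J + 2)) / (6 * d * sM)) with hr
  have hrp : 0 < r := by positivity
  have hr1 : r ≤ 1 := min_le_left _ _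
  have hr2 : 6 * d * sM * r ≤ θ * sm / (4 * 4 ^ J * (J + 2)) := by
    have : r ≤ θ * sm / (4 * 4 ^ J * (J + 2)) / (6 * d * sM) := min_le_right _ _
    rw [le_div_iff₀ (by positivity)] at this
    linarith
  obtain ⟨η, hη, hηu⟩ := huc r hrp
  obtain ⟨M, hMgt⟩ := exists_nat_gt (max 0 (d * sM / η))
  have hMp : (0:ℝ) < M := (le_max_left _ _).trans_lt hMgt
  have hM0 : 0 < M := by exact_mod_cast hMp
  have hMη : d * (sM / M) < η := by
    have := (le_max_right _ _).trans_lt hMgt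
    rw [div_lt_iff₀ hη] at this
    rw [← mul_div_assoc, div_lt_iff₀ hMp]
    linarith
  set lo := slo a b M with hlo
  set hi := shi a b M with hhi
  have hside : ∀ k i, hi k i - lo k i = (b i - a i) / M := fun k i => shi_sub a b M k i
  set xk : (Fin d → Fin M) → Rd d := fun k => WithLp.toLp 2 (lo k) with hxk
  have hxkm : ∀ k, xk k ∈ closedBox (lo k) (hi k) := by
    intro k i
    have h1 := hside k i
    have h2 : 0 < (b i - a i) / M := div_pos (by linarith [hab i]) hMp
    refine ⟨le_rfl, ?_⟩
    change lo k i ≤ hi k i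
    linarith
  have hcs : ∀ k, closedBox (lo k) (hi k) ⊆ closedBox a b := fun k => sub_closed_subset hab hM0 k
  have hdist : ∀ k, ∀ x ∈ closedBox (lo k) (hi k), ‖x - xk k‖ ≤ d * (sM / M) := by
    intro k x hx
    apply closedBox_dist (fun i => ?_) hx (hxkm k) (by positivity)
    rw [hside]
    gcongr
    exact hi1 i (Finset.mem_univ _)
  have hDu : ∀ k, ∀ x ∈ closedBox (lo k) (hi k), ‖fderiv ℝ u x - fderiv ℝ u (xk k)‖ < r := by
    intro k x hx
    rw [← dist_eq_norm]
    apply hηu _ (hcs k hx) _ (hcs k (hxkm k))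
    rw [dist_eq_norm]
    exact (hdist k x hx).trans_lt hMη
  choose F hFD hF2 hFW using fun k => choose_F hD hWb (fderiv ℝ u (xk k)) hrp hδ₀
  have hFK : ∀ k, ‖F k‖ ≤ K := by
    intro k
    have h1 := norm_add_le (fderiv ℝ u (xk k)) (F k - fderiv ℝ u (xk k))
    rw [add_sub_cancel] at h1
    have h2 := hK0 _ (hcs k (hxkm k))
    have h3 := le_max_left K0 0
    have h4 := hF2 k
    linarith
  set T := θ * (sm / M) / (4 * 4 ^ J * (J + 2)) with hT
  have hTp : 0 < T := by positivity
  have hloc : ∀ k, ∀ x ∈ openBox (lo k) (hi k), ‖u x - (F k x + (u (xk k) - F k (xk k)))‖ ≤ T / 2 := by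
    intro k x hx
    have hx' := openBox_subset_closedBox _ _ hx
    have h1 := (closedBox_convex (lo k) (hi k)).norm_image_sub_le_of_norm_fderiv_le' (𝕜 := ℝ)
      (f := u) (φ := F k) (C := 3 * r) (fun y hy => hdiff y (hcs k hy)) (fun y hy => by
        have h2 := norm_sub_le (fderiv ℝ u y - fderiv ℝ u (xk k)) (F k - fderiv ℝ u (xk k))
        rw [sub_sub_sub_cancel_right] at h2
        linarith [hDu k y hy, hF2 k]) (hxkm k) hx'
    have h3 : u x - u (xk k) - F k (x - xk k) = u x - (F k x + (u (xk k) - F k (xk k))) := by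
      rw [map_sub]; abel
    rw [h3] at h1
    refine h1.trans ?_
    have h4 : 3 * r * ‖x - xk k‖ ≤ 3 * r * (d * (sM / M)) := by
      gcongr
      exact hdist k x hx'
    refine h4.trans ?_
    have h5 : 3 * r * (d * (sM / M)) = (6 * d * sM * r) / M / 2 := by ring
    have h6 : T = θ * sm / (4 * 4 ^ J * (J + 2)) / M := by rw [hT]; ring
    rw [h5, h6]
    gcongr
  have hconvk : ∀ k, Tendsto (fun ε : ℝ => ε ^ d * ∑ z ∈ latBox ε (lo k) (hi k),
      ‖uε ε z - u (ε • toRd z)‖) (𝓝[>] 0) (𝓝 0) := by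
    intro k
    refine tendsto_of_tendsto_of_tendsto_of_le_of_le' tendsto_const_nhds hconv ?_ ?_
    · filter_upwards [self_mem_nhdsWithin] with ε hε
      have hε' : 0 < ε := hε
      positivity
    · filter_upwards [self_mem_nhdsWithin] with ε hε
      have hε' : 0 < ε := hε
      gcongr
      intro z hz
      rw [mem_latBox hε'] at hz ⊢
      exact sub_subset hab hM0 k hz
  have hcardp : (0:ℝ) < (Fintype.card (Fin d → Fin M) : ℝ) := by
    rw [Fintype.card_pi]; simp only [Fintype.card_fin, Finset.prod_const]; positivity
  set δ₁ := 1 / (Fintype.card (Fin d → Fin M) : ℝ) with hδ₁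
  have hev := fun k => local_lower H hω (F k) (hFK k) (hBL (F k) (hFD k)) J hθ hθ2
    (by positivity : 0 < sm / M) (lo k) (hi k) (fun i => by
      rw [hside]
      gcongr
      exact hi0 i (Finset.mem_univ _)) hTp (by
        rw [hT]
        apply le_of_eq
        field_simp
        ring) (u (xk k) - F k (xk k)) u (hloc k) uε (hconvk k) (by positivity : 0 < δ₁)
  have hev' := (eventually_all (l := 𝓝[>] (0:ℝ))).2 hev
  filter_upwards [hev', self_mem_nhdsWithin] with ε h1 hε
  have hε' : 0 < ε := hε
  have h2 := Finset.sum_le_sum (s := Finset.univ) fun k _ => h1 k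
  have hvk : ∑ k, ∏ i, (hi k i - lo k i) = vol := by
    simp only [hside, Finset.sum_const, Finset.card_univ, Fintype.card_pi, Fintype.card_fin,
      Finset.prod_const, nsmul_eq_mul]
    rw [Finset.prod_div_distrib, Finset.prod_const, Finset.card_univ, Fintype.card_fin]
    push_cast
    field_simp
    rfl
  have hIle : I ≤ ∑ k, (∏ i, (hi k i - lo k i)) * (W0 P τ E0 V (F k) + δ₀) := by
    apply integral_sub_le hab hM0 hInteg
    intro k x hx
    exact hFW k _ (hDu k x (openBox_subset_closedBox _ _ hx))
  simp only [mul_add, Finset.sum_add_distrib, ← Finset.sum_mul] at hIle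
  rw [hvk] at hIle
  have hsum := energyE_sub H hε' ω (uε ε) hab hM0
  simp only [Finset.sum_sub_distrib, Finset.sum_add_distrib, ← Finset.mul_sum, ← Finset.sum_mul] at h2
  rw [hvk, Finset.sum_const, Finset.card_univ, nsmul_eq_mul] at h2
  have hδ1 : (Fintype.card (Fin d → Fin M) : ℝ) * δ₁ = 1 := by rw [hδ₁]; field_simp
  rw [hδ1] at h2
  have hJr : (0:ℝ) < J := by exact_mod_cast hJ
  have j1 : (J:ℝ) * (I - δ₀ * vol) ≤ J * ∑ k, (∏ i, (hi k i - lo k i)) * W0 P τ E0 V (F k) := by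
    gcongr
    linarith
  have j2 : (J + GC0) * ∑ k, energyE τ E0 V ε ω (uε ε) (openBox (lo k) (hi k))
      ≤ (J + GC0) * energyE τ E0 V ε ω (uε ε) (openBox a b) := by
    gcongr
  have j3 : (J + GC0) * c < (J + GC0) * energyE τ E0 V ε ω (uε ε) (openBox a b) := by
    linarith
  exact lt_of_mul_lt_mul_left j3 (by positivity)
end

/-- Γ-liminf inequality, discrete form of Proposition 3.10, for `C¹` limits.
The conclusion `liminf_ε E_ε ≥ ∫_A W₀(Du)` is phrased in the robust form
"for every `c` below the integral, eventually `E_ε > c`". -/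
theorem gamma_liminf
    {d n : ℕ} (hd : 2 ≤ d) (hn : 1 ≤ n)
    {Ω : Type*} [MeasurableSpace Ω] (P : Measure Ω) [IsProbabilityMeasure P]
    (τ : Zd d → Ω → Ω) (hτ0 : τ 0 = id)
    (hτadd : ∀ x y : Zd d, τ (x + y) = τ x ∘ τ y)
    (hτmp : ∀ z : Zd d, MeasurePreserving (τ z) P P)
    (hτerg : ∀ B : Set Ω, MeasurableSet B → (∀ z : Zd d, τ z ⁻¹' B = B) → P B = 0 ∨ P B = 1)
    (E0 : Finset (Zd d)) (hE00 : (0 : Zd d) ∉ E0) (hE0b : ∀ i : Fin d, stdb i ∈ E0)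
    (p c₁ : ℝ) (hp : 1 < p) (hc₁ : 0 < c₁)
    (V : Zd d → Ω → Rn n → ℝ)
    (hVmeas : ∀ b ∈ E0, Measurable fun q : Ω × Rn n => V b q.1 q.2)
    (hVcont : ∀ b ∈ E0, ∀ ω : Ω, Continuous (V b ω))
    (hVnn : ∀ b ∈ E0, ∀ (ω : Ω) (r : Rn n), 0 ≤ V b ω r)
    (lam : Zd d → Ω → ℝ)
    (hlammeas : ∀ b ∈ E0, Measurable (lam b))
    (hlamnn : ∀ b ∈ E0, ∀ ω : Ω, 0 ≤ lam b ω)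
    (hgrowth : ∀ b ∈ E0, ∀ (ω : Ω) (r : Rn n),
      lam b ω * (‖r‖ ^ p / c₁ - c₁) ≤ V b ω r ∧ V b ω r ≤ c₁ * (1 + lam b ω * (‖r‖ ^ p + 1)))
    (α β : ℝ) (hα : 1 ≤ α) (hβ : 1 / (p - 1) ≤ β)
    (hmomα : ∀ b ∈ E0, ∫⁻ ω, ENNReal.ofReal (lam b ω ^ α) ∂P < ⊤)
    (hmomβ : ∀ i : Fin d, ∫⁻ ω, ENNReal.ofReal (lam (stdb i) ω) ^ (-β) ∂P < ⊤)
    (h2T : (1 < α ∧ 1 / α + 1 / β ≤ p / (d : ℝ)) ∨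
      (n = 1 ∧ ∃ q c₂ : ℝ, 1 < q ∧ q < p ∧ ∃ f : Zd d → Ω → Rn n → ℝ,
        ∀ b ∈ E0, ∀ ω : Ω,
          (∀ r : Rn n, 0 ≤ f b ω r) ∧
          ConvexOn ℝ Set.univ (fun r : Rn n => V b ω r + f b ω r) ∧
          (∀ r : Rn n, f b ω r ≤ c₂ * (1 + lam b ω * (‖r‖ ^ q + 1)))))
    : ∃ Ω₁ : Set Ω, MeasurableSet Ω₁ ∧ P Ω₁ = 1 ∧
      ∀ ω ∈ Ω₁, ∀ a b : Fin d → ℝ, ∀ u : Rd d → Rn n, ∀ U : Set (Rd d),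
        IsOpen U → closure (openBox a b) ⊆ U → ContDiffOn ℝ 1 u U →
        ∀ uε : ℝ → Zd d → Rn n,
          Tendsto (fun ε : ℝ => ε ^ d * ∑' z : Zd d,
              if ε • toRd z ∈ openBox a b then ‖uε ε z - u (ε • toRd z)‖ else 0)
            (𝓝[>] (0 : ℝ)) (𝓝 0) →
          ∀ c : ℝ, c < ∫ x in openBox a b, W0 P τ E0 V (fderiv ℝ u x) →
            ∀ᶠ ε in 𝓝[>] (0 : ℝ), c < energyE τ E0 V ε ω (uε ε) (openBox a b) := by
  have hprobP : IsProbabilityMeasure P := inferInstance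
  have hlint : ∀ b ∈ E0, Integrable (lam b) P := by
    intro b hb
    have hm := hlammeas b hb
    have h1 : Integrable (fun ω => lam b ω ^ α) P := by
      refine ⟨(hm.pow_const α).aestronglyMeasurable, ?_⟩
      rw [hasFiniteIntegral_iff_ofReal
        (Filter.Eventually.of_forall fun ω => Real.rpow_nonneg (hlamnn b hb ω) α)]
      exact hmomα b hb
    refine ((integrable_const (1:ℝ)).add h1).mono' hm.aestronglyMeasurable
      (Filter.Eventually.of_forall fun ω => ?_)
    have h0 := hlamnn b hb ω
    rw [Real.norm_of_nonneg h0, Pi.add_apply]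
    have h2 := Real.rpow_nonneg h0 α
    rcases le_total (lam b ω) 1 with h | h
    · linarith
    · have := Real.rpow_le_rpow_of_exponent_le h hα
      rw [Real.rpow_one] at this
      linarith
  have H : Hyp P τ E0 p c₁ V lam :=
    { prob := hprobP, dpos := by omega, τ0 := hτ0, τadd := hτadd, mp := hτmp, erg := hτerg,
      E00 := hE00, hp := hp, hc := hc₁, Vmeas := hVmeas, Vcont := hVcont, Vnn := hVnn,
      lnn := hlamnn, growth := hgrowth, lmeas := hlammeas, lint := hlint }
  obtain ⟨D, hDc, hD⟩ := exists_dense_graph (W0 P τ E0 V)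
  have hae := (goodLam_ae H).and ((ae_ball_iff hDc).2 fun F _ => box_lower H F)
  obtain ⟨N, hN1, hN2, hN3⟩ := exists_measurable_superset_of_null (ae_iff.1 hae)
  refine ⟨Nᶜ, hN2.compl, (prob_compl_eq_one_iff hN2).2 hN3, ?_⟩
  intro ω hωN a b u U hU hAU hu uε hconv c hc
  have hgood := not_not.1 fun hcon => hωN (hN1 hcon)
  obtain ⟨hω, hBL⟩ := hgood
  have htriv : c < 0 → ∀ᶠ ε in 𝓝[>] (0 : ℝ), c < energyE τ E0 V ε ω (uε ε) (openBox a b) := by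
    intro hc0
    filter_upwards [self_mem_nhdsWithin] with ε hε
    exact hc0.trans_le (energyE_nonneg H hε ω _ a b)
  by_cases hab : ∀ i, a i < b i
  swap
  · apply htriv
    have hemp : openBox a b = ∅ := by
      rw [Set.eq_empty_iff_forall_notMem]
      exact fun x hx => hab fun i => (hx i).1.trans (hx i).2
    rw [hemp] at hc
    simpa using hc
  by_cases hInteg : IntegrableOn (fun x => W0 P τ E0 V (fderiv ℝ u x)) (openBox a b)
  swap
  · apply htriv
    rwa [integral_undef hInteg] at hc
  refine main_lower H hω hD hBL a b hab u U hU hAU hu uε ?_ hInteg c hc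
  refine hconv.congr' ?_
  filter_upwards [self_mem_nhdsWithin] with ε hε
  rw [tsum_eq_sum (s := latBox ε a b)]
  · congr 1
    exact Finset.sum_congr rfl fun z hz => if_pos ((mem_latBox hε).1 hz)
  · intro z hz
    exact if_neg fun h => hz ((mem_latBox hε).2 h)

end StochHom
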